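/- Let (R, m, k) be a Noetherian local ring. Then R is a complete intersection if and only if the residue field k has finite CI-dimension over R. -/

import Mathlib

/-!
Let `k` be the residue field of `R` and `B` the completion of `R`.

If `B = Q ⧸ (s)` with `Q` regular and `s` a regular sequence, then `R → B ← Q` is a quasi-deformation.
As `m_R B = m_B`, the module `B ⊗ k` is the residue field of `Q`. Both it and `B` are quotients of `Q`
by regular sequences, so that their projective dimensions over `Q` are finite (`finite_of_ci`).

For the converse let `R → R' ← Q` be a quasi-deformation with kernel `(s)` such that `R' ⊗ k = Q ⧸ J`
has finite projective dimension over `Q`. The proof isolates a property `G` of a list `x` in a ring: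
the second Koszul homology of `x` is generated by products of classes of degree one. For generators of
the maximal ideal this detects complete intersections.

* Let `x` generate `m_R` and let `y` lift the image of `x` in `R'` to `Q`, so that `J = (s, y)`. The
  Koszul homology of `s ++ y` over `Q` is that of `x` over `R'` (`koszul_regular`), which by flatness is
  free over `R' ⧸ m_R R' = Q ⧸ J` (`Good_flat`).
* This, together with the finite projective dimension of `Q ⧸ J`, forces `G` for `s ++ y`
  (`G_of_good`). After redundant generators are discarded, a nonzero class in `H₁` would split off a
  copy of `Q ⧸ J`, and killing it by a divided power variable produces nonzero classes in arbitrarily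
  high degree (`infinite_pd`). So `H₁ = 0`, the conormal module `J ⧸ J²` is free of rank the number of
  generators, which is then a lower bound for the projective dimension (`conormal_bound`), and by counting
  projective dimensions along the Koszul complex the higher homology vanishes (`HH_subsingleton`). The two
  lower bounds for projective dimension avoid resolutions and `Ext`: they use that a composite of `n`
  connecting maps of short exact sequences, starting at a module of projective dimension less than
  `n`, is zero (`Path.vanish`).
* Property `G` descends from `s ++ y` over `Q` to `x` over `R'` (`G_descend`), from there to `x` over
  `R` (`G_of_flat_local`), and it ascends to `B` (`G_ascend`).
* By Cohen, `B = S ⧸ (a)` with `S` regular local (`exists_regular_surj`) and `a` a minimal system of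
  generators. The Koszul complex of the maximal ideal of `S` is exact, and with `G` over `B` this
  implies that all relations between the `aᵢ` are trivial (`rel_le_trivRel`), so that `a` is a regular
  sequence (`weaklyRegular_of_rel`).
-/

open CategoryTheory IsLocalRing TensorProduct

/-- `M` has projective dimension at most `n`: it admits a projective resolution of
length at most `n`. -/
def HasProjDimLE (Q : Type) [Ring Q] (M : ModuleCat Q) (n : ℕ) : Prop :=
  ∃ P : ProjectiveResolution M, ∀ i : ℕ, n < i → Limits.IsZero (P.complex.X i)

/-- A quasi-deformation `R → R' ← Q` of a local ring `R`: a flat local extension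
`R → R'` together with a surjective local map `Q → R'` whose kernel is generated by a
regular sequence. -/
structure QuasiDeformation (R : Type) [CommRing R] [IsLocalRing R] where
  R' : Type
  Q : Type
  [commRingR' : CommRing R']
  [commRingQ : CommRing Q]
  [isLocalRingR' : IsLocalRing R']
  [isLocalRingQ : IsLocalRing Q]
  f : R →+* R'
  f_local : IsLocalHom f
  f_flat : @Module.Flat R R' _ _ (Module.compHom R' f)
  g : Q →+* R'
  g_local : IsLocalHom g
  g_surj : Function.Surjective g
  ker_regular : ∃ s : List Q, Ideal.span {x | x ∈ s} = RingHom.ker g ∧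
    RingTheory.Sequence.IsRegular Q s

attribute [instance] QuasiDeformation.commRingR' QuasiDeformation.commRingQ
  QuasiDeformation.isLocalRingR' QuasiDeformation.isLocalRingQ

/-- The residue field `k` of `R` has finite CI-dimension: there is a quasi-deformation
`R → R' ← Q` with both `pd_Q (R' ⊗_R k)` and `pd_Q R'` finite (so that
`CI-dim_R k = pd_Q (R' ⊗_R k) - pd_Q R' < ∞`). -/
def ResidueFieldHasFiniteCIDim (R : Type) [CommRing R] [IsLocalRing R] : Prop :=
  ∃ D : QuasiDeformation R, ∃ n m : ℕ,
    (letI : Algebra R D.R' := D.f.toAlgebra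
     letI : Module D.Q (D.R' ⊗[R] ResidueField R) :=
       Module.compHom (D.R' ⊗[R] ResidueField R) D.g
     HasProjDimLE D.Q (ModuleCat.of D.Q (D.R' ⊗[R] ResidueField R)) n) ∧
    (letI : Module D.Q D.R' := Module.compHom D.R' D.g
     HasProjDimLE D.Q (ModuleCat.of D.Q D.R') m)

/-- A Noetherian local ring is regular if its maximal ideal can be generated by
`dim R` elements. -/
def IsRegularLocal (Q : Type) [CommRing Q] [IsLocalRing Q] : Prop :=
  IsNoetherianRing Q ∧
  ∃ (n : ℕ) (f : Fin n → Q),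
    Ideal.span (Set.range f) = maximalIdeal Q ∧ ringKrullDim Q = n

/-- A presentation of the completion `R̂` of `R` as a quotient of a regular local ring
by an ideal generated by a regular sequence. -/
structure CIPresentation (R : Type) [CommRing R] [IsLocalRing R] where
  Q : Type
  [commRingQ : CommRing Q]
  [isLocalRingQ : IsLocalRing Q]
  regular : IsRegularLocal Q
  g : Q →+* AdicCompletion (maximalIdeal R) R
  g_surj : Function.Surjective g
  ker_regular : ∃ s : List Q, Ideal.span {x | x ∈ s} = RingHom.ker g ∧
    RingTheory.Sequence.IsRegular Q s

/-- `R` is a complete intersection: its completion is a quotient of a regular local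
ring by an ideal generated by a regular sequence. -/
def IsCompleteIntersectionLocal (R : Type) [CommRing R] [IsLocalRing R] : Prop :=
  Nonempty (CIPresentation R)

/-! ### The Koszul complex -/

namespace CIDim

/-- The `n`-element subsets of an `r`-element ordered set, which index the basis of the `n`-th
exterior power of `A ^ r`. The constructors `skip` and `take` record whether the first element is
left out or included. -/
inductive Idx : ℕ → ℕ → Type
  | nil (r : ℕ) : Idx r 0
  | skip {r n : ℕ} : Idx r (n + 1) → Idx (r + 1) (n + 1)
  | take {r n : ℕ} : Idx r n → Idx (r + 1) (n + 1)

theorem Idx.isEmpty_of_lt {r n : ℕ} (h : r < n) : IsEmpty (Idx r n) := by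
  constructor
  intro i
  induction i with
  | nil r => omega
  | skip i ih => exact ih (by omega)
  | take i ih => exact ih (by omega)

instance Idx.finite (r n : ℕ) : Finite (Idx r n) := by
  induction r generalizing n with
  | zero =>
    cases n with
    | zero => exact Finite.of_surjective (fun _ : Unit => Idx.nil 0) (fun i => by cases i; exact ⟨(), rfl⟩)
    | succ n => haveI := Idx.isEmpty_of_lt (r := 0) (n := n + 1) (by omega); infer_instance
  | succ r ih =>
    cases n with
    | zero => exact Finite.of_surjective (fun _ : Unit => Idx.nil (r+1)) (fun i => by cases i; exact ⟨(), rfl⟩)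
    | succ n =>
      haveI := ih n
      haveI := ih (n + 1)
      refine Finite.of_surjective (fun s : Idx r (n+1) ⊕ Idx r n => Sum.elim Idx.skip Idx.take s) (fun i => ?_)
      cases i with
      | skip i => exact ⟨Sum.inl i, rfl⟩
      | take i => exact ⟨Sum.inr i, rfl⟩

/-- The Koszul chains of degree `n` on `r` elements with coefficients in `M`. -/
abbrev K (r n : ℕ) (M : Type*) := Idx r n → M

section
variable {A M : Type*} [CommRing A] [AddCommGroup M] [Module A M]

section plain
variable {r n : ℕ}

/-- The component of a chain on the subsets which leave out the first element. -/
def fst : K (r + 1) (n + 1) M →+ K r (n + 1) M where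
  toFun u i := u (.skip i)
  map_zero' := rfl
  map_add' _ _ := rfl

/-- The component of a chain on the subsets which contain the first element. -/
def snd : K (r + 1) (n + 1) M →+ K r n M where
  toFun u i := u (.take i)
  map_zero' := rfl
  map_add' _ _ := rfl

/-- The chain with the given components. -/
def pr (u : K r (n + 1) M) (v : K r n M) : K (r + 1) (n + 1) M
  | .skip i => u i
  | .take i => v i

/-- The chain of degree zero with value `m`. -/
def cst (r : ℕ) (m : M) : K r 0 M := fun _ => m
/-- The value of a chain of degree zero. -/
def val (u : K r 0 M) : M := u (.nil r)

@[simp] theorem fst_pr (u : K r (n + 1) M) (v : K r n M) : fst (pr u v) = u := rfl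
@[simp] theorem snd_pr (u : K r (n + 1) M) (v : K r n M) : snd (pr u v) = v := rfl
@[simp] theorem pr_fst_snd (u : K (r + 1) (n + 1) M) : pr (fst u) (snd u) = u := by
  funext i; cases i <;> rfl
theorem K_ext {u v : K (r + 1) (n + 1) M} (h1 : fst u = fst v) (h2 : snd u = snd v) : u = v := by
  rw [← pr_fst_snd u, ← pr_fst_snd v, h1, h2]
@[simp] theorem fst_smul (a : A) (u : K (r + 1) (n + 1) M) : fst (a • u) = a • fst u := rfl
@[simp] theorem snd_smul (a : A) (u : K (r + 1) (n + 1) M) : snd (a • u) = a • snd u := rfl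
@[simp] theorem val_cst (m : M) : val (cst r m) = m := rfl
@[simp] theorem cst_val (u : K r 0 M) : cst r (val u) = u := by
  funext i; cases i; rfl
theorem K0_ext {u v : K r 0 M} (h : val u = val v) : u = v := by
  rw [← cst_val u, ← cst_val v, h]
@[simp] theorem val_add (u v : K r 0 M) : val (u + v) = val u + val v := rfl
@[simp] theorem val_neg (u : K r 0 M) : val (-u) = - val u := rfl
@[simp] theorem val_sub (u v : K r 0 M) : val (u - v) = val u - val v := rfl
@[simp] theorem val_zero : val (0 : K r 0 M) = 0 := rfl
@[simp] theorem val_smul (a : A) (u : K r 0 M) : val (a • u) = a • val u := rfl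
@[simp] theorem cst_add (u v : M) : cst r (u + v) = cst r u + cst r v := rfl
@[simp] theorem cst_zero : cst r (0 : M) = 0 := rfl
theorem pr_add (u u' : K r (n + 1) M) (v v' : K r n M) :
    pr (u + u') (v + v') = pr u v + pr u' v' := K_ext (by simp) (by simp)
theorem pr_smul (a : A) (u : K r (n + 1) M) (v : K r n M) :
    pr (a • u) (a • v) = a • pr u v := K_ext (by simp) (by simp)
@[simp] theorem pr_zero : pr (0 : K r (n + 1) M) (0 : K r n M) = 0 := K_ext (by simp) (by simp)
end plain

theorem K_eq_zero {r n : ℕ} (h : r < n) (u : K r n M) : u = 0 := by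
  haveI := Idx.isEmpty_of_lt h
  exact Subsingleton.elim _ _

/-- The Koszul differential of the list `y`: the complex of `a :: t` is the cone of multiplication
by `a` on the complex of `t`. It is meaningful only for `y.length = r`; missing entries of `y` are
read as `0`. -/
def d : (r n : ℕ) → List A → (K r (n + 1) M →ₗ[A] K r n M)
  | 0, _, _ => 0
  | r + 1, 0, y =>
    { toFun u := cst _ (val (d r 0 y.tail (fst u)) + y.headD 0 • val (snd u))
      map_add' u v := by apply K0_ext; simp; abel
      map_smul' a u := by
        apply K0_ext
        simp only [map_smul, fst_smul, snd_smul, val_smul, val_cst, smul_add, smul_comm a (y.headD 0), RingHom.id_apply] }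
  | r + 1, n + 1, y =>
    { toFun u := pr (d r (n + 1) y.tail (fst u) + y.headD 0 • snd u) (- d r n y.tail (snd u))
      map_add' u v := by apply K_ext <;> simp <;> abel
      map_smul' a u := by
        apply K_ext <;> simp only [fst_pr, snd_pr, smul_neg, map_smul, fst_smul, snd_smul,  smul_add, smul_comm a (y.headD 0), RingHom.id_apply] }

section dlemmas
variable {r n : ℕ} (a : A) (t : List A)

@[simp] theorem d_nil (y : List A) (u : K 0 (n + 1) M) : d 0 n y u = 0 := by
  cases n <;> rfl
@[simp] theorem val_d_cons (u : K (r + 1) 1 M) :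
    val (d (r + 1) 0 (a :: t) u) = val (d r 0 t (fst u)) + a • val (snd u) := rfl
@[simp] theorem fst_d_cons (u : K (r + 1) (n + 2) M) :
    fst (d (r + 1) (n + 1) (a :: t) u) = d r (n + 1) t (fst u) + a • snd u := rfl
@[simp] theorem snd_d_cons (u : K (r + 1) (n + 2) M) :
    snd (d (r + 1) (n + 1) (a :: t) u) = - d r n t (snd u) := rfl
end dlemmas

theorem d_d (y : List A) {r n : ℕ} (hr : y.length = r) (u : K r (n + 2) M) :
    d r n y (d r (n + 1) y u) = 0 := by
  induction y generalizing r n with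
  | nil => subst hr; simp
  | cons a t ih =>
    obtain _ | r := r
    · simp at hr
    have hr : t.length = r := by simpa using hr
    obtain _ | n := n
    · apply K0_ext; simp [ih hr]
    · apply K_ext <;> simp [ih hr]

/-- The projection of the chains of `a :: t` to those of `t`, which forgets the subsets containing the
first element. It is not a chain map, but it is one modulo `a`. -/
def res : (r n : ℕ) → (K (r + 1) n M →ₗ[A] K r n M)
  | r, 0 => ⟨⟨fun u => cst r (val u), fun _ _ => rfl⟩, fun _ _ => rfl⟩
  | _, _ + 1 => ⟨⟨fun u => fst u, fun _ _ => rfl⟩, fun _ _ => rfl⟩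

/-- Inclusion of the Koszul complex of the tail. -/
def inc : (r n : ℕ) → (K r n M →ₗ[A] K (r + 1) n M)
  | r, 0 => ⟨⟨fun u => cst (r + 1) (val u), fun _ _ => rfl⟩, fun _ _ => rfl⟩
  | _, _ + 1 => ⟨⟨fun u => pr u 0, fun _ _ => by rw [← pr_add, add_zero]⟩,
      fun _ _ => by rw [RingHom.id_apply, ← pr_smul, smul_zero]⟩

/-- `pr` as a linear map. -/
def prL (r n : ℕ) : (K r (n + 1) M × K r n M) →ₗ[A] K (r + 1) (n + 1) M where
  toFun u := pr u.1 u.2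
  map_add' _ _ := pr_add _ _ _ _
  map_smul' _ _ := pr_smul _ _ _

/-- `fst` as a linear map. -/
def fstL (r n : ℕ) : K (r + 1) (n + 1) M →ₗ[A] K r (n + 1) M where
  toFun u := fst u
  map_add' _ _ := rfl
  map_smul' _ _ := rfl

/-- `snd` as a linear map. -/
def sndL (r n : ℕ) : K (r + 1) (n + 1) M →ₗ[A] K r n M where
  toFun u := snd u
  map_add' _ _ := rfl
  map_smul' _ _ := rfl

/-- `cst` as a linear map. -/
def cstL (r : ℕ) : M →ₗ[A] K r 0 M where
  toFun u := cst r u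
  map_add' _ _ := rfl
  map_smul' _ _ := rfl

/-- `val` as a linear map. -/
def valL (r : ℕ) : K r 0 M →ₗ[A] M where
  toFun u := val u
  map_add' _ _ := rfl
  map_smul' _ _ := rfl

@[simp] theorem prL_apply {r n : ℕ} (u : K r (n + 1) M × K r n M) :
    prL (A := A) r n u = pr u.1 u.2 := rfl
@[simp] theorem fstL_apply {r n : ℕ} (u : K (r + 1) (n + 1) M) :
    fstL (A := A) r n u = fst u := rfl
@[simp] theorem sndL_apply {r n : ℕ} (u : K (r + 1) (n + 1) M) :
    sndL (A := A) r n u = snd u := rfl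
@[simp] theorem cstL_apply {r : ℕ} (u : M) : cstL (A := A) r u = cst r u := rfl
@[simp] theorem valL_apply {r : ℕ} (u : K r 0 M) : valL (A := A) r u = val u := rfl
@[simp] theorem val_res {r : ℕ} (u : K (r + 1) 0 M) : val (res (A := A) r 0 u) = val u := rfl
@[simp] theorem res_succ {r n : ℕ} (u : K (r + 1) (n + 1) M) :
  res (A := A) r (n + 1) u = fst u := rfl
@[simp] theorem val_inc {r : ℕ} (u : K r 0 M) : val (inc (A := A) r 0 u) = val u := rfl
@[simp] theorem inc_succ {r n : ℕ} (u : K r (n + 1) M) :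
  inc (A := A) r (n + 1) u = pr u 0 := rfl
theorem inc_bij_zero {r : ℕ} (u : K r 0 M) : inc (A := A) r 0 u = cst _ (val u) := rfl

/-- The homotopy on `K(a :: t)` that acts by `k` on both components, with a sign on the second. -/
def consHtpy {r : ℕ} (k : ∀ n, K r n M →ₗ[A] K r (n + 1) M) :
    ∀ n, K (r + 1) n M →ₗ[A] K (r + 1) (n + 1) M
  | 0 => prL r 0 ∘ₗ LinearMap.prod (k 0 ∘ₗ res r 0) 0
  | n + 1 => prL r (n + 1) ∘ₗ LinearMap.prod (k (n + 1) ∘ₗ fstL r n) (-(k n ∘ₗ sndL r n))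

@[simp] theorem consHtpy_zero {r : ℕ} (k : ∀ n, K r n M →ₗ[A] K r (n + 1) M) (u : K (r + 1) 0 M) :
    consHtpy k 0 u = pr (k 0 (res (A := A) r 0 u)) 0 := rfl
@[simp] theorem consHtpy_succ {r n : ℕ} (k : ∀ n, K r n M →ₗ[A] K r (n + 1) M)
    (u : K (r + 1) (n + 1) M) :
    consHtpy k (n + 1) u = pr (k (n + 1) (fst u)) (-(k n (snd u))) := rfl

/-- Every element of the ideal `(y)` acts null-homotopically on the Koszul complex of `y`. -/
theorem exists_homotopy (M : Type*) [AddCommGroup M] [Module A M] (y : List A) {r : ℕ}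
    (hr : y.length = r) (a : A) (ha : a ∈ Ideal.span {x | x ∈ y}) :
    ∃ h : ∀ n, K r n M →ₗ[A] K r (n + 1) M, (∀ u, d r 0 y (h 0 u) = a • u) ∧
      ∀ n u, d r (n + 1) y (h (n + 1) u) + h n (d r n y u) = a • u := by
  induction ha using Submodule.span_induction with
  | zero => exact ⟨fun n => 0, by simp, by simp⟩
  | add b c _ _ hb hc =>
    obtain ⟨h, h0, h1⟩ := hb
    obtain ⟨k, k0, k1⟩ := hc
    refine ⟨fun n => h n + k n, fun u => by simp [h0, k0, add_smul], fun n u => ?_⟩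
    rw [add_smul, ← h1 n u, ← k1 n u]
    simp only [LinearMap.add_apply, map_add]; abel
  | smul b c _ hc =>
    obtain ⟨k, k0, k1⟩ := hc
    refine ⟨fun n => b • k n, fun u => by simp [k0, mul_smul], fun n u => ?_⟩
    rw [smul_eq_mul, mul_smul, ← k1 n u]
    simp [smul_add]
  | mem b hb =>
    simp only [Set.mem_ofPred_eq] at hb
    induction y generalizing r with
    | nil => simp at hb
    | cons c t ih =>
      obtain _ | r := r
      · simp at hr
      have hr : t.length = r := by simpa using hr
      rcases List.mem_cons.1 hb with rfl | hb
      · refine ⟨fun n => prL r n ∘ₗ LinearMap.prod 0 (res r n), fun u => ?_, fun n u => ?_⟩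
        · apply K0_ext; simp
        · obtain _ | n := n
          · apply K_ext
            · simp
            · apply K0_ext; simp
          · apply K_ext <;> simp
      · obtain ⟨k, k0, k1⟩ := ih hr hb
        refine ⟨consHtpy k, fun u => ?_, fun n u => ?_⟩
        · apply K0_ext; simp [k0]
        · obtain _ | n := n
          · apply K_ext
            · have := k1 0 (fst u)
              have h2 : res (A := A) r 0 (d (r + 1) 0 (c :: t) u) =
                d r 0 t (fst u) + c • snd u := by apply K0_ext; simp
              simp [h2, ← this]; abel
            · simp [k0]
          · apply K_ext
            · simp [← k1]; abel
            · simp [← k1]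

theorem d_inc (a : A) (t : List A) {r n : ℕ} (u : K r (n + 1) M) :
    d (r + 1) n (a :: t) (inc (A := A) r (n + 1) u) = inc (A := A) r n (d r n t u) := by
  cases n with
  | zero => apply K0_ext; simp
  | succ n => apply K_ext <;> simp

/-- If `a ∈ (t)` then `K(t)` is a retract of `K(a :: t)`. -/
theorem exists_retract (M : Type*) [AddCommGroup M] [Module A M] (t : List A) {r : ℕ}
    (hr : t.length = r) (a : A) (ha : a ∈ Ideal.span {x | x ∈ t}) :
    ∃ ρ : ∀ n, K (r + 1) n M →ₗ[A] K r n M, (∀ n u, ρ n (inc (A := A) r n u) = u) ∧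
      ∀ n u, d r n t (ρ (n + 1) u) = ρ n (d (r + 1) n (a :: t) u) := by
  obtain ⟨h, h0, h1⟩ := exists_homotopy M t hr a ha
  refine ⟨fun n => match n with
    | 0 => res r 0
    | n + 1 => fstL r n + h n ∘ₗ sndL r n, fun n u => ?_, fun n u => ?_⟩
  · cases n with
    | zero => apply K0_ext; simp
    | succ n => simp
  · cases n with
    | zero => apply K0_ext; simp [h0]
    | succ n => simp [← h1]; abel

/-- The product of two chains of degree one in the exterior algebra. -/
def wedge : (r : ℕ) → (K r 1 A →ₗ[A] K r 1 A →ₗ[A] K r 2 A)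
  | 0 => 0
  | r + 1 => LinearMap.mk₂ A (fun p q => pr (wedge r (fst p) (fst q))
      (val (snd p) • fst q - val (snd q) • fst p))
      (fun p p' q => by apply K_ext <;> simp [add_smul] ; abel)
      (fun c p q => by apply K_ext <;> simp [mul_smul, smul_sub, smul_comm c])
      (fun p q q' => by apply K_ext <;> simp [add_smul] ; abel)
      (fun c p q => by apply K_ext <;> simp [mul_smul, smul_sub, smul_comm c])

@[simp] theorem fst_wedge {r : ℕ} (p q : K (r + 1) 1 A) :
    fst (wedge (r + 1) p q) = wedge r (fst p) (fst q) := rfl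
@[simp] theorem snd_wedge {r : ℕ} (p q : K (r + 1) 1 A) :
    snd (wedge (r + 1) p q) = val (snd p) • fst q - val (snd q) • fst p := rfl

/-- The Leibniz rule in degree two. -/
theorem d_wedge (y : List A) {r : ℕ} (hr : y.length = r) (p q : K r 1 A) :
    d r 1 y (wedge r p q) = val (d r 0 y p) • q - val (d r 0 y q) • p := by
  induction y generalizing r with
  | nil => subst hr; simp
  | cons a t ih =>
    obtain _ | r := r
    · simp at hr
    have hr : t.length = r := by simpa using hr
    apply K_ext
    · simp [ih hr, smul_sub, add_smul, mul_smul]; abel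
    · apply K0_ext
      simp; ring

theorem wedge_self {r : ℕ} (p : K r 1 A) : wedge r p p = 0 := by
  induction r with
  | zero => rfl
  | succ r ih => apply K_ext <;> simp [ih]

/-- An isomorphism of the Koszul complexes of `y` and `y'` which is compatible with products of chains
of degree one. -/
structure KIso (r : ℕ) (y y' : List A) where
  e : ∀ n, K r n A →ₗ[A] K r n A
  bij : ∀ n, Function.Bijective (e n)
  val_e : ∀ u, val (e 0 u) = val u
  comm : ∀ n u, d r n y' (e (n + 1) u) = e n (d r n y u)
  wedge_e : ∀ p q, wedge r (e 1 p) (e 1 q) = e 2 (wedge r p q)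

/-- The automorphism of the chains that exchanges the first two basis elements of `A ^ (r + 2)`. -/
def swapMap (r : ℕ) : ∀ n, K (r + 2) n A →ₗ[A] K (r + 2) n A
  | 0 => LinearMap.id
  | 1 => prL _ _ ∘ₗ LinearMap.prod (prL _ _ ∘ₗ LinearMap.prod (fstL _ _ ∘ₗ fstL _ _)
      (res _ _ ∘ₗ sndL _ _)) (inc _ _ ∘ₗ sndL _ _ ∘ₗ fstL _ _)
  | n + 2 => prL _ _ ∘ₗ LinearMap.prod (prL _ _ ∘ₗ LinearMap.prod (fstL _ _ ∘ₗ fstL _ _)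
      (fstL _ _ ∘ₗ sndL _ _)) (prL _ _ ∘ₗ LinearMap.prod (sndL _ _ ∘ₗ fstL _ _)
      (-(sndL _ _ ∘ₗ sndL _ _)))

theorem swapMap_invol (r n : ℕ) (u : K (r + 2) n A) : swapMap r n (swapMap r n u) = u := by
  match n, u with
  | 0, u => rfl
  | 1, u =>
    apply K_ext
    · apply K_ext
      · simp [swapMap]
      · apply K0_ext; simp [swapMap]
    · apply K0_ext; simp [swapMap]
  | n + 2, u =>
    apply K_ext <;> apply K_ext <;> simp [swapMap]

/-- Permuting the entries of a list gives an isomorphic Koszul complex. -/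
theorem exists_KIso {y y' : List A} (h : y.Perm y') {r : ℕ} (hr : y.length = r) :
    Nonempty (KIso r y y') := by
  induction h generalizing r with
  | nil => exact ⟨⟨fun n => LinearMap.id, fun n => Function.bijective_id, by simp, by simp, by simp⟩⟩
  | cons a h ih =>
    obtain _ | r := r
    · simp at hr
    obtain ⟨i⟩ := ih (r := r) (by simpa using hr)
    have hb : ∀ n, Function.Bijective
        (prL (A := A) r n ∘ₗ LinearMap.prod (i.e (n + 1) ∘ₗ fstL r n) (i.e n ∘ₗ sndL r n)) := by
      intro n
      constructor
      · intro u v h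
        apply K_ext
        · exact (i.bij _).1 (congrArg fst h)
        · exact (i.bij _).1 (congrArg snd h)
      · intro u
        obtain ⟨p, hp⟩ := (i.bij _).2 (fst u)
        obtain ⟨q, hq⟩ := (i.bij _).2 (snd u)
        exact ⟨pr p q, by apply K_ext <;> simp [hp, hq]⟩
    refine ⟨⟨fun n => match n with
      | 0 => LinearMap.id
      | n + 1 => prL _ _ ∘ₗ LinearMap.prod (i.e (n + 1) ∘ₗ fstL r n) (i.e n ∘ₗ sndL r n), fun n => ?_,
        by simp, fun n u => ?_, fun p q => ?_⟩⟩
    · cases n with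
      | zero => exact Function.bijective_id
      | succ n => exact hb n
    · cases n with
      | zero => apply K0_ext; simp [i.comm, i.val_e]
      | succ n => apply K_ext <;> simp [i.comm]
    · apply K_ext <;> simp [i.wedge_e, i.val_e]
  | swap a b t =>
    obtain _ | _ | r := r
    · simp at hr
    · simp at hr
    refine ⟨⟨swapMap r, fun n => Function.Involutive.bijective (swapMap_invol r n),
      fun u => rfl, fun n u => ?_, fun p q => ?_⟩⟩
    · match n, u with
      | 0, u => apply K0_ext; simp [swapMap]; ring
      | 1, u =>
        apply K_ext
        · apply K_ext
          · simp [swapMap]; abel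
          · apply K0_ext; simp [swapMap]; ring
        · apply K0_ext; simp [swapMap]; ring
      | n + 2, u =>
        apply K_ext <;> apply K_ext <;> simp [swapMap] <;> abel
    · apply K_ext
      · apply K_ext
        · simp [swapMap]
        · simp [swapMap]
      · apply K_ext
        · simp [swapMap]
        · apply K0_ext; simp [swapMap]; ring
  | trans h1 h2 ih1 ih2 =>
    obtain ⟨i⟩ := ih1 hr
    obtain ⟨j⟩ := ih2 (h1.length_eq ▸ hr)
    exact ⟨⟨fun n => j.e n ∘ₗ i.e n, fun n => (j.bij n).comp (i.bij n), by simp [i.val_e, j.val_e],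
      by simp [i.comm, j.comm], by simp [i.wedge_e, j.wedge_e]⟩⟩

end
end CIDim

/-! ### Cycles generated by products of one-cycles -/

namespace CIDim
variable {A : Type*} [CommRing A]

/-- The submodule of the chains of degree two spanned by the products of cycles of degree one. -/
def cycleProducts (r : ℕ) (y : List A) : Submodule A (K r 2 A) :=
  Submodule.span A {w | ∃ p q, d r 0 y p = 0 ∧ d r 0 y q = 0 ∧ w = wedge r p q}

/-- Property `G`: every Koszul cycle of degree two is a boundary plus a combination of products of
cycles of degree one, i.e. the second Koszul homology is generated by products of classes of degree
one. -/
def G (r : ℕ) (y : List A) : Prop :=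
  ∀ z : K r 2 A, d r 1 y z = 0 → z ∈ cycleProducts r y ⊔ LinearMap.range (d (M := A) r 2 y)

theorem G_of_KIso {r : ℕ} {y y' : List A} (i : KIso r y y') (h : G r y) : G r y' := by
  intro z hz
  obtain ⟨u, rfl⟩ := (i.bij 2).2 z
  rw [i.comm] at hz
  have hu : d r 1 y u = 0 := (i.bij 1).1 (by rw [hz, map_zero])
  have h1 := Submodule.mem_map_of_mem (f := i.e 2) (h u hu)
  rw [Submodule.map_sup] at h1
  refine SetLike.le_def.1 (sup_le_sup ?_ ?_) h1
  · rw [cycleProducts, Submodule.map_span, Submodule.span_le]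
    rintro _ ⟨_, ⟨p, q, hp, hq, rfl⟩, rfl⟩
    refine Submodule.subset_span ⟨i.e 1 p, i.e 1 q, ?_, ?_, (i.wedge_e p q).symm⟩
    · rw [i.comm, hp, map_zero]
    · rw [i.comm, hq, map_zero]
  · rintro _ ⟨_, ⟨w, rfl⟩, rfl⟩
    exact ⟨i.e 3 w, i.comm 2 w⟩

theorem G_perm {r : ℕ} {y y' : List A} (hr : y.length = r) (hp : y.Perm y') (h : G r y) :
    G r y' := by
  obtain ⟨i⟩ := exists_KIso hp hr
  exact G_of_KIso i h

theorem exists_one_form {y : List A} {r : ℕ} (hr : y.length = r) {a : A}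
    (ha : a ∈ Ideal.span {x | x ∈ y}) : ∃ ζ : K r 1 A, val (d r 0 y ζ) = a := by
  obtain ⟨h, h0, -⟩ := exists_homotopy A y hr a ha
  exact ⟨h 0 (cst r 1), by rw [h0]; simp⟩

/-- Adjoining a redundant element `a ∈ (t)` preserves `G`: if `ζ` has boundary `a`, then `e_a - ζ` is
a cycle, and subtracting its product with the cycle `snd z` moves a cycle `z` of degree two into the
complex of `t`. -/
theorem G_cons {t : List A} {r : ℕ} (hr : t.length = r) {a : A}
    (ha : a ∈ Ideal.span {x | x ∈ t}) (h : G r t) : G (r + 1) (a :: t) := by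
  obtain ⟨ζ, hζ⟩ := exists_one_form hr ha
  intro z hz
  have h1 : d r 1 t (fst z) + a • snd z = 0 := by rw [← fst_d_cons, hz]; rfl
  have h2 : d r 0 t (snd z) = 0 := by rw [← neg_eq_zero, ← snd_d_cons a t, hz]; rfl
  have hp : d (r + 1) 0 (a :: t) (pr (-ζ) (cst r 1)) = 0 := by apply K0_ext; simp [hζ]
  have hq : d (r + 1) 0 (a :: t) (pr (snd z) 0) = 0 := by apply K0_ext; simp [h2]
  have hu : d r 1 t (fst z + wedge r ζ (snd z)) = 0 := by
    rw [map_add, d_wedge t hr, h2, hζ, ← h1]; simp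
  have hz' : z = wedge (r + 1) (pr (-ζ) (cst r 1)) (pr (snd z) 0) +
      inc (A := A) r 2 (fst z + wedge r ζ (snd z)) := by
    apply K_ext <;> simp
  rw [hz']
  refine add_mem (Submodule.mem_sup_left (Submodule.subset_span ⟨_, _, hp, hq, rfl⟩)) ?_
  have h3 := Submodule.mem_map_of_mem (f := inc (A := A) r 2) (h _ hu)
  rw [Submodule.map_sup] at h3
  refine SetLike.le_def.1 (sup_le_sup ?_ ?_) h3
  · rw [cycleProducts, Submodule.map_span, Submodule.span_le]
    rintro _ ⟨_, ⟨p, q, hp, hq, rfl⟩, rfl⟩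
    refine Submodule.subset_span ⟨inc (A := A) r 1 p, inc (A := A) r 1 q, ?_, ?_, ?_⟩
    · rw [d_inc, hp, map_zero]
    · rw [d_inc, hq, map_zero]
    · apply K_ext <;> simp
  · rintro _ ⟨_, ⟨w, rfl⟩, rfl⟩
    exact ⟨inc (A := A) r 3 w, d_inc a t w⟩

variable (M : Type*) [AddCommGroup M] [Module A M]

/-- The homology of the Koszul complex in degree `n + 1`. -/
abbrev HH (r n : ℕ) (y : List A) : Type _ :=
  LinearMap.ker (d (M := M) r n y) ⧸
    (LinearMap.range (d (M := M) r (n + 1) y)).submoduleOf (LinearMap.ker (d (M := M) r n y))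

/-- The Koszul differential on a `B`-module only depends on the images of the entries in `B`. -/
theorem d_map {B : Type*} [CommRing B] [Algebra A B] [Module B M] [IsScalarTower A B M]
    (y : List A) (r n : ℕ) (u : K r (n + 1) M) :
    d r n (y.map (algebraMap A B)) u = d r n y u := by
  induction y generalizing r n with
  | nil =>
    have : ∀ r n (u : K r (n + 1) M), d r n ([] : List B) u = d r n ([] : List A) u := by
      intro r
      induction r with
      | zero => simp
      | succ r ih =>
        intro n u
        cases n with
        | zero => exact congrArg (cst _) (by simp [ih])
        | succ n => exact congrArg₂ pr (by simp [ih]) (by simp [ih])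
    exact this r n u
  | cons a t ih =>
    cases r with
    | zero => simp
    | succ r =>
      cases n with
      | zero => apply K0_ext; simp [ih]
      | succ n => apply K_ext <;> simp [ih]

/-- The Koszul differential is natural in the coefficient module. -/
theorem d_comp {M' : Type*} [AddCommGroup M'] [Module A M'] (f : M →ₗ[A] M')
    (y : List A) (r n : ℕ) (hr : y.length = r) (u : K r (n + 1) M) :
    d r n y (f ∘ u) = f ∘ d r n y u := by
  induction y generalizing r n with
  | nil => subst hr; funext i; simp
  | cons a t ih =>
    obtain _ | r := r
    · simp at hr
    have hr : t.length = r := by simpa using hr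
    have h1 : ∀ n (u : K (r + 1) (n + 1) M), fst (f ∘ u) = f ∘ fst u := fun _ _ => rfl
    have h2 : ∀ n (u : K (r + 1) (n + 1) M), snd (f ∘ u) = f ∘ snd u := fun _ _ => rfl
    have h3 : ∀ r (u : K r 0 M), val (f ∘ u) = f (val u) := fun _ _ => rfl
    cases n with
    | zero => apply K0_ext; simp only [h1, h2, h3, val_d_cons, ih _ _ hr, map_add, map_smul]
    | succ n =>
      apply K_ext
      · funext i; simp [h1, h2, h3, ih _ _ hr]
      · funext i; simp [h1, h2, h3, ih _ _ hr]
end CIDim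

/-! ### Koszul homology modulo a regular sequence -/

namespace CIDim
open Pointwise
variable {A : Type*} [CommRing A]

section
variable {M : Type*} [AddCommGroup M] [Module A M]

/-- The projection of chains that forgets the subsets meeting the first `k` elements. -/
def resI (r n : ℕ) : (k : ℕ) → (K (r + k) n M →ₗ[A] K r n M)
  | 0 => LinearMap.id
  | k + 1 => resI r n k ∘ₗ res (r + k) n

theorem d_res (a : A) (t : List A) {r n : ℕ} (u : K (r + 1) (n + 1) M) :
    ∃ w : K r n M, d r n t (res (A := A) r (n + 1) u) + a • w =
      res (A := A) r n (d (r + 1) n (a :: t) u) := by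
  cases n with
  | zero => exact ⟨snd u, by apply K0_ext; simp⟩
  | succ n => exact ⟨snd u, by simp⟩

theorem resI_comp {M' : Type*} [AddCommGroup M'] [Module A M'] (f : M →ₗ[A] M') (r n k : ℕ)
    (z : K (r + k) n M) : f ∘ (resI (A := A) r n k z) = resI (A := A) r n k (f ∘ z : K (r + k) n M') := by
  induction k with
  | zero => rfl
  | succ k ih =>
    have : (res (A := A) (r + k) n) (f ∘ z : K (r + k + 1) n M') =
        f ∘ (res (A := A) (r + k) n z) := by
      cases n with
      | zero => rfl
      | succ n => rfl
    simp only [resI, LinearMap.comp_apply]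
    rw [ih]
    exact congrArg _ this.symm
end

section step
variable {M M₁ : Type*} [AddCommGroup M] [Module A M] [AddCommGroup M₁] [Module A M₁]
  (q : M →ₗ[A] M₁) (hq : Function.Surjective q) {a : A} (ha : IsSMulRegular M a)
  (hk : ∀ m, q m = 0 ↔ ∃ m', a • m' = m) {t : List A} {r : ℕ} (hr : t.length = r)

include hk in
theorem exists_smul_of_comp_eq_zero {n : ℕ} (u : K r n M) (h : q ∘ u = 0) :
    ∃ v : K r n M, a • v = u := by
  choose v hv using fun i => (hk (u i)).1 (congrFun h i)
  exact ⟨v, funext hv⟩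

include hq in
theorem exists_comp_eq {r n : ℕ} (u : K r n M₁) : ∃ v : K r n M, q ∘ v = u := by
  choose v hv using fun i => hq (u i)
  exact ⟨v, funext hv⟩

include ha in
theorem smul_cancel {r n : ℕ} {u : K r n M} (h : a • u = 0) : u = 0 := by
  funext i
  exact ha (by simpa using congrFun h i)

include hk in
theorem comp_smul_eq_zero {r n : ℕ} (w : K r n M) : q ∘ (a • w) = 0 := by
  funext i
  exact (hk _).2 ⟨w i, rfl⟩

include hr hk in
theorem step_comm {n : ℕ} (z : K (r + 1) (n + 1) M) :
    d r n t (q ∘ res (A := A) r (n + 1) z : K r (n + 1) M₁) =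
      q ∘ res (A := A) r n (d (r + 1) n (a :: t) z) := by
  obtain ⟨w, hw⟩ := d_res a t z
  rw [← hw, d_comp _ q t r n hr]
  have h2 := comp_smul_eq_zero q hk w
  funext i
  have := congrFun h2 i
  simp at this ⊢
  exact this

include hq ha hk hr in
/-- A cycle over `M ⧸ a M` lifts to a cycle of the Koszul complex of `a :: t` over `M`. -/
theorem step_lift {n : ℕ} (z : K r (n + 1) M₁) (hz : d r n t z = 0) :
    ∃ u : K (r + 1) (n + 1) M, d (r + 1) n (a :: t) u = 0 ∧ q ∘ res (A := A) r (n + 1) u = z := by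
  obtain ⟨u, rfl⟩ := exists_comp_eq q hq z
  rw [d_comp _ q t r n hr] at hz
  obtain ⟨v, hv⟩ := exists_smul_of_comp_eq_zero q hk _ hz
  refine ⟨pr u (-v), ?_, rfl⟩
  cases n with
  | zero => apply K0_ext; simp [← hv]
  | succ n =>
    apply K_ext
    · simp [← hv]
    · have : a • d r n t v = 0 := by rw [← map_smul, hv, d_d t hr]
      simp [smul_cancel ha this]

include hq ha hk hr in
/-- A cycle over `M` whose image over `M ⧸ a M` is a boundary is a boundary. -/
theorem step_bdry {n : ℕ} (z : K (r + 1) (n + 1) M) (hz : d (r + 1) n (a :: t) z = 0)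
    (w : K r (n + 2) M₁) (hw : d r (n + 1) t w = q ∘ res (A := A) r (n + 1) z) :
    ∃ w, d (r + 1) (n + 1) (a :: t) w = z := by
  obtain ⟨w, rfl⟩ := exists_comp_eq q hq w
  rw [d_comp _ q t r _ hr] at hw
  have h1 : q ∘ (fst z - d r (n + 1) t w) = 0 := by
    funext i
    have := congrFun hw i
    simp at this ⊢
    rw [this, sub_self]
  obtain ⟨s, hs⟩ := exists_smul_of_comp_eq_zero q hk _ h1
  have h2 : fst z = d r (n + 1) t w + a • s := by rw [hs]; abel
  have h3 : d r n t (fst z) + a • snd z = 0 := by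
    cases n with
    | zero => apply K0_ext; have := congrArg val hz; simpa using this
    | succ n => exact congrArg fst hz
  have h4 : a • (d r n t s + snd z) = 0 := by
    rw [h2, map_add, d_d t hr, map_smul] at h3
    rw [smul_add, ← h3]; simp
  have h5 := smul_cancel ha h4
  refine ⟨pr w s, ?_⟩
  apply K_ext
  · simp [h2]
  · simp [neg_eq_iff_add_eq_zero, h5]
end step

/-- Killing a regular sequence does not change Koszul homology: reduction modulo `s` of the components
outside `s` is a chain map from the complex of `s ++ x` over `M` to the complex of `x` over
`M ⧸ s M`, along which cycles lift and boundaries are detected. -/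
theorem koszul_regular (s : List A) : ∀ {M M' : Type u} [AddCommGroup M] [Module A M]
    [AddCommGroup M'] [Module A M'] (q : M →ₗ[A] M') (hq : Function.Surjective q)
    (hs : RingTheory.Sequence.IsWeaklyRegular M s)
    (hk : LinearMap.ker q = Ideal.ofList s • (⊤ : Submodule A M)) {x : List A} {r : ℕ}
    (hr : x.length = r),
    (∀ n (z : K r (n + 1) M'), d r n x z = 0 → ∃ u : K (r + s.length) (n + 1) M,
      d (r + s.length) n (s ++ x) u = 0 ∧ q ∘ resI (A := A) r (n + 1) s.length u = z) ∧
    (∀ n (z : K (r + s.length) (n + 1) M),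
      d r n x (q ∘ resI (A := A) r (n + 1) s.length z : K r (n + 1) M') =
       q ∘ resI (A := A) r n s.length (d (r + s.length) n (s ++ x) z)) ∧
    (∀ n (z : K (r + s.length) (n + 1) M), d (r + s.length) n (s ++ x) z = 0 →
      (∃ w : K r (n + 2) M', d r (n + 1) x w = q ∘ resI (A := A) r (n + 1) s.length z) →
      ∃ w, d (r + s.length) (n + 1) (s ++ x) w = z) := by
  induction s with
  | nil =>
    intro M M' _ _ _ _ q hq hs hk x r hr
    have hinj : Function.Injective q := by
      rw [← LinearMap.ker_eq_bot, hk]; simp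
    have hc : ∀ {n} {u v : K r n M}, q ∘ u = q ∘ v → u = v := fun h =>
      funext fun i => hinj (congrFun h i)
    refine ⟨fun n z hz => ?_, fun n z => d_comp _ q x r n hr z, fun n z hz => ?_⟩
    · obtain ⟨u, rfl⟩ := exists_comp_eq q hq z
      rw [d_comp _ q x r n hr] at hz
      refine ⟨u, hc (hz.trans ?_), rfl⟩
      funext i; simp
    · rintro ⟨w, hw⟩
      obtain ⟨u, rfl⟩ := exists_comp_eq q hq w
      rw [d_comp _ q x r _ hr] at hw
      exact ⟨u, hc hw⟩
  | cons a s ih =>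
    intro M M' _ _ _ _ q hq hs hk x r hr
    rw [RingTheory.Sequence.isWeaklyRegular_cons_iff] at hs
    obtain ⟨ha, hs⟩ := hs
    rw [Ideal.ofList_cons_smul] at hk
    have hle : a • (⊤ : Submodule A M) ≤ LinearMap.ker q := hk ▸ le_sup_left
    let q' : QuotSMulTop a M →ₗ[A] M' := Submodule.liftQ _ q hle
    have hq' : Function.Surjective q' := fun m => by
      obtain ⟨m, rfl⟩ := hq m
      exact ⟨Submodule.Quotient.mk m, rfl⟩
    have hk' : LinearMap.ker q' = Ideal.ofList s • ⊤ := by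
      rw [Submodule.ker_liftQ, hk, Submodule.map_sup, Submodule.map_smul'', Submodule.map_top,
        Submodule.range_mkQ, Submodule.mkQ_map_self, bot_sup_eq]
    obtain ⟨i1, i2, i3⟩ := ih q' hq' hs hk' hr
    let p : M →ₗ[A] QuotSMulTop a M := Submodule.mkQ _
    have hp : Function.Surjective p := Submodule.mkQ_surjective _
    have hpk : ∀ m, p m = 0 ↔ ∃ m', a • m' = m := by
      intro m
      simp only [p, Submodule.mkQ_apply, Submodule.Quotient.mk_eq_zero]
      rw [Submodule.mem_smul_pointwise_iff_exists]
      simp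
    have hr' : (s ++ x).length = r + s.length := by simp [hr, add_comm]
    have key : ∀ {n} (u : K (r + s.length + 1) n M), q ∘ resI (A := A) r n (s.length + 1) u =
        q' ∘ resI (A := A) r n s.length (p ∘ res (A := A) (r + s.length) n u : K (r + s.length) n (QuotSMulTop a M)) := by
      intro n u
      rw [← resI_comp]
      rfl
    refine ⟨fun n z hz => ?_, fun n z => ?_, fun n z hz => ?_⟩
    · obtain ⟨u, hu, rfl⟩ := i1 n z hz
      obtain ⟨v, hv, rfl⟩ := step_lift p hp ha hpk hr' u hu
      exact ⟨v, hv, key v⟩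
    · refine (congrArg _ (key z)).trans ((i2 _ _).trans ?_)
      rw [step_comm p hpk hr']
      exact (key _).symm
    · rintro ⟨w, hw⟩
      obtain ⟨v, hv⟩ := i3 n (p ∘ res (A := A) (r + s.length) (n + 1) z) (by
        rw [step_comm p hpk hr']
        refine (congrArg (fun t => p ∘ res (A := A) (r + s.length) n t) hz).trans ?_
        funext i; simp) ⟨w, hw.trans (key z)⟩
      exact step_bdry p hp ha hpk hr' z hz v hv
end CIDim

/-! ### Descent of property `G` along a quotient by a regular sequence -/

namespace CIDim

section
variable {A B : Type*} [CommRing A] [CommRing B] [Algebra A B]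

theorem wedge_algebraMap (r : ℕ) (p q : K r 1 A) :
    (algebraMap A B ∘ wedge r p q : K r 2 B) = wedge r (algebraMap A B ∘ p) (algebraMap A B ∘ q) := by
  induction r with
  | zero =>
    haveI := Idx.isEmpty_of_lt (r := 0) (n := 2) (by omega)
    exact Subsingleton.elim _ _
  | succ r ih =>
    apply K_ext
    · exact ih _ _
    · funext i
      simp [snd, fst, val, wedge, pr, Algebra.smul_def]

theorem wedge_res (r : ℕ) (p q : K (r + 1) 1 A) :
    res (A := A) r 2 (wedge (r + 1) p q) = wedge r (res (A := A) r 1 p) (res (A := A) r 1 q) := rfl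

theorem wedge_resI (r k : ℕ) (p q : K (r + k) 1 A) :
    resI (A := A) r 2 k (wedge (r + k) p q) =
      wedge r (resI (A := A) r 1 k p) (resI (A := A) r 1 k q) := by
  induction k with
  | zero => rfl
  | succ k ih =>
    simp only [resI, LinearMap.comp_apply]
    rw [← ih]; rfl
end

section
universe u
variable {Q R' : Type u} [CommRing Q] [CommRing R'] [Algebra Q R']
  (hg : Function.Surjective (algebraMap Q R')) {s x : List Q}
  (hs : RingTheory.Sequence.IsWeaklyRegular Q s)
  (hk : RingHom.ker (algebraMap Q R') = Ideal.ofList s) {r : ℕ} (hr : x.length = r)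

include hk in
theorem ker_linearMap : LinearMap.ker (Algebra.linearMap Q R') =
    Ideal.ofList s • (⊤ : Submodule Q Q) := by
  rw [smul_eq_mul, Ideal.mul_top, ← hk]; rfl

include hg hs hk hr in
/-- If `R' = Q ⧸ (s)` with `s` regular, then `G` for `s ++ x` over `Q` implies `G` for `x` over
`R'`. -/
theorem G_descend (h : G (r + s.length) (s ++ x)) : G r (x.map (algebraMap Q R')) := by
  intro z hz
  obtain ⟨h1, h2, h3⟩ := koszul_regular s (Algebra.linearMap Q R') hg hs (ker_linearMap hk) hr
  rw [d_map] at hz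
  obtain ⟨u, hu, rfl⟩ := h1 1 z hz
  have key := h u hu
  rw [Submodule.mem_sup] at key
  obtain ⟨a, ha, b, ⟨w, rfl⟩, rfl⟩ := key
  have hadd : ∀ {n : ℕ} (u v : K (r + s.length) n Q),
    (Algebra.linearMap Q R' ∘ resI (A := Q) r n s.length (u + v) : K r n R') =
    (Algebra.linearMap Q R' ∘ resI (A := Q) r n s.length u) +
    (Algebra.linearMap Q R' ∘ resI (A := Q) r n s.length v) := by
      intro n u v; funext i; simp
  rw [hadd]
  refine add_mem (Submodule.mem_sup_left ?_) (Submodule.mem_sup_right ?_)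
  · let φ : K (r + s.length) 2 Q →ₗ[Q] K r 2 R' :=
      LinearMap.compLeft (Algebra.linearMap Q R') _ ∘ₗ resI (A := Q) r 2 s.length
    have hle : cycleProducts (r + s.length) (s ++ x) ≤
        ((cycleProducts r (x.map (algebraMap Q R'))).restrictScalars Q).comap φ := by
      rw [cycleProducts, Submodule.span_le]
      rintro _ ⟨p, q, hp, hq, rfl⟩
      refine Submodule.subset_span ⟨Algebra.linearMap Q R' ∘ resI (A := Q) r 1 s.length p,
        Algebra.linearMap Q R' ∘ resI (A := Q) r 1 s.length q, ?_, ?_, ?_⟩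
      · rw [d_map, h2, hp]; funext i; simp
      · rw [d_map, h2, hq]; funext i; simp
      · refine (congrArg (fun t => Algebra.linearMap Q R' ∘ t) (wedge_resI r s.length p q)).trans ?_
        exact wedge_algebraMap _ _ _
    exact hle ha
  · refine ⟨Algebra.linearMap Q R' ∘ resI (A := Q) r 3 s.length w, ?_⟩
    rw [d_map, h2]
end

/-- If `R' = Q ⧸ (s)` with `s` regular, the Koszul homology of `s ++ x` over `Q` is that of `x` over
`R'`. -/
theorem exists_HH_equiv {Q R' : Type u} [CommRing Q] [CommRing R'] [Algebra Q R']
    (hg : Function.Surjective (algebraMap Q R')) {s x : List Q}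
    (hs : RingTheory.Sequence.IsWeaklyRegular Q s)
    (hk : RingHom.ker (algebraMap Q R') = Ideal.ofList s) {r : ℕ} (hr : x.length = r) (n : ℕ) :
    Nonempty (HH (A := Q) Q (r + s.length) n (s ++ x) ≃ₗ[Q] HH (A := Q) R' r n x) := by
  obtain ⟨h1, h2, h3⟩ := koszul_regular s (Algebra.linearMap Q R') hg hs (ker_linearMap hk) hr
  let φ : K (r + s.length) (n + 1) Q →ₗ[Q] K r (n + 1) R' :=
    LinearMap.compLeft (Algebra.linearMap Q R') _ ∘ₗ resI (A := Q) r (n + 1) s.length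
  have hφ : ∀ u, φ u = Algebra.linearMap Q R' ∘ resI (A := Q) r (n + 1) s.length u := fun _ => rfl
  have hz : ∀ u ∈ LinearMap.ker (d (M := Q) (r + s.length) n (s ++ x)),
      φ u ∈ LinearMap.ker (d (M := R') r n x) := by
    intro u hu
    rw [LinearMap.mem_ker] at hu ⊢
    rw [hφ, h2, hu]; funext i; simp
  let ψ : LinearMap.ker (d (M := Q) (r + s.length) n (s ++ x)) →ₗ[Q] HH (A := Q) R' r n x :=
    Submodule.mkQ _ ∘ₗ φ.restrict hz
  have hψ : Function.Surjective ψ := by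
    intro c
    obtain ⟨⟨c, hc⟩, rfl⟩ := Submodule.mkQ_surjective _ c
    obtain ⟨u, hu, rfl⟩ := h1 n c hc
    exact ⟨⟨u, hu⟩, rfl⟩
  have hker : LinearMap.ker ψ = (LinearMap.range (d (M := Q) (r + s.length) (n + 1) (s ++ x))).submoduleOf
      (LinearMap.ker (d (M := Q) (r + s.length) n (s ++ x))) := by
    ext ⟨u, hu⟩
    rw [LinearMap.mem_ker]
    simp only [ψ, LinearMap.comp_apply, Submodule.mkQ_apply, Submodule.Quotient.mk_eq_zero]
    simp only [Submodule.submoduleOf, Submodule.mem_comap]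
    constructor
    · rintro ⟨w, hw⟩
      obtain ⟨v, hv⟩ := h3 n u hu ⟨w, hw⟩
      exact ⟨v, hv⟩
    · rintro ⟨v, hv⟩
      refine ⟨Algebra.linearMap Q R' ∘ resI (A := Q) r (n + 2) s.length v, ?_⟩
      rw [h2]
      exact congrArg φ hv
  exact ⟨(Submodule.quotEquivOfEq _ _ hker.symm).trans (LinearMap.quotKerEquivOfSurjective ψ hψ)⟩
end CIDim

/-! ### Finite projective dimension -/

namespace CIDim
universe u
variable {Q : Type u} [CommRing Q]

/-- The `Q`-module `M` has projective dimension less than `n`; for `n = 0` this means `M = 0`. -/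
abbrev PDLT (Q : Type u) [CommRing Q] (M : Type u) [AddCommGroup M] [Module Q M] (n : ℕ) : Prop :=
  HasProjectiveDimensionLT (ModuleCat.of Q M) n

variable {A B C : Type u} [AddCommGroup A] [Module Q A] [AddCommGroup B] [Module Q B]
  [AddCommGroup C] [Module Q C]

theorem shortExact_of {f : A →ₗ[Q] B} {g : B →ₗ[Q] C} (hf : Function.Injective f)
    (hg : Function.Surjective g) (h : Function.Exact f g) :
    (ShortComplex.mk (ModuleCat.ofHom f) (ModuleCat.ofHom g)
      (by rw [← ModuleCat.ofHom_comp, h.linearMap_comp_eq_zero]; rfl)).ShortExact := by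
  refine ShortComplex.ShortExact.mk' ?_ ?_ ?_
  · rw [ShortComplex.moduleCat_exact_iff]
    intro x hx
    exact (h x).1 hx
  · exact (ModuleCat.mono_iff_injective _).2 hf
  · exact (ModuleCat.epi_iff_surjective _).2 hg

theorem PDLT.of_equiv (e : A ≃ₗ[Q] B) {n : ℕ} (h : PDLT Q A n) : PDLT Q B n :=
  haveI := h
  hasProjectiveDimensionLT_of_iso e.toModuleIso n

theorem PDLT.retract (i : A →ₗ[Q] B) (ρ : B →ₗ[Q] A) (hi : ∀ a, ρ (i a) = a) {n : ℕ}
    (h : PDLT Q B n) : PDLT Q A n :=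
  haveI := h
  Retract.hasProjectiveDimensionLT (X := ModuleCat.of Q A) (Y := ModuleCat.of Q B)
    ⟨ModuleCat.ofHom i, ModuleCat.ofHom ρ, by ext a; exact hi a⟩ n

theorem PDLT.mono {m n : ℕ} (h : m ≤ n) (hA : PDLT Q A m) : PDLT Q A n :=
  haveI := hA
  hasProjectiveDimensionLT_of_ge _ m n h

theorem PDLT.of_projective [Module.Projective Q A] {n : ℕ} (h : 1 ≤ n) : PDLT Q A n := by
  haveI : Projective (ModuleCat.of Q A) := (IsProjective.iff_projective _).1 inferInstance
  exact PDLT.mono h inferInstance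

theorem PDLT.subsingleton (h : PDLT Q A 0) : Subsingleton A :=
  haveI := h
  ModuleCat.isZero_iff_subsingleton.1 (isZero_of_hasProjectiveDimensionLT_zero (ModuleCat.of Q A))

theorem PDLT.of_subsingleton [Subsingleton A] (n : ℕ) : PDLT Q A n :=
  PDLT.mono (Nat.zero_le n) <| (hasProjectiveDimensionLT_zero_iff_isZero _).2 <|
    ModuleCat.isZero_iff_subsingleton.2 inferInstance

theorem PDLT.left {f : A →ₗ[Q] B} {g : B →ₗ[Q] C} (hf : Function.Injective f)
    (hg : Function.Surjective g) (h : Function.Exact f g) {n : ℕ} (hB : PDLT Q B n)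
    (hC : PDLT Q C (n + 1)) : PDLT Q A n :=
  (shortExact_of hf hg h).hasProjectiveDimensionLT_X₁ n hB hC

theorem PDLT.mid {f : A →ₗ[Q] B} {g : B →ₗ[Q] C} (hf : Function.Injective f)
    (hg : Function.Surjective g) (h : Function.Exact f g) {n : ℕ} (hA : PDLT Q A n)
    (hC : PDLT Q C n) : PDLT Q B n :=
  (shortExact_of hf hg h).hasProjectiveDimensionLT_X₂ n hA hC

theorem PDLT.right {f : A →ₗ[Q] B} {g : B →ₗ[Q] C} (hf : Function.Injective f)
    (hg : Function.Surjective g) (h : Function.Exact f g) {n : ℕ} (hA : PDLT Q A n)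
    (hB : PDLT Q B (n + 1)) : PDLT Q C (n + 1) :=
  (shortExact_of hf hg h).hasProjectiveDimensionLT_X₃ n hA hB

theorem PDLT.left_ker {g : B →ₗ[Q] C} (hg : Function.Surjective g) {n : ℕ} (hB : PDLT Q B n)
    (hC : PDLT Q C (n + 1)) : PDLT Q (LinearMap.ker g) n :=
  PDLT.left (f := (LinearMap.ker g).subtype) Subtype.val_injective hg
    (by intro x; simp) hB hC

theorem PDLT.pi {ι : Type} [Finite ι] {n : ℕ} (h : PDLT Q A n) : PDLT Q (ι → A) n := by
  induction ι using Finite.induction_empty_option with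
  | of_equiv e ih => exact PDLT.of_equiv (LinearEquiv.funCongrLeft Q A e.symm) ih
  | h_empty => exact PDLT.of_subsingleton n
  | h_option ih =>
    rename_i α _
    classical
    refine PDLT.mid (A := A) (B := Option α → A) (C := α → A)
      (f := LinearMap.single Q (fun _ : Option α => A) none)
      (g := LinearMap.funLeft Q A some) ?_ ?_ ?_ h ih
    · intro a b h; simpa using congrFun h none
    · intro v; exact ⟨fun o => o.elim 0 v, rfl⟩
    · intro v
      constructor
      · intro hv
        refine ⟨v none, ?_⟩
        funext o
        cases o with
        | none => simp
        | some o => simpa using (congrFun hv o).symm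
      · rintro ⟨a, rfl⟩
        funext o; simp [LinearMap.funLeft]
end CIDim

/-! ### Composites of connecting maps -/

namespace CIDim
universe u
variable {Q : Type u} [CommRing Q] {L : Type u} [AddCommGroup L] [Module Q L]

/-- Let `D` be a square-zero endomorphism of `L`, viewed as an ungraded complex. The map `g'` is the
image of `g` under the connecting map of some short exact sequence `0 → M' → E → M → 0`: it is
obtained by lifting `g` to `E` and composing with `D`. -/
def Conn (D : L →ₗ[Q] L) {M M' : Type u} [AddCommGroup M] [Module Q M] [AddCommGroup M']
    [Module Q M'] (g : L →ₗ[Q] M) (g' : L →ₗ[Q] M') : Prop :=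
  ∃ (E : ModuleCat.{u} Q) (i : M' →ₗ[Q] E) (π : E →ₗ[Q] M) (gt : L →ₗ[Q] E),
    Function.Injective i ∧ Function.Exact i π ∧ Function.Surjective π ∧ π ∘ₗ gt = g ∧
      i ∘ₗ g' = gt ∘ₗ D

/-- The map `g` is a coboundary of the complex `Hom(L, M)`. -/
def Cob (D : L →ₗ[Q] L) {M : Type u} [AddCommGroup M] [Module Q M] (g : L →ₗ[Q] M) : Prop :=
  ∃ h : L →ₗ[Q] M, g = h ∘ₗ D

/-- The map `g'` is obtained from `g` by `n` successive connecting maps. -/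
inductive Path (D : L →ₗ[Q] L) : ℕ → ∀ (M : ModuleCat.{u} Q), (L →ₗ[Q] M) →
    ∀ (M' : ModuleCat.{u} Q), (L →ₗ[Q] M') → Prop
  | refl (M : ModuleCat.{u} Q) (g : L →ₗ[Q] M) : Path D 0 M g M g
  | step {n : ℕ} {M M₁ M' : ModuleCat.{u} Q} {g : L →ₗ[Q] M} {g₁ : L →ₗ[Q] M₁} {g' : L →ₗ[Q] M'} :
      Conn D g g₁ → Path D n M₁ g₁ M' g' → Path D (n + 1) M g M' g'

theorem Path.trans {D : L →ₗ[Q] L} {m n : ℕ} {M M₁ M' : ModuleCat.{u} Q} {g : L →ₗ[Q] M}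
    {g₁ : L →ₗ[Q] M₁} {g' : L →ₗ[Q] M'} (h1 : Path D m M g M₁ g₁) (h2 : Path D n M₁ g₁ M' g') :
    Path D (m + n) M g M' g' := by
  induction h1 with
  | refl => rwa [Nat.zero_add]
  | @step k _ _ _ _ _ _ hc _ ih =>
    have := Path.step hc (ih h2)
    rwa [show k + 1 + n = k + n + 1 by omega]

theorem exists_factor {M M' E : Type u} [AddCommGroup M] [Module Q M] [AddCommGroup M']
    [Module Q M'] [AddCommGroup E] [Module Q E] {X : Type u} [AddCommGroup X] [Module Q X]
    {i : M' →ₗ[Q] E} {π : E →ₗ[Q] M} (hi : Function.Injective i)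
    (he : Function.Exact i π) (g : X →ₗ[Q] E) (hg : π ∘ₗ g = 0) : ∃ k : X →ₗ[Q] M', i ∘ₗ k = g := by
  refine ⟨(LinearEquiv.ofInjective i hi).symm.toLinearMap ∘ₗ LinearMap.codRestrict (LinearMap.range i) g (fun c => ?_), ?_⟩
  · exact (he _).1 (LinearMap.congr_fun hg c)
  · ext c
    have := (LinearEquiv.ofInjective i hi).apply_symm_apply
      (LinearMap.codRestrict (LinearMap.range i) g (fun c => (he _).1 (LinearMap.congr_fun hg c)) c)
    exact congrArg Subtype.val this

section
variable {D : L →ₗ[Q] L} (hD : D ∘ₗ D = 0) [Module.Projective Q L]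
  {M M' : Type u} [AddCommGroup M] [Module Q M] [AddCommGroup M'] [Module Q M']

include hD in
theorem Conn.of_add {g h : L →ₗ[Q] M} {g' : L →ₗ[Q] M'} (hc : Conn D (g + h ∘ₗ D) g') :
    Conn D g g' := by
  obtain ⟨E, i, π, gt, hi, he, hπ, h1, h2⟩ := hc
  obtain ⟨h', hh'⟩ := Module.projective_lifting_property π h hπ
  refine ⟨E, i, π, gt - h' ∘ₗ D, hi, he, hπ, ?_, ?_⟩
  · rw [LinearMap.comp_sub, h1, ← LinearMap.comp_assoc, hh']; simp
  · rw [LinearMap.sub_comp, LinearMap.comp_assoc, hD, h2]; simp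

include hD in
/-- Connecting maps send coboundaries to coboundaries. -/
theorem Cob.conn {g : L →ₗ[Q] M} {g' : L →ₗ[Q] M'} (hg : Cob D g) (hc : Conn D g g') :
    Cob D g' := by
  obtain ⟨h, rfl⟩ := hg
  rw [← zero_add (h ∘ₗ D)] at hc
  obtain ⟨E, i, π, gt, hi, he, hπ, h1, h2⟩ := hc.of_add hD
  obtain ⟨k, rfl⟩ := exists_factor hi he gt h1
  refine ⟨k, ?_⟩
  rw [LinearMap.comp_assoc] at h2
  ext x
  exact hi (LinearMap.congr_fun h2 x)

include hD in
theorem Cob.path {n : ℕ} {M M' : ModuleCat.{u} Q} {g : L →ₗ[Q] M} {g' : L →ₗ[Q] M'}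
    (hp : Path D n M g M' g') (hg : Cob D g) : Cob D g' := by
  induction hp with
  | refl => exact hg
  | step hc _ ih => exact ih (hg.conn hD hc)

include hD in
/-- If `N` has projective dimension less than `p`, then `n ≥ p` successive connecting maps starting from
a cocycle `f ∘ ε` that factors through a cocycle `ε` with values in `N` lead to a coboundary. The
first connecting map factors through that of a projective presentation of `N`, so that the induction
replaces `N` by its syzygy. -/
theorem Path.vanish {p : ℕ} : ∀ {N : Type u} [AddCommGroup N] [Module Q N] (hN : PDLT Q N p)
    (ε : L →ₗ[Q] N) (hε : ε ∘ₗ D = 0) {M M' : ModuleCat.{u} Q} (f : N →ₗ[Q] M) (k : L →ₗ[Q] M)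
    {g' : L →ₗ[Q] M'} {n : ℕ} (hn : p ≤ n) (hp : Path D n M (f ∘ₗ ε + k ∘ₗ D) M' g'), Cob D g' := by
  induction p with
  | zero =>
    intro N _ _ hN ε hε M M' f k g' n hn hp
    haveI := hN.subsingleton
    exact Cob.path hD hp ⟨k, by rw [Subsingleton.elim ε 0]; simp⟩
  | succ p ih =>
    intro N _ _ hN ε hε M M' f k g' n hn hp
    generalize hg : f ∘ₗ ε + k ∘ₗ D = g at hp
    cases hp with
    | refl => omega
    | @step n _ M₁ _ _ g₁ _ hc hp =>
      subst hg
      obtain ⟨E, i, π, gt, hi, he, hπ, h1, h2⟩ := hc.of_add hD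
      obtain ⟨P, π', hPp, hπ', hN'⟩ : ∃ (P : ModuleCat.{u} Q) (π' : P →ₗ[Q] N),
          Module.Projective Q P ∧ Function.Surjective π' ∧ PDLT Q (LinearMap.ker π') p := by
        cases p with
        | zero =>
          haveI : Projective (ModuleCat.of Q N) :=
            projective_iff_hasProjectiveDimensionLT_one.2 hN
          haveI : Module.Projective Q N := (IsProjective.iff_projective _).2 this
          refine ⟨ModuleCat.of Q N, LinearMap.id, this, Function.surjective_id, ?_⟩
          haveI : Subsingleton (LinearMap.ker (LinearMap.id : N →ₗ[Q] N)) := by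
            rw [LinearMap.ker_id]; infer_instance
          exact PDLT.of_subsingleton 0
        | succ p =>
          exact ⟨ModuleCat.of Q (N →₀ Q), Finsupp.linearCombination Q id,
            inferInstanceAs (Module.Projective Q (N →₀ Q)),
            Finsupp.linearCombination_id_surjective Q N,
            PDLT.left_ker (B := N →₀ Q) (Finsupp.linearCombination_id_surjective Q N)
              (PDLT.of_projective (by omega)) hN⟩
      obtain ⟨ε', hε'⟩ := Module.projective_lifting_property π' ε hπ'
      obtain ⟨σ, hσ⟩ := exists_factor (i := (LinearMap.ker π').subtype) (π := π')
        Subtype.val_injective (by intro x; simp) (ε' ∘ₗ D) (by rw [← LinearMap.comp_assoc, hε', hε])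
      obtain ⟨F, hF⟩ := Module.projective_lifting_property π (f ∘ₗ π') hπ
      obtain ⟨f', hf'⟩ := exists_factor hi he (F ∘ₗ (LinearMap.ker π').subtype) (by
        rw [← LinearMap.comp_assoc, hF]; ext x; simp)
      obtain ⟨k', hk'⟩ := exists_factor hi he (gt - F ∘ₗ ε') (by
        rw [LinearMap.comp_sub, h1, ← LinearMap.comp_assoc, hF, LinearMap.comp_assoc, hε', sub_self])
      refine ih hN' σ ?_ f' k' (Nat.le_of_succ_le_succ hn) ?_ (M := M₁)
      · have : (LinearMap.ker π').subtype ∘ₗ (σ ∘ₗ D) = 0 := by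
          rw [← LinearMap.comp_assoc, hσ, LinearMap.comp_assoc, hD]; simp
        ext x
        exact LinearMap.congr_fun this x
      · have : g₁ = f' ∘ₗ σ + k' ∘ₗ D := by
          ext x
          apply hi
          have e1 := LinearMap.congr_fun h2 x
          have e2 := LinearMap.congr_fun hf' (σ x)
          have e3 := LinearMap.congr_fun hk' (D x)
          have e4 := LinearMap.congr_fun hσ x
          simp at e1 e2 e3 e4 ⊢
          rw [e1, e2, e3, e4]; abel
        rw [← this]; exact hp
end
end CIDim

/-! ### The exterior algebra: lower bounds for projective dimension -/

namespace CIDim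
universe u
section precomp
variable {Q : Type u} [CommRing Q] {L : Type u} [AddCommGroup L] [Module Q L]

theorem Conn.precomp {D : L →ₗ[Q] L} {M M' : Type u} [AddCommGroup M] [Module Q M]
    [AddCommGroup M'] [Module Q M'] {g : L →ₗ[Q] M} {g' : L →ₗ[Q] M'} (h : Conn D g g')
    (θ : L →ₗ[Q] L) (hθ : θ ∘ₗ D = D ∘ₗ θ ∨ θ ∘ₗ D = -(D ∘ₗ θ)) :
    Conn D (g ∘ₗ θ) (g' ∘ₗ θ) := by
  obtain ⟨E, i, π, gt, hi, he, hπ, h1, h2⟩ := h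
  rcases hθ with hθ | hθ
  · refine ⟨E, i, π, gt ∘ₗ θ, hi, he, hπ, by rw [← h1]; rfl, ?_⟩
    rw [LinearMap.comp_assoc, hθ, ← LinearMap.comp_assoc, h2]; rfl
  · refine ⟨E, -i, π, gt ∘ₗ θ, neg_injective.comp hi, ?_, hπ, by rw [← h1]; rfl, ?_⟩
    · intro x
      rw [he x]
      constructor
      · rintro ⟨a, rfl⟩; exact ⟨-a, by simp⟩
      · rintro ⟨a, rfl⟩; exact ⟨-a, by simp⟩
    · apply LinearMap.ext; intro x
      have e1 := LinearMap.congr_fun h2 (θ x)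
      have e2 := LinearMap.congr_fun hθ x
      simp only [LinearMap.comp_apply, LinearMap.neg_apply] at e1 e2 ⊢
      rw [e1, e2, map_neg]

theorem Path.precomp {D : L →ₗ[Q] L} (θ : L →ₗ[Q] L)
    (hθ : θ ∘ₗ D = D ∘ₗ θ ∨ θ ∘ₗ D = -(D ∘ₗ θ)) {n : ℕ} {M M' : ModuleCat.{u} Q}
    {g : L →ₗ[Q] M} {g' : L →ₗ[Q] M'} (h : Path D n M g M' g') :
    Path D n M (g ∘ₗ θ) M' (g' ∘ₗ θ) := by
  induction h with
  | refl => exact .refl _ _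
  | step hc _ ih => exact .step (hc.precomp θ hθ) ih

theorem Path.vanish' {D : L →ₗ[Q] L} (hD : D ∘ₗ D = 0) [Module.Projective Q L]
    {N : Type u} [AddCommGroup N] [Module Q N] {p n : ℕ} (hN : PDLT Q N p)
    (ε : L →ₗ[Q] N) (hε : ε ∘ₗ D = 0) {M' : ModuleCat.{u} Q}
    {g' : L →ₗ[Q] M'} (hn : p ≤ n) (hp : Path D n (ModuleCat.of Q N) ε M' g') : Cob D g' := by
  refine Path.vanish hD hN ε hε (M := ModuleCat.of Q N) LinearMap.id 0 hn ?_
  simpa using hp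
end precomp

section ext
variable {Q : Type u} [CommRing Q] {V : Type u} [AddCommGroup V] [Module Q V]
open ExteriorAlgebra

theorem fst_toTriv [Module Qᵐᵒᵖ V] [IsCentralScalar Q V] (x : ExteriorAlgebra Q V) :
    (toTrivSqZeroExt x).fst = algebraMapInv x := by
  have : (TrivSqZeroExt.fstHom Q Q V).comp (toTrivSqZeroExt (R := Q) (M := V)) = algebraMapInv := by
    ext m
    simp [algebraMapInv]
  exact DFunLike.congr_fun this x

theorem smul_mono_right' {M : Type u} [AddCommGroup M] [Module Q M] (J : Ideal Q)
    {A B : Submodule Q M} (h : A ≤ B) : J • A ≤ J • B := Submodule.smul_mono le_rfl h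

theorem algebraMapInv_ι_mul (m : V) (x : ExteriorAlgebra Q V) :
    algebraMapInv (ι Q m * x) = 0 := by
  simp [algebraMapInv]

theorem ιInv_ι_mul (m : V) (x : ExteriorAlgebra Q V) :
    ιInv (ι Q m * x) = algebraMapInv x • m := by
  letI : Module Qᵐᵒᵖ V := Module.compHom _ ((RingHom.id Q).fromOpposite mul_comm)
  haveI : IsCentralScalar Q V := ⟨fun r m => rfl⟩
  have := fst_toTriv x
  show (toTrivSqZeroExt (ι Q m * x)).snd = _
  rw [map_mul]
  simp [this]

theorem ιInv_algebraMap (r : Q) : ιInv (algebraMap Q (ExteriorAlgebra Q V) r) = 0 := by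
  letI : Module Qᵐᵒᵖ V := Module.compHom _ ((RingHom.id Q).fromOpposite mul_comm)
  haveI : IsCentralScalar Q V := ⟨fun r m => rfl⟩
  show (toTrivSqZeroExt (algebraMap Q (ExteriorAlgebra Q V) r)).snd = _
  rw [AlgHom.commutes]
  rfl

/-- Contraction with `δ` on the exterior algebra of `V`, i.e. the Koszul differential. -/
noncomputable def ctr (δ : Module.Dual Q V) : ExteriorAlgebra Q V →ₗ[Q] ExteriorAlgebra Q V :=
  CliffordAlgebra.contractLeft δ

theorem ctr_ι_mul (δ : Module.Dual Q V) (m : V) (x : ExteriorAlgebra Q V) :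
    ctr δ (ι Q m * x) = δ m • x - ι Q m * ctr δ x :=
  CliffordAlgebra.contractLeft_ι_mul _ _ _

theorem ctr_algebraMap (δ : Module.Dual Q V) (r : Q) :
    ctr δ (algebraMap Q (ExteriorAlgebra Q V) r) = 0 :=
  CliffordAlgebra.contractLeft_algebraMap _ _ r

theorem ctr_ctr (δ : Module.Dual Q V) (x : ExteriorAlgebra Q V) : ctr δ (ctr δ x) = 0 :=
  CliffordAlgebra.contractLeft_contractLeft _ _

theorem ctr_comm (δ δ' : Module.Dual Q V) (x : ExteriorAlgebra Q V) :
    ctr δ (ctr δ' x) = - ctr δ' (ctr δ x) :=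
  CliffordAlgebra.contractLeft_comm _ _ x

theorem ext_induction {P : ExteriorAlgebra Q V → Prop}
    (h1 : ∀ r : Q, P (algebraMap _ _ r)) (h2 : ∀ x y, P x → P y → P (x + y))
    (h3 : ∀ x m, P x → P (ι Q m * x)) (x) : P x :=
  CliffordAlgebra.left_induction (0 : QuadraticForm Q V) h1 h2 h3 x

theorem algebraMapInv_ctr (δ : Module.Dual Q V) (x : ExteriorAlgebra Q V) :
    algebraMapInv (ctr δ x) = δ (ιInv x) := by
  induction x using ext_induction with
  | h1 r => rw [ctr_algebraMap, ιInv_algebraMap]; simp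
  | h2 x y hx hy => simp [hx, hy]
  | h3 x m ih =>
    rw [ctr_ι_mul, map_sub, algebraMapInv_ι_mul, ιInv_ι_mul]
    simp [mul_comm]

theorem ιInv_ctr_mem (δ : Module.Dual Q V) (W : Submodule Q V)
    (hW : ∀ v w, δ v • w - δ w • v ∈ W) (x : ExteriorAlgebra Q V) : ιInv (ctr δ x) ∈ W := by
  induction x using ext_induction with
  | h1 r => rw [ctr_algebraMap]; simp
  | h2 x y hx hy => simpa using W.add_mem hx hy
  | h3 x m ih =>
    rw [ctr_ι_mul, map_sub, ιInv_ι_mul, algebraMapInv_ctr, map_smul]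
    exact hW _ _

theorem ctr_mem (δ : Module.Dual Q V) (x : ExteriorAlgebra Q V) :
    ctr δ x ∈ LinearMap.range δ • (⊤ : Submodule Q (ExteriorAlgebra Q V)) := by
  induction x using ext_induction with
  | h1 r => rw [ctr_algebraMap]; exact zero_mem _
  | h2 x y hx hy => simpa using add_mem hx hy
  | h3 x m ih =>
    rw [ctr_ι_mul]
    refine sub_mem (Submodule.smul_mem_smul ⟨m, rfl⟩ trivial) ?_
    have := Submodule.mem_map_of_mem (f := LinearMap.mulLeft Q (ι Q m)) ih
    rw [Submodule.map_smul''] at this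
    exact smul_mono_right' _ le_top this

instance ext_free [Module.Free Q V] : Module.Free Q (ExteriorAlgebra Q V) := by
  classical
  letI : LinearOrder (Module.Free.ChooseBasisIndex Q V) := linearOrderOfSTO WellOrderingRel
  exact Module.Free.of_basis (Module.Free.chooseBasis Q V).ExteriorAlgebra

end ext

section A
variable {Q : Type u} [CommRing Q] {V : Type u} [AddCommGroup V] [Module Q V]
  (δ : Module.Dual Q V) (J : Ideal Q) (hδ : ∀ v, δ v ∈ J) (hsurj : ∀ q ∈ J, ∃ v, δ v = q)
open ExteriorAlgebra

/-- The augmentation `Λ V → Q → Q ⧸ J`. -/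
noncomputable def augE : ExteriorAlgebra Q V →ₗ[Q] Q ⧸ J :=
  Submodule.mkQ J ∘ₗ algebraMapInv.toLinearMap

include hδ in
theorem augE_ctr (x : ExteriorAlgebra Q V) : augE J (ctr δ x) = 0 := by
  simp only [augE, LinearMap.comp_apply, AlgHom.toLinearMap_apply, Submodule.mkQ_apply,
    algebraMapInv_ctr]
  rw [Submodule.Quotient.mk_eq_zero]
  exact hδ _

include hδ hsurj in
/-- Lower bound for projective dimension by the conormal module. Let `J = im δ` be a proper ideal,
and for each `i` let `χ i : J → Q ⧸ J` send `δ (b i)` to `1` and the other `δ (b j)` to `0`, so that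
`J ⧸ J²` is free. Then `Q ⧸ J` has projective dimension at least the number of distinct indices in
`l`. Pushing `0 → J → Q → Q ⧸ J → 0` out along `χ i` gives an extension whose connecting map is
contraction with the `i`-th coordinate; the composite over all of `l` takes the value `1` on the
product of the corresponding `b i`, and is not a coboundary. -/
theorem conormal_bound [Module.Free Q V] {ι' : Type*} (b : Module.Basis ι' Q V)
    (χ : ι' → (J →ₗ[Q] Q ⧸ J))
    (hχ : ∀ i, χ i ⟨δ (b i), hδ _⟩ = Submodule.Quotient.mk 1)
    (hχ' : ∀ i j, j ≠ i → χ i ⟨δ (b j), hδ _⟩ = 0)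
    (hJ : J ≠ ⊤) (l : List ι') (hl : l.Nodup)
    (hN : PDLT Q (Q ⧸ J) l.length) : False := by
  have hD : ctr δ ∘ₗ ctr δ = 0 := LinearMap.ext (ctr_ctr δ)
  -- The extension `0 → Q ⧸ J → Q ⧸ W → Q ⧸ J → 0` with `W = ker (χ i)`.
  have key : ∀ i, Conn (ctr δ) (augE J) (augE J ∘ₗ ctr (b.coord i)) := by
    intro i
    let W : Submodule Q Q := (LinearMap.ker (χ i)).map J.subtype
    have hWJ : W ≤ J := Submodule.map_subtype_le _ _
    have hmemW : ∀ (q : Q) (hq : q ∈ J), q ∈ W ↔ χ i ⟨q, hq⟩ = 0 := by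
      intro q hq
      simp only [W, Submodule.mem_map]
      constructor
      · rintro ⟨y, hy, rfl⟩; exact hy
      · intro h; exact ⟨⟨q, hq⟩, h, rfl⟩
    have hδi : δ (b i) ∈ J := hδ _
    have hχq : ∀ q : Q, χ i ⟨q • δ (b i), J.smul_mem q hδi⟩ = Submodule.Quotient.mk q := by
      intro q
      have : (⟨q • δ (b i), J.smul_mem q hδi⟩ : J) = q • ⟨δ (b i), hδi⟩ := rfl
      rw [this, map_smul, hχ, ← Submodule.Quotient.mk_smul, smul_eq_mul, mul_one]
    let i0 : (Q ⧸ J) →ₗ[Q] (Q ⧸ W) := J.liftQ (W.mkQ ∘ₗ LinearMap.toSpanSingleton Q Q (δ (b i))) (by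
      intro q hq
      rw [LinearMap.mem_ker]
      simp only [LinearMap.comp_apply, LinearMap.toSpanSingleton_apply, Submodule.mkQ_apply]
      rw [Submodule.Quotient.mk_eq_zero, hmemW _ (J.smul_mem q hδi), hχq,
        Submodule.Quotient.mk_eq_zero]
      exact hq)
    have hi0 : ∀ q : Q, i0 (Submodule.Quotient.mk q) = Submodule.Quotient.mk (q • δ (b i)) := by
      intro q; rfl
    refine ⟨ModuleCat.of Q (Q ⧸ W), i0, W.mapQ J LinearMap.id hWJ,
      W.mkQ ∘ₗ algebraMapInv.toLinearMap, ?_, ?_, ?_, ?_, ?_⟩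
    · rw [← LinearMap.ker_eq_bot, LinearMap.ker_eq_bot']
      intro x hx
      obtain ⟨q, rfl⟩ := Submodule.Quotient.mk_surjective _ x
      rw [hi0, Submodule.Quotient.mk_eq_zero, hmemW _ (J.smul_mem q hδi), hχq] at hx
      exact hx
    · intro x
      obtain ⟨q, rfl⟩ := Submodule.Quotient.mk_surjective _ x
      rw [Submodule.mapQ_apply, LinearMap.id_apply, Submodule.Quotient.mk_eq_zero]
      constructor
      · intro hq
        obtain ⟨c, hc⟩ := Submodule.Quotient.mk_surjective _ (χ i ⟨q, hq⟩)
        refine ⟨Submodule.Quotient.mk c, ?_⟩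
        rw [hi0, eq_comm, Submodule.Quotient.eq, hmemW _ (J.sub_mem hq (J.smul_mem c hδi))]
        have : (⟨q - c • δ (b i), J.sub_mem hq (J.smul_mem c hδi)⟩ : J) =
          ⟨q, hq⟩ - ⟨c • δ (b i), J.smul_mem c hδi⟩ := rfl
        rw [this, map_sub, hχq, hc, sub_self]
      · rintro ⟨y, hy⟩
        obtain ⟨c, rfl⟩ := Submodule.Quotient.mk_surjective _ y
        rw [hi0, eq_comm, Submodule.Quotient.eq] at hy
        have := J.add_mem (hWJ hy) (J.smul_mem c hδi)
        simpa using this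
    · intro x
      obtain ⟨q, rfl⟩ := Submodule.Quotient.mk_surjective _ x
      exact ⟨Submodule.Quotient.mk q, rfl⟩
    · rfl
    · apply LinearMap.ext; intro x
      simp only [augE, LinearMap.comp_apply, AlgHom.toLinearMap_apply, Submodule.mkQ_apply,
        algebraMapInv_ctr]
      rw [hi0, Submodule.Quotient.eq, hmemW _ (J.sub_mem (J.smul_mem _ hδi) (hδ _))]
      have h0 : ∀ v : V, χ i ⟨δ v, hδ v⟩ = Submodule.Quotient.mk (b.coord i v) := by
        have : χ i ∘ₗ LinearMap.codRestrict J δ hδ = J.mkQ ∘ₗ b.coord i := by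
          apply b.ext
          intro j
          by_cases hj : j = i
          · subst hj
            refine (hχ j).trans ?_
            simp
          · refine (hχ' i j hj).trans ?_
            simp [Finsupp.single_eq_of_ne' hj]
        intro v
        exact LinearMap.congr_fun this v
      have : (⟨b.coord i (ιInv x) • δ (b i) - δ (ιInv x),
          J.sub_mem (J.smul_mem _ hδi) (hδ _)⟩ : J) =
          ⟨b.coord i (ιInv x) • δ (b i), J.smul_mem _ hδi⟩ - ⟨δ (ιInv x), hδ _⟩ := rfl
      exact (congrArg (χ i) this).trans (by rw [map_sub, hχq, h0, sub_self])
  obtain ⟨Θ, x, hp, h1⟩ : ∃ (Θ : ExteriorAlgebra Q V →ₗ[Q] ExteriorAlgebra Q V)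
      (x : ExteriorAlgebra Q V),
      Path (ctr δ) l.length (ModuleCat.of Q (Q ⧸ J)) (augE J) (ModuleCat.of Q (Q ⧸ J))
        (augE J ∘ₗ Θ) ∧ Θ x = 1 := by
    suffices h : ∃ (Θ : ExteriorAlgebra Q V →ₗ[Q] ExteriorAlgebra Q V)
      (x : ExteriorAlgebra Q V),
      Path (ctr δ) l.length (ModuleCat.of Q (Q ⧸ J)) (augE J) (ModuleCat.of Q (Q ⧸ J))
        (augE J ∘ₗ Θ) ∧ Θ x = 1 ∧ ∀ i, i ∉ l → ctr (b.coord i) x = 0 by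
      obtain ⟨Θ, x, h1, h2, _⟩ := h; exact ⟨Θ, x, h1, h2⟩
    clear hN
    induction l with
    | nil =>
      refine ⟨LinearMap.id, 1, .refl _ _, rfl, fun i _ => ?_⟩
      rw [← map_one (algebraMap Q _), ctr_algebraMap]
    | cons i l ih =>
      rw [List.nodup_cons] at hl
      obtain ⟨Θ, x, hp, h1, h2⟩ := ih hl.2
      refine ⟨Θ ∘ₗ ctr (b.coord i), ι Q (b i) * x, ?_, ?_, ?_⟩
      · have := hp.precomp (ctr (b.coord i)) (Or.inr (LinearMap.ext fun y => ctr_comm _ _ y))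
        exact .step (key i) this
      · rw [LinearMap.comp_apply, ctr_ι_mul, h2 i hl.1]
        simpa using h1
      · intro j hj
        rw [List.mem_cons, not_or] at hj
        rw [ctr_ι_mul, h2 j hj.2]
        simp [Finsupp.single_eq_of_ne' (Ne.symm hj.1), Finsupp.single_eq_of_ne hj.1]
  obtain ⟨h, hh⟩ := Path.vanish' hD hN (augE J) (LinearMap.ext (augE_ctr δ J hδ)) le_rfl hp
  have e := LinearMap.congr_fun hh x
  rw [LinearMap.comp_apply, h1, LinearMap.comp_apply] at e
  have hrJ : LinearMap.range δ ≤ J := by rintro _ ⟨v, rfl⟩; exact hδ v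
  have e2 := Submodule.mem_map_of_mem (f := h) (Submodule.smul_mono_left hrJ (ctr_mem δ x))
  rw [Submodule.map_smul''] at e2
  have e3 : J • (⊤ : Submodule Q (Q ⧸ J)) = ⊥ := by
    rw [eq_bot_iff, Submodule.smul_le]
    intro r hr n _
    obtain ⟨q, rfl⟩ := Submodule.Quotient.mk_surjective _ n
    rw [← Submodule.Quotient.mk_smul, Submodule.mem_bot, Submodule.Quotient.mk_eq_zero]
    exact J.mul_mem_right q hr
  have e4 := smul_mono_right' J (le_top : Submodule.map h ⊤ ≤ ⊤) e2
  rw [e3, Submodule.mem_bot, ← e] at e4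
  simp only [augE, LinearMap.comp_apply, AlgHom.toLinearMap_apply, map_one, Submodule.mkQ_apply,
    Submodule.Quotient.mk_eq_zero] at e4
  exact hJ ((Ideal.eq_top_iff_one J).2 e4)

include hδ hsurj in
/-- The quotient `Q ⧸ J` has infinite projective dimension if some cycle `z ∈ m V` of the Koszul complex
is sent to `1` by a functional `χ : ker δ → Q ⧸ J` which vanishes on the trivial cycles. The proof
uses the complex of Tate obtained from `Λ V` by adjoining divided powers of a variable that kills
`z`: it is modelled as `ℕ →₀ Λ V`, the index being the divided power. Two connecting maps compose to
the shift `θ` that lowers the divided power by one, and no power of `θ` is a coboundary. -/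
theorem infinite_pd [IsLocalRing Q] [Module.Free Q V] (hJ : J ≤ maximalIdeal Q)
    (χ : LinearMap.ker δ →ₗ[Q] Q ⧸ J)
    (hχ : ∀ v w, χ ⟨δ v • w - δ w • v, by simp [mul_comm]⟩ = 0)
    (z : LinearMap.ker δ) (hz : χ z = Submodule.Quotient.mk 1)
    (hzm : (z : V) ∈ maximalIdeal Q • (⊤ : Submodule Q V)) (p : ℕ)
    (hN : PDLT Q (Q ⧸ J) p) : False := by
  classical
  let E := ExteriorAlgebra Q V
  let L := ℕ →₀ E
  let θ : L →ₗ[Q] L := Finsupp.lcomapDomain (fun n => n + 1) (add_left_injective 1)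
  have θa : ∀ a n, θ a n = a (n + 1) := fun a n => rfl
  let D : L →ₗ[Q] L := Finsupp.mapRange.linearMap (ctr δ) +
    Finsupp.mapRange.linearMap (LinearMap.mulLeft Q (ι Q (z : V))) ∘ₗ θ
  have Da : ∀ a n, D a n = ctr δ (a n) + ι Q (z : V) * a (n + 1) := fun a n => rfl
  have hδz : δ z = 0 := z.2
  have hD : D ∘ₗ D = 0 := by
    apply LinearMap.ext; intro a
    ext1 n
    rw [LinearMap.comp_apply, Da, Da, Da, map_add, ctr_ctr, ctr_ι_mul, hδz, mul_add, ← mul_assoc,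
      CliffordAlgebra.ι_sq_scalar]
    simp
  have hθ : θ ∘ₗ D = D ∘ₗ θ := by
    apply LinearMap.ext; intro a; ext1 n; rfl
  let pr : L →ₗ[Q] E := Finsupp.lapply 0
  let ε : L →ₗ[Q] Q ⧸ J := augE J ∘ₗ pr
  have hε : ε ∘ₗ D = 0 := by
    apply LinearMap.ext; intro a
    show augE J (D a 0) = 0
    rw [Da, map_add, augE_ctr δ J hδ]
    show 0 + J.mkQ (algebraMapInv _) = 0
    rw [algebraMapInv_ι_mul]; simp
  let g₁ : L →ₗ[Q] J := LinearMap.codRestrict J δ hδ ∘ₗ ιInv ∘ₗ pr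
  -- The connecting map of `0 → J → Q → Q ⧸ J → 0`.
  have c1 : Conn D ε g₁ := by
    refine ⟨ModuleCat.of Q Q, J.subtype, J.mkQ, algebraMapInv.toLinearMap ∘ₗ pr,
      Subtype.val_injective, ?_, Submodule.mkQ_surjective _, rfl, ?_⟩
    · intro x
      rw [Submodule.mkQ_apply, Submodule.Quotient.mk_eq_zero]; simp
    · apply LinearMap.ext; intro a
      show δ (ιInv (a 0)) = algebraMapInv (D a 0)
      rw [Da, map_add, algebraMapInv_ctr, algebraMapInv_ι_mul, add_zero]
  -- The connecting map of the pushout of `0 → ker δ → V → J → 0` along `χ`.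
  have c2 : Conn D g₁ (ε ∘ₗ θ) := by
    let W : Submodule Q V := (LinearMap.ker χ).map (LinearMap.ker δ).subtype
    have hW : W ≤ LinearMap.ker δ := Submodule.map_subtype_le _ _
    have hmemW : ∀ (v : V) (hv : v ∈ LinearMap.ker δ), v ∈ W ↔ χ ⟨v, hv⟩ = 0 := by
      intro q hq
      simp only [W, Submodule.mem_map]
      constructor
      · rintro ⟨y, hy, rfl⟩; exact hy
      · intro h; exact ⟨⟨q, hq⟩, h, rfl⟩
    have hχq : ∀ q : Q, χ (q • z) = Submodule.Quotient.mk q := by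
      intro q
      rw [map_smul, hz, ← Submodule.Quotient.mk_smul, smul_eq_mul, mul_one]
    have hkw : ∀ q : Q, q • (z : V) ∈ W ↔ q ∈ J := by
      intro q
      refine (hmemW _ (q • z).2).trans ?_
      exact (Eq.congr_left (hχq q)).trans (Submodule.Quotient.mk_eq_zero _)
    let i0 : (Q ⧸ J) →ₗ[Q] (V ⧸ W) := J.liftQ (W.mkQ ∘ₗ LinearMap.toSpanSingleton Q V (z : V)) (by
      intro q hq
      rw [LinearMap.mem_ker]
      simp only [LinearMap.comp_apply, LinearMap.toSpanSingleton_apply, Submodule.mkQ_apply]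
      rw [Submodule.Quotient.mk_eq_zero, hkw]
      exact hq)
    have hi0 : ∀ q : Q, i0 (Submodule.Quotient.mk q) = Submodule.Quotient.mk (q • (z : V)) := by
      intro q; rfl
    let π : (V ⧸ W) →ₗ[Q] J := W.liftQ (LinearMap.codRestrict J δ hδ) (by rw [LinearMap.ker_codRestrict]; exact hW)
    have hπ : ∀ v : V, π (Submodule.Quotient.mk v) = LinearMap.codRestrict J δ hδ v := fun v => rfl
    refine ⟨ModuleCat.of Q (V ⧸ W), i0, π, W.mkQ ∘ₗ ιInv ∘ₗ pr, ?_, ?_, ?_, rfl, ?_⟩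
    · rw [← LinearMap.ker_eq_bot, LinearMap.ker_eq_bot']
      intro x hx
      obtain ⟨q, rfl⟩ := Submodule.Quotient.mk_surjective _ x
      rw [hi0, Submodule.Quotient.mk_eq_zero, hkw] at hx
      rwa [Submodule.Quotient.mk_eq_zero]
    · intro x
      obtain ⟨v, rfl⟩ := Submodule.Quotient.mk_surjective _ x
      rw [hπ, Subtype.ext_iff]
      constructor
      · intro hv
        obtain ⟨c, hc⟩ := Submodule.Quotient.mk_surjective _ (χ ⟨v, hv⟩)
        refine ⟨Submodule.Quotient.mk c, ?_⟩
        rw [hi0, eq_comm, Submodule.Quotient.eq, hmemW (v - c • (z : V)) ((LinearMap.ker δ).sub_mem hv (c • z).2)]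
        have : (⟨v - c • (z : V), (LinearMap.ker δ).sub_mem hv (c • z).2⟩ : LinearMap.ker δ) =
          ⟨v, hv⟩ - c • z := rfl
        rw [this, map_sub, hχq, hc, sub_self]
      · rintro ⟨y, hy⟩
        obtain ⟨c, rfl⟩ := Submodule.Quotient.mk_surjective _ y
        rw [hi0, eq_comm, Submodule.Quotient.eq] at hy
        have := add_mem (hW hy) (c • z).2
        simpa using this
    · intro x
      obtain ⟨q, hq⟩ := x
      obtain ⟨v, rfl⟩ := hsurj q hq
      exact ⟨Submodule.Quotient.mk v, rfl⟩
    · apply LinearMap.ext; intro a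
      show i0 (Submodule.Quotient.mk (algebraMapInv (a 1))) = W.mkQ (ιInv (D a 0))
      rw [hi0, Da, map_add, ιInv_ι_mul, map_add, Submodule.mkQ_apply, Submodule.mkQ_apply,
        (Submodule.Quotient.mk_eq_zero W (x := ιInv (ctr δ (a 0)))).2, zero_add]
      refine ιInv_ctr_mem δ W (fun v w => ?_) _
      rw [hmemW _ (by simp [mul_comm])]
      exact hχ v w
  have hpath : ∀ n, Path D (2 * n) (ModuleCat.of Q (Q ⧸ J)) ε (ModuleCat.of Q (Q ⧸ J)) (ε ∘ₗ θ ^ n) := by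
    intro n
    induction n with
    | zero => exact .refl _ _
    | succ n ih =>
      have := ih.precomp θ (Or.inl hθ)
      exact .step (M₁ := ModuleCat.of Q J) c1 (.step c2 this)
  have hθn : ∀ n k (x : E), (θ ^ n) (Finsupp.single (n + k) x) = Finsupp.single k x := by
    intro n
    induction n with
    | zero => intro k x; simp
    | succ n ih =>
      intro k x
      rw [pow_succ, Module.End.mul_apply]
      have : θ (Finsupp.single (n + 1 + k) x) = Finsupp.single (n + k) x := by
        ext1 j
        rw [θa, show n + 1 + k = n + k + 1 by omega]
        erw [Finsupp.single_apply, Finsupp.single_apply]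
        simp
      rw [this, ih]
  obtain ⟨h, hh⟩ := Path.vanish' hD hN ε hε (by omega : p ≤ 2 * (p + 1)) (hpath (p + 1))
  have e : ε ((θ ^ (p + 1)) (Finsupp.single (p + 1 + 0) 1)) =
    h (D (Finsupp.single (p + 1 + 0) 1)) := LinearMap.congr_fun hh (Finsupp.single (p + 1 + 0) 1)
  rw [hθn] at e
  have hDs : D (Finsupp.single (p + 1 + 0) 1) = Finsupp.single p (ι Q (z : V)) := by
    ext1 j
    rw [Da]
    have h1 : ctr δ ((Finsupp.single (p + 1 + 0) (1 : E)) j) = 0 := by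
      rw [Finsupp.single_apply]
      split_ifs
      · rw [← map_one (algebraMap Q _), ctr_algebraMap]
      · simp
    rw [h1, zero_add]
    erw [Finsupp.single_apply, Finsupp.single_apply]
    simp only [add_zero, add_left_inj]
    split_ifs <;> simp
  -- A coboundary vanishes modulo `m` on the `(p + 1)`-st divided power, as `z ∈ m V`; but `ε ∘ θ ^ (p + 1)`
  -- takes the value `1` there.
  rw [hDs] at e
  have e2 := Submodule.mem_map_of_mem (f := h ∘ₗ Finsupp.lsingle p ∘ₗ ι Q) hzm
  rw [Submodule.map_smul''] at e2
  have e4 := smul_mono_right' (maximalIdeal Q) (le_top : Submodule.map (h ∘ₗ Finsupp.lsingle p ∘ₗ ι Q) ⊤ ≤ ⊤) e2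
  have e5 : (Submodule.Quotient.mk 1 : Q ⧸ J) ∈ maximalIdeal Q • (⊤ : Submodule Q (Q ⧸ J)) := by
    convert e4 using 1
    rw [LinearMap.comp_apply, LinearMap.comp_apply, Finsupp.lsingle_apply, ← e]
    show _ = augE J ((Finsupp.single 0 (1 : E)) 0)
    simp [augE]
  have e6 : maximalIdeal Q • (⊤ : Submodule Q (Q ⧸ J)) ≤ Submodule.map (Submodule.mkQ J) (maximalIdeal Q) := by
    rw [Submodule.smul_le]
    intro r hr n _
    obtain ⟨q, rfl⟩ := Submodule.Quotient.mk_surjective _ n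
    exact ⟨r * q, (maximalIdeal Q).mul_mem_right q hr, rfl⟩
  obtain ⟨m, hm, hm1⟩ := e6 e5
  rw [Submodule.mkQ_apply, Submodule.Quotient.eq] at hm1
  have : (1 : Q) ∈ maximalIdeal Q := by
    have := sub_mem hm (hJ hm1)
    simpa using this
  exact (Ideal.ne_top_iff_one _).1 (Ideal.IsPrime.ne_top inferInstance) this
end A
end CIDim

/-! ### Koszul homology that is a summand of a free `Q ⧸ J`-module -/

namespace CIDim
universe u
section
variable {Q : Type u} [CommRing Q]

theorem val_d_mem (y : List Q) : ∀ (r : ℕ) (hr : y.length = r) (u : K r 1 Q),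
    val (d r 0 y u) ∈ Ideal.span {x | x ∈ y} := by
  induction y with
  | nil => rintro _ rfl u; simp
  | cons a t ih =>
    rintro _ rfl u
    simp only [List.length_cons, val_d_cons]
    have hle : Ideal.span {x | x ∈ t} ≤ Ideal.span {x | x ∈ a :: t} :=
      Ideal.span_mono fun x hx => List.mem_cons_of_mem _ hx
    exact add_mem (hle (ih _ rfl _)) (Ideal.mul_mem_right _ _ (Ideal.subset_span List.mem_cons_self))

/-- A module is good if it is a direct summand of a finite power of `Q ⧸ J`. -/
def Good (J : Ideal Q) (H : Type u) [AddCommGroup H] [Module Q H] : Prop :=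
  ∃ (h : ℕ) (i : H →ₗ[Q] (Fin h → Q ⧸ J)) (ρ : (Fin h → Q ⧸ J) →ₗ[Q] H), ∀ x, ρ (i x) = x

variable {J : Ideal Q} {H H' : Type u} [AddCommGroup H] [Module Q H] [AddCommGroup H'] [Module Q H']

theorem Good.retract (hG : Good J H) (f : H' →ₗ[Q] H) (g : H →ₗ[Q] H') (hgf : ∀ x, g (f x) = x) :
    Good J H' := by
  obtain ⟨h, i, ρ, hi⟩ := hG
  exact ⟨h, i ∘ₗ f, g ∘ₗ ρ, fun x => by simp [hi, hgf]⟩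

theorem Good.pdlt (hG : Good J H) {n : ℕ} (hN : PDLT Q (Q ⧸ J) n) : PDLT Q H n := by
  obtain ⟨h, i, ρ, hi⟩ := hG
  exact PDLT.retract i ρ hi (PDLT.pi hN)

/-- A nonzero good module has a functional to `Q ⧸ J` with value `1`, and so has `Q ⧸ J` as a summand. -/
theorem Good.exists_functional [IsLocalRing Q] (hJ : J ≤ maximalIdeal Q) (hG : Good J H)
    (hH : Nontrivial H) : ∃ (χ : H →ₗ[Q] Q ⧸ J) (z : H), χ z = Submodule.Quotient.mk 1 := by
  obtain ⟨h, i, ρ, hi⟩ := hG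
  by_contra hcon
  push Not at hcon
  have h1 : ∀ x j, i x j ∈ maximalIdeal Q • (⊤ : Submodule Q (Q ⧸ J)) := by
    intro x j
    obtain ⟨q, hq⟩ := Submodule.Quotient.mk_surjective _ (i x j)
    by_cases hqm : q ∈ maximalIdeal Q
    · rw [← hq]
      have : (Submodule.Quotient.mk q : Q ⧸ J) = q • Submodule.Quotient.mk 1 := by
        rw [← Submodule.Quotient.mk_smul, smul_eq_mul, mul_one]
      rw [this]
      exact Submodule.smul_mem_smul hqm trivial
    · exfalso
      have hu : IsUnit q := by simpa using hqm
      obtain ⟨c, hc⟩ := hu.exists_left_inv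
      refine hcon (LinearMap.proj j ∘ₗ i) (c • x) ?_
      rw [map_smul, LinearMap.comp_apply, LinearMap.proj_apply, ← hq, ← Submodule.Quotient.mk_smul,
        smul_eq_mul, hc]
  haveI : Module.Finite Q H := Module.Finite.of_surjective ρ (fun x => ⟨i x, hi x⟩)
  have h2 : (⊤ : Submodule Q H) ≤ maximalIdeal Q • ⊤ := by
    intro x _
    rw [← hi x]
    have : i x = ∑ j, LinearMap.single Q (fun _ => Q ⧸ J) j (i x j) := by
      classical
      exact (Finset.univ_sum_single (i x)).symm
    rw [this, map_sum]
    refine Submodule.sum_mem _ fun j _ => ?_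
    have h3 := Submodule.mem_map_of_mem (f := ρ ∘ₗ LinearMap.single Q (fun _ => Q ⧸ J) j) (h1 x j)
    rw [Submodule.map_smul''] at h3
    exact smul_mono_right' _ le_top h3
  have := Submodule.eq_bot_of_le_smul_of_le_jacobson_bot (maximalIdeal Q) ⊤ Module.Finite.fg_top h2
    (IsLocalRing.maximalIdeal_le_jacobson ⊥)
  exact not_subsingleton H ((Submodule.subsingleton_iff Q).1 (subsingleton_of_bot_eq_top this.symm))

theorem range_le_ker {y : List Q} {r : ℕ} (hr : y.length = r) (n : ℕ) :
    LinearMap.range (d (M := Q) r (n + 1) y) ≤ LinearMap.ker (d (M := Q) r n y) := by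
  rintro _ ⟨u, rfl⟩
  exact d_d y hr u

theorem exact_HH {y : List Q} {r : ℕ} (hr : y.length = r) (n : ℕ) :
    Function.Exact (Submodule.inclusion (range_le_ker hr n))
      ((LinearMap.range (d (M := Q) r (n + 1) y)).submoduleOf
        (LinearMap.ker (d (M := Q) r n y))).mkQ := by
  intro x
  rw [Submodule.mkQ_apply, Submodule.Quotient.mk_eq_zero, Submodule.submoduleOf, Submodule.mem_comap]
  constructor
  · intro h; exact ⟨⟨x, h⟩, rfl⟩
  · rintro ⟨y, rfl⟩; exact y.2

/-- Let `J` be generated by `r` elements, let `Q ⧸ J` have projective dimension `p ≥ r`, and let the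
Koszul homology in positive degrees be good. Then this homology vanishes. Otherwise let `H` be the
nonzero homology module of highest degree: the boundaries in this degree have a short free
resolution by the exact part of the complex, and all cycles have projective dimension less than `p`, as
one sees by climbing up the complex. Hence `H` has projective dimension less than `p`, although `Q ⧸ J`
is a direct summand of it. -/
theorem HH_subsingleton [IsLocalRing Q] {y : List Q} {r p : ℕ} (hr : y.length = r)
    (hy : J = Ideal.span {x | x ∈ y}) (hJ : J ≤ maximalIdeal Q)
    (hN : PDLT Q (Q ⧸ J) (p + 1)) (hN' : ¬ PDLT Q (Q ⧸ J) p) (hrp : r ≤ p)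
    (hG : ∀ n, Good J (HH Q r n y)) (n : ℕ) : Subsingleton (HH Q r n y) := by
  rcases Nat.eq_zero_or_pos p with rfl | hp
  · obtain rfl : r = 0 := by omega
    haveI : Subsingleton (K 0 (n + 1) Q) := ⟨fun a b => by rw [K_eq_zero (by omega) a, K_eq_zero (by omega) b]⟩
    infer_instance
  obtain ⟨p, rfl⟩ : ∃ p', p = p' + 1 := ⟨p - 1, by omega⟩
  haveI : ∀ r n, Module.Projective Q (K r n Q) := fun r n => inferInstance
  have hK : ∀ n m, PDLT Q (K r n Q) (m + 1) := fun n m => PDLT.of_projective (by omega)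
  have hB : ∀ i, PDLT Q (LinearMap.range (d (M := Q) r i y)) (p + 1) ∧
      PDLT Q (LinearMap.ker (d (M := Q) r i y)) (p + 1) := by
    have step : ∀ i, PDLT Q (LinearMap.range (d (M := Q) r i y)) (p + 1) →
        PDLT Q (LinearMap.ker (d (M := Q) r i y)) (p + 1) := by
      intro i h
      rw [← LinearMap.ker_rangeRestrict]
      exact PDLT.left_ker (LinearMap.surjective_rangeRestrict _) (hK _ _) (h.mono (by omega))
    intro i
    induction i with
    | zero =>
      have : PDLT Q (LinearMap.range (d (M := Q) r 0 y)) (p + 1) := by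
        refine PDLT.left (f := Submodule.subtype _) (g := Submodule.mkQ J ∘ₗ valL r)
          Subtype.val_injective ?_ ?_ (hK 0 p) hN
        · intro x
          obtain ⟨q, rfl⟩ := Submodule.Quotient.mk_surjective _ x
          exact ⟨cst r q, rfl⟩
        · intro u
          rw [LinearMap.comp_apply, Submodule.mkQ_apply, Submodule.Quotient.mk_eq_zero]
          constructor
          · intro h
            rw [hy] at h
            obtain ⟨ζ, hζ⟩ := exists_one_form hr h
            exact ⟨⟨d r 0 y ζ, ζ, rfl⟩, K0_ext hζ⟩
          · rintro ⟨⟨_, v, rfl⟩, rfl⟩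
            rw [hy]
            exact val_d_mem y r hr v
      exact ⟨this, step 0 this⟩
    | succ i ih =>
      have : PDLT Q (LinearMap.range (d (M := Q) r (i + 1) y)) (p + 1) :=
        PDLT.left (Submodule.inclusion_injective _) (Submodule.mkQ_surjective _) (exact_HH hr i)
          ih.2 ((hG i).pdlt hN)
      exact ⟨this, step _ this⟩
  by_contra hcon
  have hfin : ∀ m, r ≤ m → Subsingleton (HH Q r m y) := by
    intro m hm
    haveI : Subsingleton (K r (m + 1) Q) := ⟨fun a b => by rw [K_eq_zero (by omega) a, K_eq_zero (by omega) b]⟩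
    infer_instance
  obtain ⟨t, ht, htop⟩ : ∃ t, ¬ Subsingleton (HH Q r t y) ∧ ∀ m, t < m → Subsingleton (HH Q r m y) := by
    classical
    have hne : ((Finset.range r).filter fun t => ¬ Subsingleton (HH Q r t y)).Nonempty := by
      refine ⟨n, Finset.mem_filter.2 ⟨Finset.mem_range.2 ?_, hcon⟩⟩
      by_contra hh
      exact hcon (hfin n (by omega))
    refine ⟨Finset.max' _ hne, (Finset.mem_filter.1 (Finset.max'_mem _ hne)).2, fun m hm => ?_⟩
    by_contra hh
    have hmr : m < r := by
      by_contra h'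
      exact hh (hfin m (by omega))
    have := Finset.le_max' ((Finset.range r).filter fun t => ¬ Subsingleton (HH Q r t y)) m
      (by rw [Finset.mem_filter]; exact ⟨Finset.mem_range.2 hmr, hh⟩)
    omega
  have hBtop : ∀ k j, j + k = r → t < j → PDLT Q (LinearMap.range (d (M := Q) r j y)) k := by
    intro k
    induction k with
    | zero =>
      intro j hj htj
      haveI : Subsingleton (K r (j + 1) Q) := ⟨fun a b => by rw [K_eq_zero (by omega) a, K_eq_zero (by omega) b]⟩
      haveI : Subsingleton (LinearMap.range (d (M := Q) r j y)) :=
        (LinearMap.surjective_rangeRestrict (d (M := Q) r j y)).subsingleton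
      exact PDLT.of_subsingleton _
    | succ k ih =>
      intro j hj htj
      have h1 := ih (j + 1) (by omega) (by omega)
      have h2 : LinearMap.ker (d (M := Q) r j y) = LinearMap.range (d (M := Q) r (j + 1) y) := by
        refine le_antisymm ?_ (range_le_ker hr j)
        haveI := htop j htj
        intro x hx
        have := (exact_HH hr j ⟨x, hx⟩).1 (Subsingleton.elim _ _)
        obtain ⟨w, hw⟩ := this
        have h3 := w.2
        rwa [show (w : K r (j + 1) Q) = x from Subtype.ext_iff.1 hw] at h3
      refine PDLT.right (f := (LinearMap.ker (d (M := Q) r j y)).subtype)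
        (g := (d (M := Q) r j y).rangeRestrict) Subtype.val_injective
        (LinearMap.surjective_rangeRestrict _) ?_ ?_ (hK _ _)
      · intro x
        rw [Subtype.ext_iff]
        simp
      · rw [h2]; exact h1
  have htr : t < r := by
    by_contra hh
    exact ht (hfin t (by omega))
  have hBt : PDLT Q (LinearMap.range (d (M := Q) r (t + 1) y)) p :=
    (hBtop (r - (t + 1)) (t + 1) (by omega) (by omega)).mono (by omega)
  have hHt : PDLT Q (HH Q r t y) (p + 1) :=
    PDLT.right (Submodule.inclusion_injective _) (Submodule.mkQ_surjective _) (exact_HH hr t)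
      hBt (hB t).2
  rw [not_subsingleton_iff_nontrivial] at ht
  obtain ⟨χ, z, hz⟩ := (hG t).exists_functional hJ ht
  have hzJ : ∀ q ∈ J, q • z = 0 := by
    intro q hq
    obtain ⟨h, i, ρ, hi⟩ := hG t
    rw [← hi z, ← map_smul]
    convert map_zero ρ
    funext j
    obtain ⟨c, hc⟩ := Submodule.Quotient.mk_surjective _ (i z j)
    rw [Pi.smul_apply, ← hc, ← Submodule.Quotient.mk_smul, Pi.zero_apply,
      Submodule.Quotient.mk_eq_zero]
    exact J.mul_mem_right _ hq
  refine hN' (PDLT.retract (Submodule.liftQ J (LinearMap.toSpanSingleton Q _ z) ?_) χ ?_ hHt)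
  · intro q hq
    exact hzJ q hq
  · intro x
    obtain ⟨q, rfl⟩ := Submodule.Quotient.mk_surjective _ x
    show χ (q • z) = _
    rw [map_smul, hz, ← Submodule.Quotient.mk_smul, smul_eq_mul, mul_one]
end
end CIDim

/-! ### Property `G` from finite projective dimension -/

namespace CIDim
universe u
section
variable {Q : Type u} [CommRing Q]

/-- The map on Koszul homology induced by a chain map. -/
noncomputable def HHmap {r r' : ℕ} {y y' : List Q} (f : ∀ n, K r n Q →ₗ[Q] K r' n Q)
    (hf : ∀ n u, d r' n y' (f (n + 1) u) = f n (d r n y u)) (n : ℕ) : HH Q r n y →ₗ[Q] HH Q r' n y' :=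
  Submodule.mapQ _ _
    ((f (n + 1)).restrict (p := LinearMap.ker (d (M := Q) r n y))
      (q := LinearMap.ker (d (M := Q) r' n y'))
      (fun u hu => by rw [LinearMap.mem_ker] at hu ⊢; rw [hf, hu, map_zero]))
    (by
      rintro ⟨_, hx⟩ ⟨w, rfl⟩
      exact ⟨f (n + 2) w, hf _ _⟩)

theorem HHmap_comp_eq {r r' : ℕ} {y y' : List Q} (f : ∀ n, K r n Q →ₗ[Q] K r' n Q)
    (hf : ∀ n u, d r' n y' (f (n + 1) u) = f n (d r n y u))
    (g : ∀ n, K r' n Q →ₗ[Q] K r n Q)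
    (hg : ∀ n u, d r n y (g (n + 1) u) = g n (d r' n y' u))
    (hgf : ∀ n u, g n (f n u) = u) (n : ℕ) (x : HH Q r n y) :
    HHmap g hg n (HHmap f hf n x) = x := by
  obtain ⟨⟨x, hx⟩, rfl⟩ := Submodule.Quotient.mk_surjective _ x
  simp only [HHmap, Submodule.mapQ_apply]
  congr 1
  exact Subtype.ext (hgf _ _)

theorem Good.of_KIso {J : Ideal Q} {r : ℕ} {y y' : List Q} (i : KIso r y y') {n : ℕ}
    (h : Good J (HH Q r n y)) : Good J (HH Q r n y') := by
  let e : ∀ n, K r n Q ≃ₗ[Q] K r n Q := fun n => LinearEquiv.ofBijective (i.e n) (i.bij n)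
  have hes : ∀ n u, d r n y ((e (n + 1)).symm u) = (e n).symm (d r n y' u) := by
    intro n u
    apply (e n).injective
    rw [LinearEquiv.apply_symm_apply]
    have := i.comm n ((e (n + 1)).symm u)
    refine this.symm.trans ?_
    congr 1
    exact (e (n + 1)).apply_symm_apply u
  exact h.retract (HHmap (fun n => (e n).symm.toLinearMap) hes n) (HHmap i.e i.comm n)
    (HHmap_comp_eq _ _ _ _ (fun n u => (e n).apply_symm_apply u) n)

/-- For a redundant element `a ∈ (t)`, the Koszul homology of `t` is a retract of that of `a :: t`. -/
theorem Good.of_cons {J : Ideal Q} {r : ℕ} {t : List Q} (hr : t.length = r) {a : Q}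
    (ha : a ∈ Ideal.span {x | x ∈ t}) {n : ℕ}
    (h : Good J (HH Q (r + 1) n (a :: t))) : Good J (HH Q r n t) := by
  obtain ⟨ρ, h1, h2⟩ := exists_retract Q t hr a ha
  have hinc : ∀ n (u : K r (n + 1) Q), d (r + 1) n (a :: t) (inc (M := Q) (A := Q) r (n + 1) u) =
      inc (M := Q) (A := Q) r n (d r n t u) := fun n u => d_inc a t u
  have hc := HHmap_comp_eq (y := t) (y' := a :: t) (inc r) hinc ρ h2 h1 n
  exact h.retract (HHmap (y := t) (y' := a :: t) (inc r) hinc n) (HHmap (y := a :: t) (y' := t) ρ h2 n) hc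

/-- If a chain `u` of degree one has a unit among its coefficients, the corresponding entry of `y` is
redundant modulo the boundary of `u`. -/
theorem exists_redundant [IsLocalRing Q] (y : List Q) : ∀ (r : ℕ) (hr : y.length = r) (u : K r 1 Q)
    (i : Idx r 1) (hi : IsUnit (u i)), ∃ (a : Q) (t : List Q), y.Perm (a :: t) ∧
      a ∈ Ideal.span {x | x ∈ t} ⊔ Ideal.span {val (d r 0 y u)} := by
  induction y with
  | nil =>
    rintro _ rfl u i hi
    exact (Idx.isEmpty_of_lt (r := 0) (n := 1) (by omega)).elim i
  | cons a t ih =>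
    intro r hr u i hi
    obtain ⟨r, rfl⟩ : ∃ r', r = r' + 1 := ⟨t.length, hr.symm⟩
    have ht : t.length = r := by simpa using hr
    obtain ⟨b, hb⟩ : ∃ b, b = val (d (r + 1) 0 (a :: t) u) := ⟨_, rfl⟩
    have hb' := hb
    rw [val_d_cons] at hb'
    rw [← hb]
    cases i with
    | skip i =>
      obtain ⟨a', t', hp, hmem⟩ := ih r ht (fst u) i hi
      refine ⟨a', a :: t', (hp.cons a).trans (List.Perm.swap _ _ _), ?_⟩
      refine (sup_le ?_ ?_ : _ ≤ Ideal.span {x | x ∈ a :: t'} ⊔ Ideal.span {b}) hmem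
      · exact le_sup_of_le_left (Ideal.span_mono fun x hx => List.mem_cons_of_mem _ hx)
      · rw [Ideal.span_singleton_le_iff_mem]
        have : val (d r 0 t (fst u)) = b - a • val (snd u) := by rw [hb']; ring
        rw [this]
        refine sub_mem (Ideal.mem_sup_right (Ideal.mem_span_singleton_self b))
          (Ideal.mem_sup_left (Ideal.mul_mem_right _ _ (Ideal.subset_span ?_)))
        exact List.mem_cons_self
    | take i =>
      cases i
      refine ⟨a, t, List.Perm.refl _, ?_⟩
      obtain ⟨c, hc⟩ := hi.exists_left_inv
      have h0 : val (snd u) = u (.take (.nil r)) := rfl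
      have : a = c * (b - val (d r 0 t (fst u))) := by
        rw [hb', h0, smul_eq_mul]
        linear_combination (-a) * hc
      rw [this]
      exact Ideal.mul_mem_left _ _ (sub_mem (Ideal.mem_sup_right (Ideal.mem_span_singleton_self b))
        (Ideal.mem_sup_left (val_d_mem t _ ht _)))

theorem d_mem (y : List Q) : ∀ (r n : ℕ) (hr : y.length = r) (u : K r (n + 1) Q) (i : Idx r n),
    d r n y u i ∈ Ideal.span {x | x ∈ y} := by
  induction y with
  | nil => rintro _ n rfl u i; simp
  | cons a t ih =>
    intro r n hr u i
    obtain ⟨r, rfl⟩ : ∃ r', r = r' + 1 := ⟨t.length, hr.symm⟩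
    have ht : t.length = r := by simpa using hr
    have hle : Ideal.span {x | x ∈ t} ≤ Ideal.span {x | x ∈ a :: t} :=
      Ideal.span_mono fun x hx => List.mem_cons_of_mem _ hx
    cases i with
    | nil => exact val_d_mem _ _ hr _
    | skip i =>
      have := congrFun (fst_d_cons a t u) i
      refine Eq.subst (motive := fun z => z ∈ _) this.symm ?_
      exact add_mem (hle (ih _ _ ht _ _)) (Ideal.mul_mem_right _ _ (Ideal.subset_span List.mem_cons_self))
    | take i =>
      rename_i m
      cases m with
      | zero =>
        cases i
        exact Submodule.neg_mem _ (hle (ih _ _ ht _ _))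
      | succ m =>
      have := congrFun (snd_d_cons a t u) i
      refine Eq.subst (motive := fun z => z ∈ _) this.symm ?_
      exact Submodule.neg_mem _ (hle (ih _ _ ht _ _))

theorem exists_list_Idx (r : ℕ) : ∃ l : List (Idx r 1), l.Nodup ∧ l.length = r := by
  induction r with
  | zero => exact ⟨[], List.nodup_nil, rfl⟩
  | succ r ih =>
    obtain ⟨l, h1, h2⟩ := ih
    refine ⟨.take (.nil r) :: l.map .skip, ?_, by simp [h2]⟩
    rw [List.nodup_cons]
    constructor
    · intro h
      obtain ⟨x, _, hx⟩ := List.mem_map.1 h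
      cases hx
    · exact h1.map (fun a b h => by cases h; rfl)

theorem exists_lift_of_ker_le {A B C : Type u} [AddCommGroup A] [Module Q A] [AddCommGroup B]
    [Module Q B] [AddCommGroup C] [Module Q C] (f : A →ₗ[Q] B) (hf : Function.Surjective f)
    (g : A →ₗ[Q] C) (h : LinearMap.ker f ≤ LinearMap.ker g) : ∃ k : B →ₗ[Q] C, ∀ a, k (f a) = g a := by
  refine ⟨(LinearMap.ker f).liftQ g h ∘ₗ (f.quotKerEquivOfSurjective hf).symm.toLinearMap, fun a => ?_⟩
  have : (f.quotKerEquivOfSurjective hf).symm (f a) = Submodule.Quotient.mk a := by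
    rw [LinearEquiv.symm_apply_eq]; rfl
  rw [LinearMap.comp_apply]
  erw [this]
  rfl

theorem mem_smul_top_of_forall {I : Ideal Q} {ι : Type} [Finite ι] (v : ι → Q) (hv : ∀ i, v i ∈ I) :
    v ∈ I • (⊤ : Submodule Q (ι → Q)) := by
  classical
  haveI := Fintype.ofFinite ι
  rw [pi_eq_sum_univ v]
  exact Submodule.sum_mem _ fun i _ => Submodule.smul_mem_smul (hv i) trivial

/-- If `Q ⧸ J` has finite projective dimension and the Koszul homology of the generators `y` of `J` is
good, then `y` has property `G`. Redundant generators can be left out. If there are none, then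
`H₁ = 0` by `infinite_pd`, so that `J ⧸ J²` is free of rank `r` and the projective dimension is at
least `r` by `conormal_bound`; thus the higher homology vanishes by `HH_subsingleton`. -/
theorem G_of_good [IsLocalRing Q] {J : Ideal Q} (hJ : J ≤ maximalIdeal Q)
    (hN : ∃ n, PDLT Q (Q ⧸ J) n) : ∀ (r : ℕ) (y : List Q) (hr : y.length = r)
    (hy : J = Ideal.span {x | x ∈ y}) (hG : ∀ n, Good J (HH Q r n y)), G r y := by
  intro r
  induction r with
  | zero =>
    intro y hr hy hG z hz
    rw [K_eq_zero (by omega) z]; exact zero_mem _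
  | succ r ih =>
  intro y hr hy hG
  by_cases hred : ∃ (a : Q) (t : List Q), y.Perm (a :: t) ∧ a ∈ Ideal.span {x | x ∈ t}
  · obtain ⟨a, t, hp, ha⟩ := hred
    have ht : t.length = r := by
      have := hp.length_eq; simp at this; omega
    obtain ⟨i⟩ := exists_KIso hp hr
    have h1 : J = Ideal.span {x | x ∈ t} := by
      rw [hy]
      apply le_antisymm
      · rw [Ideal.span_le]
        intro x hx
        rcases List.mem_cons.1 (hp.mem_iff.1 hx) with rfl | h
        · exact ha
        · exact Ideal.subset_span h
      · exact Ideal.span_mono fun x hx => hp.mem_iff.2 (List.mem_cons_of_mem _ hx)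
    have h2 := ih t ht h1 fun n => Good.of_cons ht ha ((hG n).of_KIso i)
    exact G_perm (by simp [ht]) hp.symm (G_cons ht ha h2)
  generalize hr1 : r + 1 = r' at *
  -- The generators are minimal, so cycles of degree one have coefficients in the maximal ideal.
  have hmin : ∀ z : K r' 1 Q, d r' 0 y z = 0 → ∀ i, z i ∈ maximalIdeal Q := by
    intro z hz i
    by_contra hu
    have hu : IsUnit (z i) := by simpa using hu
    obtain ⟨a, t, hp, ha⟩ := exists_redundant y r' hr z i hu
    rw [hz] at ha
    exact hred ⟨a, t, hp, by simpa using ha⟩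
  let δ : Module.Dual Q (K r' 1 Q) := valL r' ∘ₗ d r' 0 y
  have hδ0 : ∀ v, δ v = val (d r' 0 y v) := fun v => rfl
  have hδ : ∀ v, δ v ∈ J := fun v => hy ▸ val_d_mem y r' hr v
  have hsurj : ∀ q ∈ J, ∃ v, δ v = q := fun q hq => exists_one_form hr (hy ▸ hq)
  have hker : ∀ v, δ v = 0 → d r' 0 y v = 0 := fun v hv => K0_ext hv
  obtain ⟨n0, hn0⟩ := hN
  have hJtop : J ≠ ⊤ := fun h => (Ideal.IsPrime.ne_top (inferInstance : (maximalIdeal Q).IsPrime))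
    (top_le_iff.1 (h ▸ hJ))
  have hH0 : Subsingleton (HH Q r' 0 y) := by
    by_contra hcon
    rw [not_subsingleton_iff_nontrivial] at hcon
    obtain ⟨χ, z, hz⟩ := (hG 0).exists_functional hJ hcon
    obtain ⟨z, rfl⟩ := Submodule.Quotient.mk_surjective _ z
    have hle : LinearMap.ker δ ≤ LinearMap.ker (d (M := Q) r' 0 y) := fun v hv => hker v hv
    refine infinite_pd δ J hδ hsurj hJ (χ ∘ₗ Submodule.mkQ _ ∘ₗ Submodule.inclusion hle) ?_
      ⟨z, congrArg val z.2⟩ hz ?_ n0 hn0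
    · intro v w
      rw [LinearMap.comp_apply, LinearMap.comp_apply, Submodule.mkQ_apply]
      refine (congrArg χ ((Submodule.Quotient.mk_eq_zero _).2 ?_)).trans (map_zero _)
      exact ⟨wedge r' v w, d_wedge y hr v w⟩
    · exact mem_smul_top_of_forall _ (hmin z z.2)
  -- As `H₁ = 0`, cycles of degree one are boundaries and thus have coefficients in `J`; this makes the
  -- coordinates well defined as functionals on `J ⧸ J²`.
  have hZ1 : ∀ v : K r' 1 Q, δ v = 0 → ∀ i, v i ∈ J := by
    intro v hv i
    obtain ⟨⟨_, w, rfl⟩, hw⟩ := (exact_HH hr 0 ⟨v, hker v hv⟩).1 (Subsingleton.elim _ _)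
    have : d r' 1 y w = v := Subtype.ext_iff.1 hw
    rw [← this, hy]
    exact d_mem y r' 1 hr w i
  have hχ : ∀ i : Idx r' 1, ∃ χ : J →ₗ[Q] Q ⧸ J, ∀ v, χ ⟨δ v, hδ v⟩ = Submodule.Quotient.mk (v i) := by
    intro i
    refine exists_lift_of_ker_le (LinearMap.codRestrict J δ hδ) ?_
      (Submodule.mkQ J ∘ₗ LinearMap.proj i) ?_
    · rintro ⟨q, hq⟩
      obtain ⟨v, rfl⟩ := hsurj q hq
      exact ⟨v, rfl⟩
    · intro v hv
      rw [LinearMap.ker_codRestrict] at hv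
      rw [LinearMap.mem_ker, LinearMap.comp_apply, Submodule.mkQ_apply, Submodule.Quotient.mk_eq_zero]
      exact hZ1 v hv i
  choose χ hχ using hχ
  classical
  haveI := Fintype.ofFinite (Idx r' 1)
  have hnot : ¬ PDLT Q (Q ⧸ J) r' := by
    intro h
    obtain ⟨l, hl, hlen⟩ := exists_list_Idx r'
    rw [← hlen] at h
    refine conormal_bound δ J hδ hsurj (Pi.basisFun Q (Idx r' 1)) χ ?_ ?_ hJtop l hl h
    · intro i
      rw [hχ]; simp
    · intro i j hij
      rw [hχ]
      simp [Pi.single_eq_of_ne (Ne.symm hij)]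
  have hex : ∃ n, PDLT Q (Q ⧸ J) n := ⟨n0, hn0⟩
  have hlt : r' < Nat.find hex := by
    by_contra hh
    exact hnot ((Nat.find_spec hex).mono (by omega))
  obtain ⟨p, hp⟩ : ∃ p, Nat.find hex = p + 1 := ⟨Nat.find hex - 1, by omega⟩
  have hp1 := Nat.find_spec hex
  rw [hp] at hp1
  haveI := HH_subsingleton hr hy hJ hp1 (Nat.find_min hex (by omega)) (by omega) hG 1
  intro z hz
  refine Submodule.mem_sup_right ?_
  obtain ⟨⟨_, w, rfl⟩, hw⟩ := (exact_HH hr 1 ⟨z, hz⟩).1 (Subsingleton.elim _ _)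
  exact ⟨w, Subtype.ext_iff.1 hw⟩
end
end CIDim

/-! ### Flat base change of property `G` -/

namespace CIDim
section flat
variable {R : Type*} {R' : Type*} [CommRing R] [CommRing R'] [Algebra R R']

universe u

/-- Over a flat `R`-algebra the solutions of a linear system with coefficients in `R` are linear
combinations of solutions over `R`. -/
theorem flat_solutions [Module.Flat R R'] {ι κ : Type} [Finite ι] [Finite κ]
    (φ : (ι → R) →ₗ[R] (κ → R)) (ψ : (ι → R') →ₗ[R'] (κ → R'))
    (hφ : ∀ u : ι → R, ψ (algebraMap R R' ∘ u) = algebraMap R R' ∘ φ u) (v : ι → R')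
    (hv : ψ v = 0) :
    v ∈ Submodule.span R' {w | ∃ u : ι → R, φ u = 0 ∧ w = algebraMap R R' ∘ u} := by
  classical
  haveI := Fintype.ofFinite ι
  haveI := Fintype.ofFinite κ
  have hcomm : ∀ T : R' ⊗[R] (ι → R), TensorProduct.piScalarRight R R' R' κ (φ.lTensor R' T) =
      ψ (TensorProduct.piScalarRight R R' R' ι T) := by
    intro T
    induction T with
    | zero => simp
    | add a b ha hb => simp only [map_add, ha, hb]
    | tmul x f =>
      rw [LinearMap.lTensor_tmul, TensorProduct.piScalarRight_apply,
        TensorProduct.piScalarRight_apply, TensorProduct.piScalarRightHom_tmul,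
        TensorProduct.piScalarRightHom_tmul]
      have : (fun j => f j • x) = x • (algebraMap R R' ∘ f : ι → R') := by
        funext j; simp [Algebra.smul_def, mul_comm]
      rw [this, map_smul, hφ]
      funext j; simp [Algebra.smul_def, mul_comm]
  obtain ⟨T, rfl⟩ := (TensorProduct.piScalarRight R R' R' ι).surjective v
  rw [← hcomm, LinearEquiv.map_eq_zero_iff] at hv
  have hex := Module.Flat.lTensor_exact (R := R) R' (LinearMap.exact_subtype_ker_map φ)
  obtain ⟨t, rfl⟩ := (hex T).1 hv
  clear hv
  induction t with
  | zero => simp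
  | add a b ha hb => simp only [map_add]; exact add_mem ha hb
  | tmul x f =>
    rw [LinearMap.lTensor_tmul, TensorProduct.piScalarRight_apply,
      TensorProduct.piScalarRightHom_tmul]
    have : (fun j => (LinearMap.ker φ).subtype f j • x) =
        x • (algebraMap R R' ∘ (f : ι → R) : ι → R') := by
      funext j; simp [Algebra.smul_def, mul_comm]
    rw [this]
    exact Submodule.smul_mem _ _ (Submodule.subset_span ⟨f, f.2, rfl⟩)

/-- Minimal generating systems of finite modules over a local ring: the coefficients of any
relation lie in the maximal ideal. -/
theorem exists_min_generators (R : Type*) [CommRing R] [IsLocalRing R] (M : Type*) [AddCommGroup M]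
    [Module R M] [Module.Finite R M] : ∃ (h : ℕ) (z : Fin h → M), Submodule.span R (Set.range z) = ⊤ ∧
      ∀ c : Fin h → R, ∑ i, c i • z i = 0 → ∀ i, c i ∈ maximalIdeal R := by
  classical
  have hex : ∃ h, ∃ z : Fin h → M, Submodule.span R (Set.range z) = ⊤ := Module.Finite.exists_fin
  obtain ⟨z, hz⟩ := Nat.find_spec hex
  refine ⟨Nat.find hex, z, hz, fun c hc i => ?_⟩
  by_contra hi
  obtain ⟨b, hb⟩ := (show IsUnit (c i) by simpa using hi).exists_left_inv
  obtain ⟨h, hh⟩ : ∃ h, Nat.find hex = h + 1 := ⟨Nat.find hex - 1, by have := i.2; omega⟩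
  refine Nat.find_min hex (m := h) (by omega) ?_
  revert z c i
  rw [hh]
  intro z hz c hc i hi hb
  refine ⟨fun j => z (i.succAbove j), ?_⟩
  rw [← top_le_iff, ← hz, Submodule.span_le]
  rintro _ ⟨j, rfl⟩
  by_cases hj : j = i
  · subst hj
    rw [Fin.sum_univ_succAbove _ j] at hc
    have : z j = - b • ∑ k, c (j.succAbove k) • z (j.succAbove k) := by
      rw [eq_neg_of_add_eq_zero_right hc, neg_smul, smul_neg, neg_neg, smul_smul, hb, one_smul]
    rw [this]
    exact Submodule.smul_mem _ _ (Submodule.sum_mem _ fun k _ =>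
      Submodule.smul_mem _ _ (Submodule.subset_span ⟨k, rfl⟩))
  · obtain ⟨k, rfl⟩ := Fin.exists_succAbove_eq hj
    exact Submodule.subset_span ⟨k, rfl⟩

variable {r : ℕ} {x : List R}

theorem comp_d (n : ℕ) (u : K r (n + 1) R) (hr : x.length = r) :
    d r n (x.map (algebraMap R R')) (algebraMap R R' ∘ u : K r (n + 1) R') =
      algebraMap R R' ∘ d r n x u := by
  rw [d_map]
  exact d_comp _ (Algebra.linearMap R R') x r n hr u

/-- Over a flat extension, the Koszul cycles are spanned by the cycles over the base. -/
theorem flat_cycles [Module.Flat R R'] (hr : x.length = r) (n : ℕ) (v : K r (n + 1) R')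
    (hv : d r n (x.map (algebraMap R R')) v = 0) :
    v ∈ Submodule.span R' {w : K r (n + 1) R' | ∃ u : K r (n + 1) R, d r n x u = 0 ∧
      w = algebraMap R R' ∘ u} := by
  haveI := Idx.finite r (n + 1)
  haveI := Idx.finite r n
  exact flat_solutions (d r n x) (d r n (x.map (algebraMap R R'))) (fun u => comp_d n u hr) v hv

theorem comp_mem_G (hr : x.length = r) (u : K r 2 R)
    (hu : u ∈ cycleProducts r x ⊔ LinearMap.range (d (M := R) r 2 x)) :
    (algebraMap R R' ∘ u : K r 2 R') ∈ cycleProducts r (x.map (algebraMap R R')) ⊔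
      LinearMap.range (d (M := R') r 2 (x.map (algebraMap R R'))) := by
  let c : K r 2 R →ₗ[R] K r 2 R' := LinearMap.compLeft (Algebra.linearMap R R') _
  have : cycleProducts r x ⊔ LinearMap.range (d (M := R) r 2 x) ≤
      ((cycleProducts r (x.map (algebraMap R R')) ⊔
      LinearMap.range (d (M := R') r 2 (x.map (algebraMap R R')))).restrictScalars R).comap c := by
    apply sup_le
    · rw [cycleProducts, Submodule.span_le]
      rintro _ ⟨p, q, hp, hq, rfl⟩
      refine Submodule.mem_sup_left (Submodule.subset_span
        ⟨algebraMap R R' ∘ p, algebraMap R R' ∘ q, ?_, ?_, ?_⟩)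
      · rw [comp_d 0 p hr, hp]; funext i; simp
      · rw [comp_d 0 q hr, hq]; funext i; simp
      · exact wedge_algebraMap r p q
    · rintro _ ⟨w, rfl⟩
      exact Submodule.mem_sup_right ⟨algebraMap R R' ∘ w, comp_d 2 w hr⟩
  exact this hu

/-- Property `G` ascends along flat extensions. -/
theorem G_ascend [Module.Flat R R'] (hr : x.length = r) (h : G r x) :
    G r (x.map (algebraMap R R')) := by
  intro z hz
  have := flat_cycles hr 1 z hz
  refine (Submodule.span_le.2 ?_ : _ ≤ _) this
  rintro _ ⟨u, hu, rfl⟩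
  exact comp_mem_G hr u (h u hu)

/-- Faithfully flat descent of membership in a submodule of a free module. -/
theorem mem_of_flat_local [IsNoetherianRing R] [IsLocalRing R] [IsLocalRing R']
    [IsLocalHom (algebraMap R R')] [Module.Flat R R'] {κ : Type} [Finite κ]
    (N : Submodule R (κ → R)) (z : κ → R)
    (hz : (algebraMap R R' ∘ z : κ → R') ∈
      Submodule.span R' {w | ∃ u ∈ N, w = (algebraMap R R' ∘ u : κ → R')}) : z ∈ N := by
  classical
  obtain ⟨s, ν, hν⟩ := Submodule.fg_iff_exists_fin_generating_family.1 (IsNoetherian.noetherian N)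
  let φ : (Option (Fin s) → R) →ₗ[R] (κ → R) :=
    Fintype.linearCombination R (fun o : Option (Fin s) => o.elim z fun i => ν i)
  let ψ : (Option (Fin s) → R') →ₗ[R'] (κ → R') :=
    Fintype.linearCombination R' (fun o : Option (Fin s) => o.elim (algebraMap R R' ∘ z : κ → R')
      fun i => algebraMap R R' ∘ ν i)
  have hφψ : ∀ u : Option (Fin s) → R, ψ (algebraMap R R' ∘ u) = algebraMap R R' ∘ φ u := by
    intro u
    funext j
    simp [φ, ψ, Fintype.linearCombination_apply, Finset.sum_apply, Algebra.smul_def]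
  have h1 : (algebraMap R R' ∘ z : κ → R') ∈ Submodule.span R'
      (Set.range fun i => (algebraMap R R' ∘ ν i : κ → R')) := by
    refine (Submodule.span_le.2 ?_ : _ ≤ _) hz
    rintro _ ⟨u, hu, rfl⟩
    rw [← hν] at hu
    have : Submodule.span R (Set.range ν) ≤ ((Submodule.span R'
      (Set.range fun i => (algebraMap R R' ∘ ν i : κ → R'))).restrictScalars R).comap
        (LinearMap.compLeft (Algebra.linearMap R R') κ) := by
      rw [Submodule.span_le]
      rintro _ ⟨i, rfl⟩
      exact Submodule.subset_span ⟨i, rfl⟩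
    exact this hu
  obtain ⟨c, hc⟩ := (Submodule.mem_span_range_iff_exists_fun R').1 h1
  have h2 := flat_solutions φ ψ hφψ (fun o => o.elim 1 fun i => - c i) (by
    simp [ψ, Fintype.linearCombination_apply, hc])
  by_contra hzN
  have h3 : ∀ u : Option (Fin s) → R, φ u = 0 → u none ∈ maximalIdeal R := by
    intro u hu
    by_contra hi
    obtain ⟨b, hb⟩ := (show IsUnit (u none) by simpa using hi).exists_left_inv
    refine hzN ?_
    have hu' : u none • z + ∑ i, u (some i) • ν i = 0 := by
      simpa [φ, Fintype.linearCombination_apply] using hu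
    have : z = b • - ∑ i, u (some i) • ν i := by
      rw [← eq_neg_of_add_eq_zero_left hu', smul_smul, hb, one_smul]
    rw [this]
    refine N.smul_mem _ (N.neg_mem (N.sum_mem fun i _ => N.smul_mem _ ?_))
    rw [← hν]; exact Submodule.subset_span ⟨i, rfl⟩
  have h4 : Submodule.span R' {w | ∃ u, φ u = 0 ∧ w = algebraMap R R' ∘ u} ≤
      (Submodule.comap (LinearMap.proj (R := R') (φ := fun _ : Option (Fin s) => R') none) (maximalIdeal R')) := by
    rw [Submodule.span_le]
    rintro _ ⟨u, hu, rfl⟩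
    have := h3 u hu
    change algebraMap R R' (u none) ∈ maximalIdeal R'
    rw [mem_maximalIdeal, mem_nonunits_iff] at this ⊢
    rwa [isUnit_map_iff]
  exact (Ideal.ne_top_iff_one _).1 (inferInstance : (maximalIdeal R').IsPrime).ne_top (h4 h2)

/-- Property `G` descends along flat local extensions. -/
theorem G_of_flat_local [IsNoetherianRing R] [IsLocalRing R] [IsLocalRing R']
    [IsLocalHom (algebraMap R R')] [Module.Flat R R'] (hr : x.length = r)
    (h : G r (x.map (algebraMap R R'))) : G r x := by
  intro z hz
  haveI := Idx.finite r 2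
  refine mem_of_flat_local (R' := R') _ z ?_
  have h1 := h (algebraMap R R' ∘ z) (by rw [comp_d 1 z hr, hz]; funext i; simp)
  refine SetLike.le_def.1 (sup_le ?_ ?_) h1
  · rw [cycleProducts, Submodule.span_le]
    rintro _ ⟨p, q, hp, hq, rfl⟩
    have hp' := flat_cycles hr 0 p hp
    have hq' := flat_cycles hr 0 q hq
    clear hp hq
    refine Submodule.span_induction ?_ ?_ ?_ ?_ hp'
    · rintro _ ⟨p, hp, rfl⟩
      refine Submodule.span_induction ?_ ?_ ?_ ?_ hq'
      · rintro _ ⟨q, hq, rfl⟩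
        rw [← wedge_algebraMap]
        exact Submodule.subset_span ⟨_, Submodule.mem_sup_left (Submodule.subset_span
          ⟨p, q, hp, hq, rfl⟩), rfl⟩
      · simp
      · intro a b _ _ ha hb; rw [map_add]; exact add_mem ha hb
      · intro a b _ hb; rw [map_smul]; exact Submodule.smul_mem _ _ hb
    · simp
    · intro a b _ _ ha hb; rw [map_add, LinearMap.add_apply]; exact add_mem ha hb
    · intro a b _ hb; rw [map_smul, LinearMap.smul_apply]; exact Submodule.smul_mem _ _ hb
  · rintro _ ⟨w, rfl⟩
    -- every chain is a combination of chains defined over `R`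
    have hw : w ∈ Submodule.span R' {w' : K r 3 R' | ∃ u : K r 3 R, w' = algebraMap R R' ∘ u} := by
      classical
      haveI := Idx.finite r 3
      haveI := Fintype.ofFinite (Idx r 3)
      rw [pi_eq_sum_univ w]
      refine Submodule.sum_mem _ fun i _ => Submodule.smul_mem _ _ (Submodule.subset_span
        ⟨fun j => if i = j then 1 else 0, ?_⟩)
      funext j; simp
    refine Submodule.span_induction ?_ ?_ ?_ ?_ hw
    · rintro _ ⟨u, rfl⟩
      exact Submodule.subset_span ⟨_, Submodule.mem_sup_right ⟨u, rfl⟩, comp_d 2 u hr⟩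
    · simp
    · intro a b _ _ ha hb; rw [map_add]; exact add_mem ha hb
    · intro a b _ hb; rw [map_smul]; exact Submodule.smul_mem _ _ hb
end flat
end CIDim

/-! ### Koszul homology over a flat extension -/

namespace CIDim
universe u
section
variable {R : Type*} {R' : Type*} [CommRing R] [CommRing R'] [Algebra R R'] {r : ℕ} {x : List R}

theorem span_map_list : (Ideal.span {a | a ∈ x}).map (algebraMap R R') =
    Ideal.span {a | a ∈ x.map (algebraMap R R')} := by
  rw [Ideal.map_span]
  congr 1
  ext a
  simp

theorem quot_mk_sum {A M : Type*} [CommRing A] [AddCommGroup M] [Module A M] (P : Submodule A M)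
    {h : ℕ} (c : Fin h → A) (z : Fin h → M) : ∑ i, c i • (Submodule.Quotient.mk (z i) : M ⧸ P) =
      Submodule.Quotient.mk (∑ i, c i • z i) := by
  rw [← Submodule.mkQ_apply, map_sum]
  rfl

/-- A basis of the Koszul homology over `R` gives a description of the Koszul homology over a
flat extension `R'` as a free module over `R' ⧸ m R'`. -/
theorem exists_HH_basis [IsNoetherianRing R] [IsLocalRing R] [Module.Flat R R'] (hr : x.length = r)
    (hx : Ideal.span {a | a ∈ x} = maximalIdeal R) (n : ℕ) :
    ∃ (h : ℕ) (z : Fin h → K r (n + 1) R'),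
      (∀ i, d r n (x.map (algebraMap R R')) (z i) = 0) ∧
      (∀ v, d r n (x.map (algebraMap R R')) v = 0 → ∃ (c : Fin h → R') (w : K r (n + 2) R'),
        v = ∑ i, c i • z i + d r (n + 1) (x.map (algebraMap R R')) w) ∧
      (∀ (c : Fin h → R') (w : K r (n + 2) R'),
        ∑ i, c i • z i = d r (n + 1) (x.map (algebraMap R R')) w →
          ∀ i, c i ∈ (maximalIdeal R).map (algebraMap R R')) ∧
      (∀ a ∈ (maximalIdeal R).map (algebraMap R R'), ∀ i, ∃ w : K r (n + 2) R',
        a • z i = d r (n + 1) (x.map (algebraMap R R')) w) := by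
  classical
  haveI := Idx.finite r (n + 1)
  haveI := Idx.finite r (n + 2)
  haveI := Fintype.ofFinite (Idx r (n + 2))
  haveI : Module.Finite R (LinearMap.ker (d (M := R) r n x)) := inferInstance
  haveI : Module.Finite R (HH R r n x) := inferInstance
  obtain ⟨h, z', hz', hc'⟩ := exists_min_generators R (HH R r n x)
  choose z hz using fun i => Submodule.Quotient.mk_surjective _ (z' i)
  have hdz : ∀ i, d r n x (z i : K r (n + 1) R) = 0 := fun i => (z i).2
  have hd0 : ∀ i, d r n (x.map (algebraMap R R')) (algebraMap R R' ∘ (z i : K r (n + 1) R)) = 0 := by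
    intro i; rw [comp_d n _ hr, hdz]; funext j; simp
  refine ⟨h, fun i => algebraMap R R' ∘ (z i : K r (n + 1) R), hd0, ?_, ?_, ?_⟩
  · intro v hv
    have hv' := flat_cycles hr n v hv
    clear hv
    let P : Submodule R' (K r (n + 1) R') :=
      Submodule.span R' (Set.range fun i => (algebraMap R R' ∘ (z i : K r (n + 1) R) : K r (n+1) R'))
        ⊔ LinearMap.range (d (M := R') r (n + 1) (x.map (algebraMap R R')))
    have hP : v ∈ P := by
      refine (Submodule.span_le.2 ?_ : _ ≤ P) hv'
      rintro _ ⟨u, hu, rfl⟩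
      have h1 : (Submodule.Quotient.mk ⟨u, hu⟩ : HH R r n x) ∈ Submodule.span R (Set.range z') := by
        rw [hz']; trivial
      obtain ⟨c, hc⟩ := (Submodule.mem_span_range_iff_exists_fun R).1 h1
      have h2 : (Submodule.Quotient.mk (⟨u, hu⟩ - ∑ i, c i • z i) : HH R r n x) = 0 := by
        rw [Submodule.Quotient.mk_sub, ← hc, sub_eq_zero, ← quot_mk_sum]
        simp only [hz]
      rw [Submodule.Quotient.mk_eq_zero] at h2
      obtain ⟨w, hw⟩ := h2
      have h3 : u = ∑ i, c i • (z i : K r (n + 1) R) + d r (n + 1) x w := by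
        rw [hw]; simp
      have h4 : (algebraMap R R' ∘ u : K r (n + 1) R') = ∑ i, algebraMap R R' (c i) •
          (algebraMap R R' ∘ (z i : K r (n + 1) R) : K r (n + 1) R') +
          d r (n + 1) (x.map (algebraMap R R')) (algebraMap R R' ∘ w) := by
        rw [comp_d (n + 1) w hr, h3]
        funext j
        simp [Finset.sum_apply, Algebra.smul_def]
      change (algebraMap R R' ∘ u : K r (n + 1) R') ∈ P
      rw [h4]
      exact add_mem (Submodule.mem_sup_left (Submodule.sum_mem _ fun i _ =>
        Submodule.smul_mem _ _ (Submodule.subset_span ⟨i, rfl⟩))) (Submodule.mem_sup_right ⟨_, rfl⟩)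
    obtain ⟨a, ha, _, ⟨w, rfl⟩, rfl⟩ := Submodule.mem_sup.1 hP
    obtain ⟨c, rfl⟩ := (Submodule.mem_span_range_iff_exists_fun R').1 ha
    exact ⟨c, w, rfl⟩
  · intro c w hcw i
    let φ : (Fin h ⊕ Idx r (n + 2) → R) →ₗ[R] (Idx r (n + 1) → R) :=
      Fintype.linearCombination R (fun i => (z i : K r (n + 1) R)) ∘ₗ LinearMap.funLeft R R Sum.inl
        - d r (n + 1) x ∘ₗ LinearMap.funLeft R R Sum.inr
    let ψ : (Fin h ⊕ Idx r (n + 2) → R') →ₗ[R'] (Idx r (n + 1) → R') :=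
      Fintype.linearCombination R' (fun i => (algebraMap R R' ∘ (z i : K r (n + 1) R) : K r (n+1) R'))
        ∘ₗ LinearMap.funLeft R' R' Sum.inl
        - d r (n + 1) (x.map (algebraMap R R')) ∘ₗ LinearMap.funLeft R' R' Sum.inr
    have hφψ : ∀ u, ψ (algebraMap R R' ∘ u) = algebraMap R R' ∘ φ u := by
      intro u
      have h1 := comp_d (R' := R') (n + 1) (u ∘ Sum.inr : K r (n + 2) R) hr
      funext j
      have h2 := congrFun h1 j
      simp only [φ, ψ, LinearMap.sub_apply, LinearMap.comp_apply, Pi.sub_apply, Function.comp_apply,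
        map_sub, Fintype.linearCombination_apply, Finset.sum_apply, Pi.smul_apply, map_sum]
      congr 1
      exact Finset.sum_congr rfl fun i _ => by
        simp [LinearMap.funLeft]
    have h1 := flat_solutions φ ψ hφψ (Sum.elim c w) (by
      simp only [ψ, LinearMap.sub_apply, LinearMap.comp_apply, Fintype.linearCombination_apply]
      exact sub_eq_zero.2 hcw)
    have h2 : Submodule.span R' {w | ∃ u, φ u = 0 ∧ w = algebraMap R R' ∘ u} ≤
        Submodule.comap (LinearMap.proj (R := R') (φ := fun _ : Fin h ⊕ Idx r (n + 2) => R')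
          (Sum.inl i)) ((maximalIdeal R).map (algebraMap R R')) := by
      rw [Submodule.span_le]
      rintro _ ⟨u, hu, rfl⟩
      refine Ideal.mem_map_of_mem (algebraMap R R') (hc' (fun i => u (Sum.inl i)) ?_ i)
      have h3 : ∑ i, u (Sum.inl i) • (z i : K r (n + 1) R) = d r (n + 1) x (u ∘ Sum.inr) :=
        sub_eq_zero.1 hu
      have h4 : ∑ i, u (Sum.inl i) • z' i =
          (Submodule.Quotient.mk (∑ i, u (Sum.inl i) • z i) : HH R r n x) := by
        rw [← quot_mk_sum]
        simp only [hz]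
      rw [h4, Submodule.Quotient.mk_eq_zero]
      exact ⟨u ∘ Sum.inr, by rw [← h3]; simp⟩
    exact h2 h1
  · intro a ha i
    rw [← hx, span_map_list] at ha
    obtain ⟨H, -, hH⟩ := exists_homotopy R' (x.map (algebraMap R R')) (r := r) (by simpa) a ha
    refine ⟨H (n + 1) (algebraMap R R' ∘ (z i : K r (n + 1) R)), ?_⟩
    have := hH n (algebraMap R R' ∘ (z i : K r (n + 1) R))
    rw [hd0, map_zero, add_zero] at this
    exact this.symm
end

/-- The Koszul homology over `R'` of generators of `m_R` is free of finite rank over `R' ⧸ m_R R'`,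
as the Koszul homology over `R` is a vector space over the residue field. It is thus good over
`Q`. -/
theorem Good_flat {R : Type*} {R' Q : Type u} [CommRing R] [CommRing R'] [CommRing Q] [Algebra R R']
    [Algebra Q R'] [IsNoetherianRing R] [IsLocalRing R] [Module.Flat R R'] {r : ℕ} {x : List R}
    (hr : x.length = r) (hx : Ideal.span {a | a ∈ x} = maximalIdeal R)
    (hg : Function.Surjective (algebraMap Q R')) {y : List Q}
    (hy : y.map (algebraMap Q R') = x.map (algebraMap R R')) (n : ℕ) :
    Good (((maximalIdeal R).map (algebraMap R R')).comap (algebraMap Q R')) (HH (A := Q) R' r n y) := by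
  obtain ⟨h, z, h0, hS, hK, hK'⟩ := exists_HH_basis (R' := R') hr hx n
  rw [← hy] at h0 hS hK hK'
  simp only [d_map] at h0 hS hK hK'
  set J := ((maximalIdeal R).map (algebraMap R R')).comap (algebraMap Q R') with hJ
  let Φ : (Fin h → Q) →ₗ[Q] HH (A := Q) R' r n y :=
    Submodule.mkQ _ ∘ₗ Fintype.linearCombination Q
      (fun i => (⟨z i, h0 i⟩ : LinearMap.ker (d (A := Q) (M := R') r n y)))
  have hΦ : ∀ c, Φ c = 0 ↔ ∃ w, ∑ i, algebraMap Q R' (c i) • z i = d (A := Q) (M := R') r (n + 1) y w := by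
    intro c
    simp only [Φ, LinearMap.comp_apply, Submodule.mkQ_apply, Submodule.Quotient.mk_eq_zero,
      Fintype.linearCombination_apply]
    have : ((∑ i, c i • (⟨z i, h0 i⟩ : LinearMap.ker (d (A := Q) (M := R') r n y)) :
        LinearMap.ker (d (A := Q) (M := R') r n y)) : K r (n + 1) R') =
        ∑ i, algebraMap Q R' (c i) • z i := by
      rw [Submodule.coe_sum]
      exact Finset.sum_congr rfl fun i _ => by simp
    constructor
    · rintro ⟨w, hw⟩
      exact ⟨w, by rw [← this]; exact hw.symm⟩
    · rintro ⟨w, hw⟩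
      exact ⟨w, by rw [← hw]; exact this.symm⟩
  have hsurj : Function.Surjective Φ := by
    intro v
    obtain ⟨⟨v, hv⟩, rfl⟩ := Submodule.Quotient.mk_surjective _ v
    obtain ⟨c, w, hw⟩ := hS v hv
    choose c' hc' using fun i => hg (c i)
    refine ⟨c', ?_⟩
    rw [← sub_eq_zero]
    simp only [Φ, LinearMap.comp_apply, Submodule.mkQ_apply]
    rw [← Submodule.Quotient.mk_sub, Submodule.Quotient.mk_eq_zero]
    refine ⟨-w, ?_⟩
    rw [map_neg]
    simp only [Fintype.linearCombination_apply, Submodule.subtype_apply, Submodule.coe_sub,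
      Submodule.coe_sum, Submodule.coe_smul]
    rw [hw]
    have : ∑ i, c i • z i = ∑ i, c' i • z i := Finset.sum_congr rfl fun i _ => by rw [← hc']; simp
    rw [this]; abel
  have hker : LinearMap.ker Φ = Submodule.pi Set.univ (fun _ : Fin h => J) := by
    ext c
    rw [LinearMap.mem_ker, hΦ, Submodule.mem_pi]
    constructor
    · rintro ⟨w, hw⟩ i _
      exact hK _ w hw i
    · intro hc
      choose w hw using fun i => hK' _ (hc i trivial) i
      refine ⟨∑ i, w i, ?_⟩
      rw [map_sum]
      exact Finset.sum_congr rfl fun i _ => hw i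
  let e := (Submodule.quotEquivOfEq _ _ hker).symm ≪≫ₗ Φ.quotKerEquivOfSurjective hsurj
  let e' := Submodule.quotientPi (fun _ : Fin h => J)
  exact ⟨h, e'.toLinearMap ∘ₗ e.symm.toLinearMap, e.toLinearMap ∘ₗ e'.symm.toLinearMap, fun v => by simp⟩
end CIDim

/-! ### Property `G` from a quasi-deformation -/

namespace CIDim
universe u
section
variable {R : Type*} {R' Q : Type u} [CommRing R] [CommRing R'] [CommRing Q] [Algebra R R']
    [Algebra Q R'] [IsNoetherianRing R] [IsLocalRing R] [IsLocalRing R'] [IsLocalRing Q]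

/-- The preimage in `Q` of `m_R R'`. -/
abbrev idealJ (R R' Q : Type*) [CommRing R] [CommRing R'] [CommRing Q] [Algebra R R']
    [Algebra Q R'] [IsLocalRing R] : Ideal Q :=
  (((maximalIdeal R).map (algebraMap R R')).comap (algebraMap Q R') : Ideal Q)

/-- If `Q ⧸ J = R' ⊗ k` has finite projective dimension over `Q`, generators of `m_R` have property `G`.
The result `G_of_good` is applied to the generators `s ++ y` of `J`, where `s` is the regular sequence
and `y` lifts `x`. -/
theorem G_of_quasi [Module.Flat R R'] [IsLocalHom (algebraMap R R')] [IsLocalHom (algebraMap Q R')]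
    {r : ℕ} {x : List R}
    (hr : x.length = r) (hx : Ideal.span {a | a ∈ x} = maximalIdeal R)
    (hg : Function.Surjective (algebraMap Q R')) {s : List Q}
    (hs : RingTheory.Sequence.IsWeaklyRegular Q s)
    (hk : RingHom.ker (algebraMap Q R') = Ideal.ofList s)
    (hN : ∃ n, PDLT Q (Q ⧸ idealJ R R' Q) n) : G r x := by
  obtain ⟨y, hy⟩ : ∃ y : List Q, y.map (algebraMap Q R') = x.map (algebraMap R R') := by
    have := List.map_surjective_iff.2 hg
    exact this _
  have hyr : y.length = r := by
    have := congrArg List.length hy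
    simpa [hr] using this
  have hJm : idealJ R R' Q ≤ maximalIdeal Q := by
    have h0 : (maximalIdeal R').comap (algebraMap Q R') = maximalIdeal Q :=
      ((local_hom_TFAE (algebraMap Q R')).out 0 4).1 ‹_›
    rw [← h0]
    exact Ideal.comap_mono (((local_hom_TFAE (algebraMap R R')).out 0 2).1 ‹_›)
  have hJ : idealJ R R' Q = Ideal.span {a | a ∈ s ++ y} := by
    have h1 : (maximalIdeal R).map (algebraMap R R') =
        (Ideal.span {a | a ∈ y}).map (algebraMap Q R') := by
      rw [← hx, span_map_list, span_map_list, hy]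
    rw [idealJ, h1, Ideal.comap_map_of_surjective _ hg]
    have h2 : Ideal.comap (algebraMap Q R') ⊥ = RingHom.ker (algebraMap Q R') := rfl
    rw [h2, hk, Ideal.ofList, ← Ideal.span_union]
    congr 1
    ext a; simp [or_comm]
  have hlen : (s ++ y).length = r + s.length := by simp [hyr, add_comm]
  have hG := G_of_good hJm hN (r + s.length) (s ++ y) hlen hJ (fun n => by
    obtain ⟨e⟩ := exists_HH_equiv hg hs hk hyr n
    exact (Good_flat hr hx hg hy n).retract e.toLinearMap e.symm.toLinearMap (fun v => by simp))
  have h2 := G_descend hg hs hk hyr hG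
  rw [hy] at h2
  exact G_of_flat_local hr h2

/-- The module `R' ⊗ k` is `Q ⧸ J`. The `Q`-module structure enters through a variable `T`, as the one
in the definition of CI-dimension is not an instance. -/
theorem exists_equiv_idealJ (hg : Function.Surjective (algebraMap Q R'))
    {T : Type*} [AddCommGroup T] [Module Q T] (e : T ≃+ R' ⊗[R] ResidueField R)
    (hsm : ∀ (q : Q) (t : T), e (q • t) = algebraMap Q R' q • e t) :
    Nonempty ((Q ⧸ idealJ R R' Q) ≃ₗ[Q] T) := by
  let φ : Q →ₗ[Q] T := LinearMap.toSpanSingleton Q _ (e.symm (1 ⊗ₜ 1))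
  have hφ : ∀ q, e (φ q) = algebraMap Q R' q ⊗ₜ 1 := by
    intro q
    rw [LinearMap.toSpanSingleton_apply, hsm, e.apply_symm_apply, TensorProduct.smul_tmul', smul_eq_mul, mul_one]
  have hsurj : Function.Surjective φ := by
    intro t
    obtain ⟨t, rfl⟩ := e.symm.surjective t
    induction t with
    | zero => exact ⟨0, by simp⟩
    | add a b ha hb =>
      obtain ⟨a, ha⟩ := ha
      obtain ⟨b, hb⟩ := hb
      exact ⟨a + b, by rw [map_add, ha, hb, map_add]⟩
    | tmul a c =>
      obtain ⟨c, rfl⟩ := residue_surjective c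
      obtain ⟨q, hq⟩ := hg (c • a)
      refine ⟨q, ?_⟩
      rw [AddEquiv.eq_symm_apply, hφ, hq, TensorProduct.smul_tmul, Algebra.smul_def, mul_one]
      rfl
  have hker : LinearMap.ker φ = idealJ R R' Q := by
    ext q
    rw [LinearMap.mem_ker, ← e.map_eq_zero_iff, hφ, Ideal.mem_comap]
    have h1 : (algebraMap Q R' q ⊗ₜ[R] (1 : ResidueField R)) = 0 ↔
        TensorProduct.tensorQuotEquivQuotSMul R' (maximalIdeal R)
          (algebraMap Q R' q ⊗ₜ[R] (Ideal.Quotient.mk (maximalIdeal R) 1)) = 0 := by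
      rw [LinearEquiv.map_eq_zero_iff]; rfl
    rw [h1, TensorProduct.tensorQuotEquivQuotSMul_tmul_mk, one_smul, Submodule.Quotient.mk_eq_zero]
    have h2 := Ideal.smul_top_eq_map (R := R) (S := R') (maximalIdeal R)
    rw [h2]; rfl
  exact ⟨(Submodule.quotEquivOfEq _ _ hker).symm ≪≫ₗ φ.quotKerEquivOfSurjective hsurj⟩
end
end CIDim

/-! ### From property `G` to regular sequences -/

namespace CIDim
universe u
section
variable {S : Type*} [CommRing S]

/-- The module of trivial (Koszul) relations of a finite family. -/
def trivRel {n : ℕ} (a : Fin n → S) : Submodule S (Fin n → S) where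
  carrier := {c | ∃ W : Fin n → Fin n → S, (∀ i, W i i = 0) ∧ (∀ i j, W i j = - W j i) ∧
    ∀ i, c i = ∑ j, W i j * a j}
  zero_mem' := ⟨0, by simp, by simp, by simp⟩
  add_mem' := by
    rintro c c' ⟨W, h1, h2, h3⟩ ⟨W', h1', h2', h3'⟩
    refine ⟨W + W', ?_, ?_, ?_⟩
    · intro i; simp [h1, h1']
    · intro i j; simp only [Pi.add_apply]; rw [h2, h2' i j]; ring
    · intro i; simp only [Pi.add_apply, add_mul, Finset.sum_add_distrib, h3, h3']
  smul_mem' := by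
    rintro b c ⟨W, h1, h2, h3⟩
    refine ⟨b • W, ?_, ?_, ?_⟩
    · intro i; simp [h1]
    · intro i j; simp only [Pi.smul_apply, smul_eq_mul]; rw [h2]; ring
    · intro i; simp only [Pi.smul_apply, smul_eq_mul, mul_assoc, ← Finset.mul_sum, h3]

/-- The module of relations of a finite family. -/
def rel {n : ℕ} (a : Fin n → S) : Submodule S (Fin n → S) :=
  LinearMap.ker (Fintype.linearCombination S a)

theorem mem_rel {n : ℕ} {a : Fin n → S} {c : Fin n → S} : c ∈ rel a ↔ ∑ i, c i * a i = 0 := by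
  simp [rel, Fintype.linearCombination_apply]

/-- If all relations of a family in the maximal ideal are trivial, the same holds after leaving out the
last member, by the lemma of Nakayama. -/
theorem rigid [IsNoetherianRing S] [IsLocalRing S] {n : ℕ} (a : Fin (n + 1) → S)
    (ha : ∀ i, a i ∈ maximalIdeal S) (h : rel a ≤ trivRel a) :
    rel (fun i : Fin n => a i.castSucc) ≤ trivRel (fun i : Fin n => a i.castSucc) := by
  refine Submodule.le_of_le_smul_of_le_jacobson_bot (I := maximalIdeal S)
    (IsNoetherian.noetherian _) (IsLocalRing.maximalIdeal_le_jacobson _) ?_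
  intro c hc
  rw [mem_rel] at hc
  obtain ⟨W, h1, h2, h3⟩ := h (x := Fin.snoc c 0) (by
    rw [mem_rel, Fin.sum_univ_castSucc]; simpa using hc)
  have hlast := h3 (Fin.last n)
  rw [Fin.snoc_last, Fin.sum_univ_castSucc, h1, zero_mul, add_zero] at hlast
  have hc' : c = (fun i => ∑ j : Fin n, W i.castSucc j.castSucc * a j.castSucc) +
      a (Fin.last n) • (fun i : Fin n => W i.castSucc (Fin.last n)) := by
    funext i
    have := h3 i.castSucc
    rw [Fin.snoc_castSucc, Fin.sum_univ_castSucc] at this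
    rw [this]; simp [mul_comm]
  rw [hc']
  refine Submodule.add_mem_sup ⟨fun i j => W i.castSucc j.castSucc, fun i => h1 _, fun i j => h2 _ _,
    fun i => rfl⟩ (Submodule.smul_mem_smul (ha _) ?_)
  rw [mem_rel]
  have : ∑ i : Fin n, W i.castSucc (Fin.last n) * a i.castSucc =
      - ∑ i : Fin n, W (Fin.last n) i.castSucc * a i.castSucc := by
    rw [← Finset.sum_neg_distrib]
    exact Finset.sum_congr rfl fun i _ => by rw [h2]; ring
  rw [this, ← hlast, neg_zero]

/-- If all relations are trivial, the last member is a nonzerodivisor modulo the others. -/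
theorem last_regular {n : ℕ} (a : Fin (n + 1) → S) (h : rel a ≤ trivRel a) (u : S)
    (hu : a (Fin.last n) * u ∈ Ideal.span (Set.range fun i : Fin n => a i.castSucc)) :
    u ∈ Ideal.span (Set.range fun i : Fin n => a i.castSucc) := by
  obtain ⟨c, hc⟩ := (Submodule.mem_span_range_iff_exists_fun S).1 hu
  obtain ⟨W, h1, h2, h3⟩ := h (x := Fin.snoc (-c) u) (by
    rw [mem_rel, Fin.sum_univ_castSucc]
    simp only [Fin.snoc_castSucc, Fin.snoc_last, Pi.neg_apply, neg_mul, Finset.sum_neg_distrib]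
    simp only [smul_eq_mul] at hc
    rw [hc]; ring)
  have := h3 (Fin.last n)
  rw [Fin.snoc_last, Fin.sum_univ_castSucc, h1, zero_mul, add_zero] at this
  rw [this]
  exact Ideal.sum_mem _ fun i _ => Ideal.mul_mem_left _ _ (Ideal.subset_span ⟨i, rfl⟩)

/-- A family in the maximal ideal whose relations are all trivial is a regular sequence. -/
theorem weaklyRegular_of_rel [IsNoetherianRing S] [IsLocalRing S] {n : ℕ} (a : Fin n → S)
    (ha : ∀ i, a i ∈ maximalIdeal S) (h : rel a ≤ trivRel a) :
    RingTheory.Sequence.IsWeaklyRegular S (List.ofFn a) := by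
  induction n with
  | zero => simp
  | succ n ih =>
    rw [List.ofFn_succ', List.concat_eq_append, RingTheory.Sequence.isWeaklyRegular_append_iff]
    refine ⟨ih _ (fun i => ha _) (rigid a ha h), ?_⟩
    rw [RingTheory.Sequence.isWeaklyRegular_singleton_iff]
    have h0 : Ideal.ofList (List.ofFn fun i : Fin n => a i.castSucc) • (⊤ : Submodule S S) =
        Ideal.span (Set.range fun i : Fin n => a i.castSucc) := by
      rw [smul_eq_mul, Ideal.mul_top, Ideal.ofList]
      congr 1; ext x; simp
    rw [isSMulRegular_iff_right_eq_zero_of_smul]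
    intro u hu
    obtain ⟨u, rfl⟩ := Submodule.Quotient.mk_surjective _ u
    rw [← Submodule.Quotient.mk_smul, Submodule.Quotient.mk_eq_zero, h0] at hu
    rw [Submodule.Quotient.mk_eq_zero, h0]
    exact last_regular a h u hu

/-- Chains `ω` with `dω = ∑ aᵢ Eᵢ` where `(dEᵢ)` is a trivial relation of `a`. -/
def gdSub {n : ℕ} (a : Fin n → S) (r : ℕ) (x : List S) : Submodule S (K r 2 S) where
  carrier := {w | ∃ E : Fin n → K r 1 S, d r 1 x w = ∑ i, a i • E i ∧
    (fun i => val (d r 0 x (E i))) ∈ trivRel a}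
  zero_mem' := ⟨0, by simp, by
    convert (trivRel a).zero_mem using 1
    funext i; simp⟩
  add_mem' := by
    rintro w w' ⟨E, h1, h2⟩ ⟨E', h1', h2'⟩
    refine ⟨E + E', ?_, ?_⟩
    · rw [map_add, h1, h1', ← Finset.sum_add_distrib]; simp
    · convert (trivRel a).add_mem h2 h2' using 1
      funext i; simp
  smul_mem' := by
    rintro b w ⟨E, h1, h2⟩
    refine ⟨b • E, ?_, ?_⟩
    · rw [map_smul, h1, Finset.smul_sum]
      exact Finset.sum_congr rfl fun i _ => smul_comm _ _ _
    · convert (trivRel a).smul_mem b h2 using 1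
      funext i; simp

variable {B : Type*} [CommRing B] [Algebra S B]

/-- Over `B = S ⧸ (a)`, if the image of `w` is a boundary plus products of cycles, then `w ∈ gdSub`: for
a product of cycles, lift both factors `p` and `q` to `S`. Their boundaries `∑ uᵢ aᵢ` and
`∑ vᵢ aᵢ` lie in `(a)`, and `w = p q` gives `Eᵢ = uᵢ q - vᵢ p`. -/
theorem mem_gdSub (hB : Function.Surjective (algebraMap S B)) {n : ℕ} (a : Fin n → S)
    (ha : Ideal.span (Set.range a) = RingHom.ker (algebraMap S B)) {r : ℕ} {x : List S}
    (hr : x.length = r) (w : K r 2 S)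
    (hw : (algebraMap S B ∘ w : K r 2 B) ∈ cycleProducts r (x.map (algebraMap S B)) ⊔
      LinearMap.range (d (M := B) r 2 (x.map (algebraMap S B)))) : w ∈ gdSub a r x := by
  have hlift : ∀ {m : ℕ} (v : K r m B), ∃ v' : K r m S, algebraMap S B ∘ v' = v := by
    intro m v
    choose v' hv' using fun i => hB (v i)
    exact ⟨v', funext hv'⟩
  have hI : ∀ u : S, algebraMap S B u = 0 → ∃ c : Fin n → S, ∑ i, c i * a i = u := by
    intro u hu
    have : u ∈ Ideal.span (Set.range a) := by rw [ha]; exact hu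
    exact (Submodule.mem_span_range_iff_exists_fun S).1 this
  have hK : ∀ u : K r 2 S, (∀ e, algebraMap S B (u e) = 0) → u ∈ gdSub a r x := by
    intro u hu
    choose c hc using fun e => hI (u e) (hu e)
    have hu' : u = ∑ i, a i • (fun e => c e i : K r 2 S) := by
      funext e
      rw [← hc e]
      simp [Finset.sum_apply, mul_comm]
    refine ⟨fun i => d r 1 x (fun e => c e i), ?_, ?_⟩
    · conv_lhs => rw [hu']
      rw [map_sum]; simp only [map_smul]
    · convert (trivRel a).zero_mem using 1
      funext i
      rw [d_d x hr]; simp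
  have hC : ∀ α ∈ cycleProducts r (x.map (algebraMap S B)), ∃ α' ∈ gdSub a r x,
      (algebraMap S B ∘ α' : K r 2 B) = α := by
    intro α hα
    refine Submodule.span_induction ?_ ?_ ?_ ?_ hα
    · rintro _ ⟨p, q, hp, hq, rfl⟩
      obtain ⟨p, rfl⟩ := hlift p
      obtain ⟨q, rfl⟩ := hlift q
      rw [comp_d 0 _ hr] at hp hq
      obtain ⟨s, hs⟩ := hI _ (congrFun hp _ : algebraMap S B (val (d r 0 x p)) = 0)
      obtain ⟨t, ht⟩ := hI _ (congrFun hq _ : algebraMap S B (val (d r 0 x q)) = 0)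
      replace hs : ∑ i, s i * a i = val (d r 0 x p) := hs
      replace ht : ∑ i, t i * a i = val (d r 0 x q) := ht
      refine ⟨wedge r p q, ⟨fun i => s i • q - t i • p, ?_, ?_⟩, wedge_algebraMap r p q⟩
      · rw [d_wedge x hr, ← hs, ← ht, Finset.sum_smul, Finset.sum_smul, ← Finset.sum_sub_distrib]
        refine Finset.sum_congr rfl fun i _ => ?_
        rw [smul_sub, smul_smul, smul_smul, mul_comm (s i), mul_comm (t i)]
      · refine ⟨fun i j => s i * t j - t i * s j, fun i => by ring, fun i j => by ring, fun i => ?_⟩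
        have : val (d r 0 x (s i • q - t i • p)) = s i * val (d r 0 x q) - t i * val (d r 0 x p) := by
          rw [map_sub, map_smul, map_smul]; rfl
        simp only [this, ← hs, ← ht, sub_mul, Finset.sum_sub_distrib, Finset.mul_sum, mul_assoc]
    · exact ⟨0, zero_mem _, by funext i; simp⟩
    · rintro _ _ _ _ ⟨u, hu, rfl⟩ ⟨v, hv, rfl⟩
      exact ⟨u + v, add_mem hu hv, by funext i; simp⟩
    · rintro b _ _ ⟨u, hu, rfl⟩
      obtain ⟨b, rfl⟩ := hB b
      exact ⟨b • u, Submodule.smul_mem _ _ hu, by funext i; simp⟩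
  obtain ⟨α, hα, _, ⟨v, rfl⟩, hsum⟩ := Submodule.mem_sup.1 hw
  obtain ⟨α', hα', rfl⟩ := hC α hα
  obtain ⟨v, rfl⟩ := hlift v
  rw [comp_d 2 _ hr] at hsum
  have h1 : w = α' + d r 2 x v + (w - α' - d r 2 x v) := by abel
  rw [h1]
  refine add_mem (add_mem hα' ⟨0, ?_, ?_⟩) (hK _ fun e => ?_)
  · rw [d_d x hr]; simp
  · convert (trivRel a).zero_mem using 1
    funext i; simp
  · have := congrFun hsum e
    simp only [Pi.add_apply, Function.comp_apply, ← map_add] at this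
    rw [Pi.sub_apply, Pi.sub_apply, sub_sub, map_sub, sub_eq_zero]
    exact this.symm

/-- Let `a` generate the kernel of `S → B` minimally, let the maximal ideal of `S` be generated by `x`
with vanishing first Koszul homology, and let `x` have property `G` over `B`. Then all relations
`∑ cᵢ aᵢ = 0` are trivial. With `dγᵢ = cᵢ` and `dζᵢ = aᵢ`, the cycle `∑ cᵢ ζᵢ` is the boundary of
some `w`, and over `B` the chain `∑ γᵢ ζᵢ - w` is a cycle. By `G` it lies in `gdSub`, which shows that
`c` is trivial up to `m` times a relation; the lemma of Nakayama concludes. -/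
theorem rel_le_trivRel [IsNoetherianRing S] [IsLocalRing S]
    (hB : Function.Surjective (algebraMap S B)) {n : ℕ} (a : Fin n → S)
    (ha : Ideal.span (Set.range a) = RingHom.ker (algebraMap S B))
    (ham : ∀ i, a i ∈ maximalIdeal S)
    (hmin : ∀ c ∈ rel a, ∀ i, c i ∈ maximalIdeal S) {r : ℕ} {x : List S}
    (hr : x.length = r) (hx : Ideal.span {b | b ∈ x} = maximalIdeal S)
    (hH : ∀ p : K r 1 S, d r 0 x p = 0 → ∃ w, d r 1 x w = p)
    (hG : G r (x.map (algebraMap S B))) : rel a ≤ trivRel a := by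
  classical
  refine Submodule.le_of_le_smul_of_le_jacobson_bot (I := maximalIdeal S)
    (IsNoetherian.noetherian _) (IsLocalRing.maximalIdeal_le_jacobson _) ?_
  intro c hc
  have hone : ∀ b ∈ maximalIdeal S, ∃ ζ : K r 1 S, val (d r 0 x ζ) = b := fun b hb =>
    exists_one_form hr (hx ▸ hb)
  choose γ hγ using fun i => hone (c i) (hmin c hc i)
  choose ζ hζ using fun i => hone (a i) (ham i)
  rw [mem_rel] at hc
  obtain ⟨w, hw⟩ := hH (∑ i, c i • ζ i) (by
    apply K0_ext
    rw [map_sum]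
    have : ∀ z : Fin n → K r 0 S, val (∑ i, z i) = ∑ i, val (z i) := fun z =>
      map_sum (valL (A := S) (M := S) r) z Finset.univ
    rw [this]
    simp only [map_smul]
    rw [← hc.trans (show (0 : S) = val (0 : K r 0 S) from rfl)]
    exact Finset.sum_congr rfl fun i _ => by rw [← hζ i]; rfl)
  obtain ⟨E, hE1, W, hW1, hW2, hW3⟩ : (∑ i, wedge r (γ i) (ζ i) - w) ∈ gdSub a r x := by
    refine mem_gdSub hB a ha hr _ (hG _ ?_)
    rw [comp_d 1 _ hr, map_sub, map_sum, hw]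
    simp only [d_wedge x hr, hγ, hζ]
    rw [← Finset.sum_sub_distrib]
    funext e
    simp only [Function.comp_apply, Finset.sum_apply, map_sum]
    refine Finset.sum_eq_zero fun i _ => ?_
    have h0 : algebraMap S B (a i) = 0 := by
      have : a i ∈ RingHom.ker (algebraMap S B) := by rw [← ha]; exact Ideal.subset_span ⟨i, rfl⟩
      exact this
    simp [h0]
  have hC : ∑ i, a i • (γ i + E i) = 0 := by
    simp only [smul_add, Finset.sum_add_distrib]
    rw [← hE1, map_sub, map_sum, hw]
    simp only [d_wedge x hr, hγ, hζ, Finset.sum_sub_distrib]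
    abel
  have hc' : c = - (fun i => val (d r 0 x (E i))) + fun i => val (d r 0 x (γ i + E i)) := by
    funext i
    have : val (d r 0 x (γ i + E i)) = val (d r 0 x (γ i)) + val (d r 0 x (E i)) := by
      rw [map_add]; rfl
    rw [Pi.add_apply, Pi.neg_apply, this, hγ]; ring
  rw [hc']
  refine Submodule.add_mem_sup (neg_mem ⟨W, hW1, hW2, hW3⟩) ?_
  -- the coordinates of `γ + E` are relations of `a`, and `d` has coefficients in the maximal ideal
  haveI := Idx.finite r 1
  haveI := Fintype.ofFinite (Idx r 1)
  have hcoord : (fun i => val (d r 0 x (γ i + E i))) =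
      ∑ e : Idx r 1, val (d r 0 x (Pi.single e 1 : K r 1 S)) • (fun i => (γ i + E i) e) := by
    funext i
    have h1 := LinearMap.pi_apply_eq_sum_univ (valL (A := S) r ∘ₗ d r 0 x) (γ i + E i)
    refine Eq.trans h1 ?_
    rw [Finset.sum_apply]
    refine Finset.sum_congr rfl fun e _ => ?_
    rw [Pi.smul_apply, smul_eq_mul, smul_eq_mul, mul_comm]
    congr 2
    change val (d r 0 x _) = _
    congr 2
    funext j
    simp [Pi.single_apply, eq_comm]
  rw [hcoord]
  refine Submodule.sum_mem _ fun e _ => Submodule.smul_mem_smul ?_ ?_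
  · rw [← hx]; exact val_d_mem x r hr _
  · rw [mem_rel]
    have := congrFun hC e
    rw [Finset.sum_apply] at this
    rw [← this.trans (show (0 : K r 1 S) e = 0 from rfl)]
    exact Finset.sum_congr rfl fun i _ => by simp [mul_comm]
end
end CIDim

/-! ### Regular local rings -/

namespace CIDim
open scoped Pointwise
universe u

/-- Passing to the quotient by one element lowers the dimension by at most one. -/
theorem dim_le_quot {S : Type u} [CommRing S] [IsNoetherianRing S] [IsLocalRing S] {z : S}
    (hz : z ∈ maximalIdeal S) {n : ℕ} (hd : ((n + 1 : ℕ) : WithBot ℕ∞) ≤ ringKrullDim S) :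
    (n : WithBot ℕ∞) ≤ ringKrullDim (S ⧸ Ideal.span {z}) := by
  have h := ringKrullDim_le_ringKrullDim_quotSMulTop_succ hz
  have e : z • (⊤ : Ideal S) = Ideal.span {z} := by
    simp [← Submodule.ideal_span_singleton_smul]
  rw [e] at h
  have h2 := hd.trans h
  have : Nontrivial (S ⧸ Ideal.span {z}) := Ideal.Quotient.nontrivial_iff.2
    (fun ht => (maximalIdeal.isMaximal S).ne_top
      (top_le_iff.1 (ht ▸ (Ideal.span_singleton_le_iff_mem _).2 hz)))
  revert h2
  generalize ringKrullDim (S ⧸ Ideal.span {z}) = D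
  intro h2
  induction D with
  | bot => simp at h2
  | coe D =>
    have h3 : ((n + 1 : ℕ) : ℕ∞) ≤ D + 1 := by exact_mod_cast h2
    have h4 : (n : ℕ∞) ≤ D := by
      push_cast at h3
      exact (ENat.add_le_add_iff_right ENat.one_ne_top).1 h3
    exact_mod_cast h4

theorem local_quot {S : Type u} [CommRing S] [IsLocalRing S] {z : S}
    (hz : z ∈ maximalIdeal S) : IsLocalRing (S ⧸ Ideal.span {z}) := by
  have : Nontrivial (S ⧸ Ideal.span {z}) := Ideal.Quotient.nontrivial_iff.2
    (fun ht => (maximalIdeal.isMaximal S).ne_top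
      (top_le_iff.1 (ht ▸ (Ideal.span_singleton_le_iff_mem _).2 hz)))
  exact IsLocalRing.of_surjective' (Ideal.Quotient.mk _) Ideal.Quotient.mk_surjective

/-- A Noetherian local ring whose maximal ideal has `dim S` generators is a domain. -/
theorem isDomain_of_regular : ∀ (n : ℕ) (S : Type u) [CommRing S] [IsNoetherianRing S]
    [IsLocalRing S] (f : Fin n → S), Ideal.span (Set.range f) = maximalIdeal S →
    (n : WithBot ℕ∞) ≤ ringKrullDim S → IsDomain S := by
  intro n
  induction n with
  | zero =>
    intro S _ _ _ f hf _
    have : maximalIdeal S = ⊥ := by rw [← hf]; simp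
    exact (IsLocalRing.isField_iff_maximalIdeal_eq.2 this).isDomain
  | succ n ih =>
    intro S _ _ _ f hf hd
    have hpos : ∀ p ∈ minimalPrimes S, ¬ maximalIdeal S ≤ p := by
      intro p hp hle
      have hpp : p.IsPrime := hp.1.1
      have he : maximalIdeal S = p := le_antisymm hle (IsLocalRing.le_maximalIdeal hpp.ne_top)
      have h0 : (maximalIdeal S).height = 0 := by
        rw [Ideal.height_eq_zero_iff, he]; exact hp
      have h1 := maximalIdeal_height_eq_ringKrullDim (R := S)
      rw [h0] at h1
      rw [← h1] at hd
      have : ((n + 1 : ℕ) : ℕ∞) ≤ 0 := by exact_mod_cast hd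
      simp at this
    have hsq : ¬ maximalIdeal S ≤ maximalIdeal S * maximalIdeal S := by
      intro hle
      have hb : maximalIdeal S = ⊥ := by
        refine Submodule.eq_bot_of_le_smul_of_le_jacobson_bot (maximalIdeal S) _
          (IsNoetherian.noetherian _) (by simpa using hle) ?_
        exact IsLocalRing.maximalIdeal_le_jacobson _
      obtain ⟨p, hp, -⟩ := Ideal.exists_minimalPrimes_le (bot_le : (⊥ : Ideal S) ≤ maximalIdeal S)
      exact hpos p hp (by rw [hb]; exact bot_le)
    obtain ⟨z, hz, hz2, hzp⟩ : ∃ z ∈ maximalIdeal S, z ∉ maximalIdeal S * maximalIdeal S ∧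
        ∀ p ∈ minimalPrimes S, z ∉ p := by
      by_contra hcon
      push Not at hcon
      have hfin := Ideal.finite_minimalPrimes_of_isNoetherianRing S ⊥
      have := (Ideal.subset_union_prime (s := insert (maximalIdeal S * maximalIdeal S)
        hfin.toFinset) (f := id) (maximalIdeal S * maximalIdeal S)
        (maximalIdeal S * maximalIdeal S) (by
          intro i hi h1 _
          rcases Finset.mem_insert.1 hi with h | h
          · exact absurd h h1
          · exact ((Set.Finite.mem_toFinset _).1 h).1.1) (I := maximalIdeal S)).1 (by
          intro z hz
          by_cases h : z ∈ maximalIdeal S * maximalIdeal S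
          · exact Set.mem_biUnion (by simp) h
          · obtain ⟨p, hp, hzp⟩ := hcon z hz h
            exact Set.mem_biUnion (x := p) (by simp; right; exact hp) hzp)
      obtain ⟨p, hp, hle⟩ := this
      rcases Finset.mem_insert.1 hp with h | h
      · exact hsq (by rw [h] at hle; exact hle)
      · exact hpos p ((Set.Finite.mem_toFinset _).1 h) hle
    have hfm : ∀ i, f i ∈ maximalIdeal S := fun i => hf ▸ Ideal.subset_span ⟨i, rfl⟩
    obtain ⟨c, hc⟩ := Ideal.mem_span_range_iff_exists_fun.1 (hf.symm ▸ hz : z ∈ Ideal.span (Set.range f))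
    obtain ⟨i, hi⟩ : ∃ i, IsUnit (c i) := by
      by_contra hcon
      push Not at hcon
      exact hz2 (hc ▸ Ideal.sum_mem _ fun i _ => Ideal.mul_mem_mul (hcon i) (hfm i))
    have hloc := local_quot hz
    have hdq := dim_le_quot hz hd
    have hdom : IsDomain (S ⧸ Ideal.span {z}) := by
      refine ih _ (fun j => Ideal.Quotient.mk _ (f (i.succAbove j))) ?_ hdq
      rw [← IsLocalRing.map_maximalIdeal_of_surjective (Ideal.Quotient.mk (Ideal.span {z}))
        Ideal.Quotient.mk_surjective, ← hf, Ideal.map_span]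
      apply le_antisymm
      · refine Ideal.span_mono ?_
        rintro _ ⟨j, rfl⟩
        exact ⟨_, ⟨_, rfl⟩, rfl⟩
      · rw [Ideal.span_le]
        rintro _ ⟨_, ⟨j, rfl⟩, rfl⟩
        by_cases hj : j = i
        · subst hj
          obtain ⟨v, hv⟩ := hi.exists_left_inv
          have : Ideal.Quotient.mk (Ideal.span {z}) (f j) =
              - ∑ l : Fin n, Ideal.Quotient.mk (Ideal.span {z}) (v * c (j.succAbove l)) *
                Ideal.Quotient.mk (Ideal.span {z}) (f (j.succAbove l)) := by
            have hz0 : Ideal.Quotient.mk (Ideal.span {z}) (v * z) = 0 :=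
              Ideal.Quotient.eq_zero_iff_mem.2 (Ideal.mul_mem_left _ _ (Ideal.mem_span_singleton_self z))
            have hvz : v * z = f j + v * ∑ l : Fin n, c (j.succAbove l) * f (j.succAbove l) := by
              rw [← hc, Fin.sum_univ_succAbove _ j, mul_add, ← mul_assoc, hv, one_mul]
            rw [hvz, map_add] at hz0
            rw [eq_neg_of_add_eq_zero_left hz0, Finset.mul_sum, map_sum]
            simp [mul_assoc]
          rw [SetLike.mem_coe, this]
          refine neg_mem (Ideal.sum_mem _ fun l _ => Ideal.mul_mem_left _ _ (Ideal.subset_span ⟨l, rfl⟩))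
        · obtain ⟨l, rfl⟩ := Fin.exists_succAbove_eq hj
          exact Ideal.subset_span ⟨l, rfl⟩
    have hprime : (Ideal.span {z}).IsPrime := (Ideal.Quotient.isDomain_iff_prime _).1 hdom
    obtain ⟨p, hp, hple⟩ := Ideal.exists_minimalPrimes_le (bot_le : (⊥ : Ideal S) ≤ Ideal.span {z})
    have hpp : p.IsPrime := hp.1.1
    have hpb : p = ⊥ := by
      refine Submodule.eq_bot_of_le_smul_of_le_jacobson_bot (maximalIdeal S) _
          (IsNoetherian.noetherian _) ?_ (IsLocalRing.maximalIdeal_le_jacobson _)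
      intro x hx
      obtain ⟨y, rfl⟩ := Ideal.mem_span_singleton'.1 (hple hx)
      rw [mul_comm]
      exact Submodule.smul_mem_smul hz ((hpp.mem_or_mem hx).resolve_right (hzp p hp))
    rw [hpb] at hpp
    exact IsDomain.of_bot_isPrime S

/-- Minimal generators of the maximal ideal of a regular local ring form a regular sequence. -/
theorem weaklyRegular_of_regular : ∀ (n : ℕ) (S : Type u) [CommRing S] [IsNoetherianRing S]
    [IsLocalRing S] (x : List S), x.length = n → Ideal.ofList x = maximalIdeal S →
    (n : WithBot ℕ∞) ≤ ringKrullDim S → RingTheory.Sequence.IsWeaklyRegular S x := by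
  intro n
  induction n with
  | zero =>
    intro S _ _ _ x hl _ _
    rw [List.length_eq_zero_iff.1 hl]
    exact RingTheory.Sequence.IsWeaklyRegular.nil _ _
  | succ n ih =>
    intro S _ _ _ x hl hx hd
    have hdom : IsDomain S := by
      refine isDomain_of_regular (n + 1) S (fun i => x.get (i.cast hl.symm)) ?_ hd
      rw [← hx, Ideal.ofList]
      congr 1
      ext a
      simp only [Set.mem_range, Set.mem_setOf_eq, List.mem_iff_get]
      constructor
      · rintro ⟨i, rfl⟩; exact ⟨_, rfl⟩
      · rintro ⟨i, rfl⟩; exact ⟨i.cast hl, rfl⟩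
    obtain - | ⟨a, t⟩ := x
    · simp at hl
    have ham : a ∈ maximalIdeal S := hx ▸ Ideal.subset_span (by simp)
    have ht : t.length = n := by simpa using hl
    have hloc := local_quot ham
    rw [RingTheory.Sequence.isWeaklyRegular_cons_iff]
    have hq : RingTheory.Sequence.IsWeaklyRegular (S ⧸ Ideal.span {a}) (t.map (Ideal.Quotient.mk (Ideal.span {a}))) := by
      refine ih _ _ (by simpa using ht) ?_ (dim_le_quot ham hd)
      rw [← IsLocalRing.map_maximalIdeal_of_surjective (Ideal.Quotient.mk (Ideal.span {a}))
        Ideal.Quotient.mk_surjective, ← hx, Ideal.ofList_cons, Ideal.map_sup, Ideal.map_quotient_self, bot_sup_eq,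
        Ideal.map_ofList]
    constructor
    · have ha0 : a ≠ 0 := by
        rintro rfl
        have hf : Ideal.ofList t = maximalIdeal S := by rw [← hx]; simp
        have h1 := ringKrullDim_le_spanFinrank_maximalIdeal S
        have h2 : (maximalIdeal S).spanFinrank ≤ n := by
          classical
          rw [← hf, Ideal.ofList]
          have e : {r | r ∈ t} = (t.toFinset : Set S) := by ext; simp
          refine (Submodule.spanFinrank_span_le_ncard_of_finite (by rw [e]; exact Finset.finite_toSet _)).trans ?_
          rw [e, Set.ncard_coe_finset]
          exact (List.toFinset_card_le t).trans ht.le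
        have h3 := hd.trans h1
        have h4 : n + 1 ≤ (maximalIdeal S).spanFinrank := by exact_mod_cast h3
        omega
      exact IsSMulRegular.of_ne_zero ha0
    · have h2 := (RingTheory.Sequence.isWeaklyRegular_map_algebraMap_iff (S ⧸ Ideal.span {a}) (S ⧸ Ideal.span {a}) t).1 hq
      have e : (S ⧸ Ideal.span {a}) ≃ₗ[S] QuotSMulTop a S :=
        Submodule.quotEquivOfEq _ _ (by simp [← Submodule.ideal_span_singleton_smul])
      exact (e.isWeaklyRegular_congr t).1 h2
end CIDim

/-! ### Kernels of presentations by regular local rings -/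

namespace CIDim
universe u

/-- The Koszul complex of a weakly regular sequence is exact in positive degrees. -/
theorem koszul_exact {S : Type u} [CommRing S] {x : List S} {r : ℕ} (hr : x.length = r)
    (hx : RingTheory.Sequence.IsWeaklyRegular S x) (n : ℕ) (p : K r (n + 1) S) (hp : d r n x p = 0) :
    ∃ w, d r (n + 1) x w = p := by
  obtain ⟨e⟩ := exists_HH_equiv (Q := S) (R' := S ⧸ Ideal.ofList x) (x := []) (r := 0)
    Ideal.Quotient.mk_surjective hx Ideal.mk_ker rfl n
  have h0 : Subsingleton (K 0 (n + 1) (S ⧸ Ideal.ofList x)) :=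
    ⟨fun a b => by rw [K_eq_zero (by omega) a, K_eq_zero (by omega) b]⟩
  have h1 : Subsingleton (HH (A := S) S (0 + x.length) n (x ++ [])) := e.toEquiv.subsingleton
  rw [List.append_nil, Nat.zero_add, hr] at h1
  have h2 := (exact_HH hr n ⟨p, hp⟩).1 (Subsingleton.elim _ _)
  obtain ⟨⟨_, w, rfl⟩, hw⟩ := h2
  exact ⟨w, congrArg Subtype.val hw⟩

theorem span_list_ofFn {S : Type*} [CommRing S] {n : ℕ} (f : Fin n → S) :
    Ideal.span {a | a ∈ List.ofFn f} = Ideal.span (Set.range f) := by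
  congr 1; ext a; simp [List.mem_ofFn]

/-- Every element of the maximal ideal of `B` agrees modulo the square of that ideal with an element
coming from the maximal ideal of `R`. -/
theorem exists_approx {R B : Type*} [CommRing R] [CommRing B] [IsLocalRing R] [IsLocalRing B]
    [Algebra R B] (hmB : (maximalIdeal R).map (algebraMap R B) = maximalIdeal B)
    (hres : ∀ b : B, ∃ r : R, b - algebraMap R B r ∈ maximalIdeal B) (b : B)
    (hb : b ∈ maximalIdeal B) : ∃ r ∈ maximalIdeal R, b - algebraMap R B r ∈
      maximalIdeal B * maximalIdeal B := by
  rw [← hmB, Ideal.map] at hb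
  induction hb using Submodule.span_induction with
  | mem x h =>
    obtain ⟨r, hr, rfl⟩ := h
    exact ⟨r, hr, by simp⟩
  | zero => exact ⟨0, zero_mem _, by simp⟩
  | add x y _ _ hx hy =>
    obtain ⟨r, hr, h1⟩ := hx
    obtain ⟨s, hs, h2⟩ := hy
    refine ⟨r + s, add_mem hr hs, ?_⟩
    have := add_mem h1 h2
    rwa [sub_add_sub_comm, ← map_add] at this
  | smul c x _ hx =>
    obtain ⟨r, hr, h1⟩ := hx
    obtain ⟨t, ht⟩ := hres c
    refine ⟨t * r, Ideal.mul_mem_left _ _ hr, ?_⟩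
    have e : c • x - algebraMap R B (t * r) = c * (x - algebraMap R B r) +
        (c - algebraMap R B t) * algebraMap R B r := by rw [smul_eq_mul, map_mul]; ring
    rw [e]
    exact add_mem (Ideal.mul_mem_left _ _ h1) (Ideal.mul_mem_mul ht (hmB ▸ Ideal.mem_map_of_mem _ hr))

/-- Let `B` be a flat local extension of `R` with `m_R B = m_B` and the same residue field, such as the
completion. If generators of `m_R` have property `G`, the kernel of any presentation of `B` by a regular
local ring is generated by a regular sequence. -/
theorem exists_regular_of_G {R S B : Type u} [CommRing R] [CommRing S] [CommRing B]
    [IsLocalRing R] [IsLocalRing S] [IsLocalRing B] [IsNoetherianRing R] [IsNoetherianRing S]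
    [Algebra R B] [Algebra S B] [Module.Flat R B] [IsLocalHom (algebraMap R B)]
    (hmB : (maximalIdeal R).map (algebraMap R B) = maximalIdeal B)
    (hres : ∀ b : B, ∃ r : R, b - algebraMap R B r ∈ maximalIdeal B)
    (hS : Function.Surjective (algebraMap S B)) {n : ℕ} (f : Fin n → S)
    (hf : Ideal.span (Set.range f) = maximalIdeal S) (hd : (n : WithBot ℕ∞) ≤ ringKrullDim S)
    (hG : ∀ x : List R, Ideal.span {a | a ∈ x} = maximalIdeal R → G x.length x) :
    ∃ s : List S, Ideal.ofList s = RingHom.ker (algebraMap S B) ∧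
      RingTheory.Sequence.IsWeaklyRegular S s ∧ ∀ a ∈ s, a ∈ maximalIdeal S := by
  classical
  have hmS : (maximalIdeal S).map (algebraMap S B) = maximalIdeal B :=
    IsLocalRing.map_maximalIdeal_of_surjective _ hS
  have hfm : ∀ i, f i ∈ maximalIdeal S := fun i => hf ▸ Ideal.subset_span ⟨i, rfl⟩
  have h1 : ∀ i, ∃ (q : S) (r : R), q ∈ maximalIdeal S * maximalIdeal S ∧
      algebraMap S B (f i - q) = algebraMap R B r ∧ r ∈ maximalIdeal R := by
    intro i
    obtain ⟨r, hr, h⟩ := exists_approx hmB hres (algebraMap S B (f i))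
      (hmS ▸ Ideal.mem_map_of_mem _ (hfm i))
    rw [← hmS, ← Ideal.map_mul] at h
    obtain ⟨q, hq, hq'⟩ := (Ideal.mem_map_iff_of_surjective _ hS).1 h
    exact ⟨q, r, hq, by rw [map_sub, hq']; ring, hr⟩
  choose q r hq hqr hr using h1
  let x : Fin n → S := fun i => f i - q i
  have hmm : maximalIdeal S * maximalIdeal S ≤ maximalIdeal S := Ideal.mul_le_right
  have hx : Ideal.span (Set.range x) = maximalIdeal S := by
    apply le_antisymm
    · rw [Ideal.span_le]
      rintro _ ⟨i, rfl⟩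
      exact sub_mem (hfm i) (hmm (hq i))
    · refine Submodule.le_of_le_smul_of_le_jacobson_bot (I := maximalIdeal S)
        (IsNoetherian.noetherian _) (IsLocalRing.maximalIdeal_le_jacobson _) ?_
      conv_lhs => rw [← hf]
      refine Ideal.span_le.2 ?_
      rintro _ ⟨i, rfl⟩
      have : f i = x i + q i := by simp [x]
      rw [SetLike.mem_coe, this]
      exact Submodule.add_mem_sup (Ideal.subset_span ⟨i, rfl⟩) (by simpa using hq i)
  have hxr : ∀ i, algebraMap S B (x i) = algebraMap R B (r i) := hqr
  have hrm : Ideal.span (Set.range r) = maximalIdeal R := by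
    apply le_antisymm
    · rw [Ideal.span_le]
      rintro _ ⟨i, rfl⟩
      exact hr i
    · intro z hz
      let ev : (Unit → R) →ₗ[R] R := LinearMap.proj ()
      have := mem_of_flat_local (R := R) (R' := B) (κ := Unit)
        (Submodule.comap ev (Ideal.span (Set.range r))) (fun _ => z) ?_
      · exact this
      have hzB : algebraMap R B z ∈ Ideal.span (Set.range fun i => algebraMap R B (r i)) := by
        have e : Ideal.span (Set.range fun i => algebraMap R B (r i)) = maximalIdeal B := by
          rw [← hmS, ← hx, Ideal.map_span]
          congr 1
          ext b; constructor
          · rintro ⟨i, rfl⟩; exact ⟨_, ⟨i, rfl⟩, hxr i⟩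
          · rintro ⟨_, ⟨i, rfl⟩, rfl⟩; exact ⟨i, (hxr i).symm⟩
        rw [e, ← hmB]
        exact Ideal.mem_map_of_mem _ hz
      obtain ⟨c, hc⟩ := Ideal.mem_span_range_iff_exists_fun.1 hzB
      have e : (algebraMap R B ∘ (fun _ => z) : Unit → B) =
          ∑ i, c i • (algebraMap R B ∘ (fun _ => r i) : Unit → B) := by
        funext j
        simp [← hc]
      rw [e]
      refine Submodule.sum_mem _ fun i _ => Submodule.smul_mem _ _ (Submodule.subset_span ?_)
      exact ⟨fun _ => r i, (Ideal.subset_span ⟨i, rfl⟩ : r i ∈ Ideal.span (Set.range r)), rfl⟩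
  have hmap : (List.ofFn x).map (algebraMap S B) = (List.ofFn r).map (algebraMap R B) := by
    rw [List.map_ofFn, List.map_ofFn]
    congr 1
    funext i
    exact hxr i
  have hwr : RingTheory.Sequence.IsWeaklyRegular S (List.ofFn x) :=
    weaklyRegular_of_regular n S _ (by simp) (by rw [Ideal.ofList, span_list_ofFn, hx]) hd
  obtain ⟨m, a, ha, hmin⟩ := exists_min_generators S (RingHom.ker (algebraMap S B))
  have haI : Ideal.span (Set.range fun i => (a i : S)) = RingHom.ker (algebraMap S B) := by
    have := congrArg (Submodule.map (Submodule.subtype _)) ha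
    rw [Submodule.map_span, Submodule.map_top, Submodule.range_subtype, ← Set.range_comp] at this
    exact this
  have ham : ∀ i, (a i : S) ∈ maximalIdeal S := fun i =>
    IsLocalRing.le_maximalIdeal (RingHom.ker_ne_top _) (a i).2
  refine ⟨List.ofFn fun i => (a i : S), ?_, ?_, ?_⟩
  · rw [Ideal.ofList, span_list_ofFn, haI]
  · refine weaklyRegular_of_rel _ ham (rel_le_trivRel hS _ haI ham ?_ (r := n) (x := List.ofFn x)
      (by simp) ?_ ?_ ?_)
    · intro c hc
      refine hmin c (Subtype.ext ?_)
      have := mem_rel.1 hc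
      simpa using this
    · rw [span_list_ofFn, hx]
    · intro p hp
      exact koszul_exact (by simp) hwr 0 p hp
    · rw [hmap]
      have := hG (List.ofFn r) (by rw [span_list_ofFn, hrm])
      rw [List.length_ofFn] at this
      exact G_ascend (by simp) this
  · intro b hb
    obtain ⟨i, rfl⟩ := List.mem_ofFn.1 hb
    exact ham i
end CIDim

/-! ### Projective resolutions of finite length -/

namespace CIDim
section
variable {Q : Type} [CommRing Q]

theorem exact_of_sc {A B C : ModuleCat.{0} Q} {f : A ⟶ B} {g : B ⟶ C} {w : f ≫ g = 0}
    (h : (ShortComplex.mk f g w).Exact) : Function.Exact f.hom g.hom :=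
  (ShortComplex.ShortExact.moduleCat_exact_iff_function_exact _).1 h

/-- The cokernels of the differentials of a finite projective resolution have finite projective
dimension. -/
theorem pdlt_coker {M : ModuleCat.{0} Q} (P : ProjectiveResolution M) (n : ℕ)
    (hP : ∀ i : ℕ, n < i → Limits.IsZero (P.complex.X i)) (k : ℕ) : ∀ i, i + k = n + 1 →
    PDLT Q (P.complex.X i ⧸ LinearMap.range (P.complex.d (i + 1) i).hom) k := by
  induction k with
  | zero =>
    intro i hi
    have := ModuleCat.isZero_iff_subsingleton.1 (hP i (by omega))
    exact PDLT.of_subsingleton 0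
  | succ k ih =>
    intro i hi
    have hex := exact_of_sc (P.exact_succ i)
    have hz : LinearMap.range (P.complex.d (i + 1 + 1) (i + 1)).hom ≤
        LinearMap.ker (P.complex.d (i + 1) i).hom := by
      rw [LinearMap.exact_iff.1 hex]
    let f := (LinearMap.range (P.complex.d (i + 1 + 1) (i + 1)).hom).liftQ
      (P.complex.d (i + 1) i).hom hz
    have hproj : PDLT Q (P.complex.X i) (k + 1) := by
      have := (IsProjective.iff_projective (R := Q) (P.complex.X i)).2 (P.projective i)
      exact PDLT.of_projective (by omega)
    refine PDLT.right (f := f) (g := Submodule.mkQ _) ?_ (Submodule.mkQ_surjective _) ?_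
      (ih (i + 1) (by omega)) hproj
    · rw [← LinearMap.ker_eq_bot, Submodule.ker_liftQ_eq_bot]
      rw [LinearMap.exact_iff.1 hex]
    · rw [LinearMap.exact_iff, Submodule.ker_mkQ, Submodule.range_liftQ]

/-- A module with a projective resolution of length at most `n` has projective dimension less than
`n + 1` in the sense of the vanishing of `Ext`. -/
theorem pdlt_of_hasProjDimLE {M : Type} [AddCommGroup M] [Module Q M] {n : ℕ}
    (h : HasProjDimLE Q (ModuleCat.of Q M) n) : PDLT Q M (n + 1) := by
  obtain ⟨P, hP⟩ := h
  have h1 := pdlt_coker P n hP (n + 1) 0 (by omega)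
  have h2 := exact_of_sc P.exact₀
  have h3 : Function.Surjective (P.π.f 0).hom := (ModuleCat.epi_iff_surjective _).1 inferInstance
  have e : (P.complex.X 0 ⧸ LinearMap.range (P.complex.d (0 + 1) 0).hom) ≃ₗ[Q] M :=
    (Submodule.quotEquivOfEq _ _ (LinearMap.exact_iff.1 h2).symm).trans
      (LinearMap.quotKerEquivOfSurjective (P.π.f 0).hom h3)
  exact h1.of_equiv e
end

section
variable {C : Type*} [Category* C] [Abelian C]

/-- Splicing a short exact sequence with projective middle term and a projective resolution of the
kernel. -/
noncomputable def splice (S : ShortComplex C) (hS : S.ShortExact) (h2 : Projective S.X₂)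
    (K : ChainComplex C ℕ) (hK : ∀ n, Projective (K.X n)) (ε : K.X 0 ⟶ S.X₁) (hε : Epi ε)
    (w0 : K.d 1 0 ≫ ε = 0) (hex : (ShortComplex.mk _ _ w0).Exact)
    (hexs : ∀ n, (ShortComplex.mk _ _ (K.d_comp_d (n + 2) (n + 1) n)).Exact) :
    ProjectiveResolution S.X₃ :=
  have w : K.d 1 0 ≫ (ε ≫ S.f) = 0 := by
    rw [← Category.assoc, w0, Limits.zero_comp]
  have w' : (ε ≫ S.f) ≫ S.g = 0 := by rw [Category.assoc, S.zero, Limits.comp_zero]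
  have hm := hS.mono_f
  have he := hS.epi_g
  { complex := ChainComplex.augment K (ε ≫ S.f) w
    projective := fun n => match n with
      | 0 => h2
      | n + 1 => hK n
    π := (ChainComplex.toSingle₀Equiv _ _).symm ⟨S.g, w'⟩
    quasiIso := ⟨fun n => by
      match n with
      | 0 =>
        rw [ChainComplex.quasiIsoAt₀_iff, ShortComplex.quasiIso_iff_of_zeros']
        · dsimp
          refine (ShortComplex.exact_and_epi_g_iff_of_iso ?_).2
            (⟨?_, he⟩ : (ShortComplex.mk (ε ≫ S.f) S.g w').Exact ∧ Epi S.g)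
          · refine ShortComplex.isoMk (Iso.refl _) (Iso.refl _) (Iso.refl _) ?_ ?_
            · exact (Category.id_comp (ε ≫ S.f)).trans (Category.comp_id (ε ≫ S.f)).symm
            · refine (Category.id_comp S.g).trans ((Category.comp_id S.g).symm.trans ?_)
              congr 1
              exact (ChainComplex.toSingle₀Equiv_symm_apply_f_zero
                (C := ChainComplex.augment K (ε ≫ S.f) w) S.g w').symm
          · let φ : ShortComplex.mk (ε ≫ S.f) S.g w' ⟶ S :=
              { τ₁ := ε, τ₂ := 𝟙 _, τ₃ := 𝟙 _ }
            have h1 : Epi φ.τ₁ := hε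
            have h2 : IsIso φ.τ₂ := inferInstanceAs (IsIso (𝟙 _))
            have h3 : Mono φ.τ₃ := inferInstanceAs (Mono (𝟙 _))
            exact (ShortComplex.exact_iff_of_epi_of_isIso_of_mono φ).2 hS.exact
        all_goals rfl
      | 1 =>
        rw [quasiIsoAt_iff_exactAt']
        · rw [HomologicalComplex.exactAt_iff' _ 2 1 0 (by simp) (by simp)]
          let φ : ShortComplex.mk _ _ w0 ⟶ ShortComplex.mk (K.d 1 0) (ε ≫ S.f) w :=
              { τ₁ := 𝟙 _, τ₂ := 𝟙 _, τ₃ := S.f }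
          have h1 : Epi φ.τ₁ := inferInstanceAs (Epi (𝟙 _))
          have h2 : IsIso φ.τ₂ := inferInstanceAs (IsIso (𝟙 _))
          have h3 : Mono φ.τ₃ := hm
          exact (ShortComplex.exact_iff_of_epi_of_isIso_of_mono φ).1 hex
        · apply ChainComplex.exactAt_succ_single_obj
      | n + 2 =>
        rw [quasiIsoAt_iff_exactAt']
        · rw [HomologicalComplex.exactAt_iff' _ (n + 3) (n + 2) (n + 1) (by simp) (by simp)]
          exact hexs n
        · apply ChainComplex.exactAt_succ_single_obj⟩ }
end

/-- A module whose projective dimension, defined by the vanishing of `Ext`, is less than `n + 1` has a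
projective resolution of length at most `n`. -/
theorem hasProjDimLE_of_pdlt {Q : Type} [CommRing Q] (n : ℕ) : ∀ (M : ModuleCat.{0} Q),
    HasProjectiveDimensionLT M (n + 1) → HasProjDimLE Q M n := by
  induction n with
  | zero =>
    intro M hM
    have : Projective M := projective_iff_hasProjectiveDimensionLT_one.2 hM
    refine ⟨ProjectiveResolution.self M, fun i hi => ?_⟩
    exact HomologicalComplex.isZero_single_obj_X _ _ _ _ (by omega)
  | succ n ih =>
    intro M hM
    let S : ShortComplex (ModuleCat.{0} Q) := ShortComplex.mk (Limits.kernel.ι (Projective.π M)) (Projective.π M)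
      (Limits.kernel.condition _)
    have hS : S.ShortExact := { exact := ShortComplex.exact_kernel _ }
    have hp : Projective S.X₂ := inferInstanceAs (Projective (Projective.over M))
    have h1 : HasProjectiveDimensionLT S.X₁ (n + 1) :=
      hS.hasProjectiveDimensionLT_X₁ (n + 1) (hasProjectiveDimensionLT_of_ge _ 1 _ (by omega)) hM
    obtain ⟨P, hP⟩ := ih _ h1
    have hε : Epi (P.π.f 0) := inferInstance
    refine ⟨splice S hS hp P.complex P.projective (P.π.f 0) hε P.complex_d_comp_π_f_zero P.exact₀
      P.exact_succ, fun i hi => ?_⟩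
    obtain ⟨j, rfl⟩ : ∃ j, i = j + 1 := ⟨i - 1, by omega⟩
    exact hP j (by omega)
end CIDim

/-! ### Sections of square-zero extensions in characteristic `p` -/

namespace CIDim
section
variable {A k : Type*} [CommRing A] [Field k] (p : ℕ) [Fact p.Prime]

/-- A field `B` inside `A` mapping injectively to `k` and containing all `p`-th powers can be enlarged
by any element of `A`, as `X ^ p - x ^ p` is irreducible over `B`. -/
theorem adjoin_inj [CharP k p] [CharP A p] (q : A →+* k) (B : Subring A)
    (hB : ∀ b ∈ B, q b = 0 → b = 0) (hpow : ∀ a : A, a ^ p ∈ B) (hF : IsField B) (x : A)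
    (hx : ∀ b ∈ B, q b ≠ q x) :
    ∀ y ∈ (Algebra.adjoin B {x}).toSubring, q y = 0 → y = 0 := by
  letI : Field B := hF.toField
  letI : Algebra B k := (q.comp B.subtype).toAlgebra
  intro y hy hqy
  rw [Subalgebra.mem_toSubring, Algebra.adjoin_singleton_eq_range_aeval] at hy
  obtain ⟨f, rfl⟩ := hy
  let c : B := ⟨x ^ p, hpow x⟩
  have hirr : Irreducible (Polynomial.X ^ p - Polynomial.C c) := by
    refine X_pow_sub_C_irreducible_of_prime Fact.out fun b hb => hx b b.2 ?_
    have h1 : (q b) ^ p = (q x) ^ p := by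
      rw [← map_pow, ← map_pow]
      exact congrArg q (congrArg Subtype.val hb)
    exact frobenius_inj k p h1
  have hm : minpoly B (q x) = Polynomial.X ^ p - Polynomial.C c := by
    symm
    refine minpoly.eq_of_irreducible_of_monic hirr ?_ (Polynomial.monic_X_pow_sub_C _ (Fact.out : p.Prime).ne_zero)
    rw [map_sub, map_pow, Polynomial.aeval_X, Polynomial.aeval_C]
    exact sub_eq_zero.2 (map_pow q x p).symm
  have h0 : Polynomial.aeval (q x) f = 0 := by
    rw [← hqy]
    exact (Polynomial.hom_eval₂ f B.subtype q x).symm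
  obtain ⟨h, rfl⟩ := hm ▸ minpoly.dvd B (q x) h0
  change Polynomial.aeval x _ = 0
  rw [map_mul, map_sub, map_pow, Polynomial.aeval_X, Polynomial.aeval_C]
  have : (algebraMap B A) c = x ^ p := rfl
  rw [this, sub_self, zero_mul]

/-- A surjection with square-zero kernel from a ring of characteristic `p` to a field has a
ring section: there is a subring mapping bijectively. -/
theorem exists_section [CharP k p] (hp : (p : A) = 0) (q : A →+* k)
    (hq : Function.Surjective q) (hsq : ∀ x y, q x = 0 → q y = 0 → x * y = 0) :
    ∃ B : Subring A, (∀ b ∈ B, q b = 0 → b = 0) ∧ ∀ a, ∃ b ∈ B, q b = a := by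
  have hpp : p.Prime := Fact.out
  have hnt : Nontrivial A := by
    refine ⟨0, 1, fun h => zero_ne_one (α := k) ?_⟩
    rw [← map_one q, ← h, map_zero]
  have hchar : CharP A p := by
    have h1 := CharP.exists A
    obtain ⟨c, hc⟩ := h1
    have h2 : c ∣ p := (CharP.cast_eq_zero_iff A c p).1 hp
    rcases (Nat.dvd_prime hpp).1 h2 with h | h
    · subst h
      have h3 := CharP.cast_eq_zero A 1
      rw [Nat.cast_one] at h3
      exact absurd h3 one_ne_zero
    · exact h ▸ hc
  have hker : ∀ x, q x = 0 → x ^ p = 0 := by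
    intro x hx
    obtain ⟨n, hn⟩ : ∃ n, p = n + 2 := ⟨p - 2, by have := hpp.two_le; omega⟩
    rw [hn, pow_add, pow_two, hsq x x hx hx, mul_zero]
  have hunit : ∀ x, q x ≠ 0 → IsUnit x := by
    intro x hx
    obtain ⟨y, hy⟩ := hq (q x)⁻¹
    have h1 : q (1 - x * y) = 0 := by
      rw [map_sub, map_mul, hy, mul_inv_cancel₀ hx, map_one, sub_self]
    have h2 := hsq _ _ h1 h1
    refine IsUnit.of_mul_eq_one (y * (2 - x * y)) ?_
    linear_combination -h2
  obtain ⟨B, hB0, hB⟩ := zorn_le_nonempty₀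
    {B : Subring A | (∀ b ∈ B, q b = 0 → b = 0)} (by
      intro c hc hch y hy
      refine ⟨sSup c, ?_, fun z hz => le_sSup hz⟩
      intro b hb
      obtain ⟨s, hs, hbs⟩ := (Subring.mem_sSup_of_directedOn ⟨y, hy⟩ hch.directedOn).1 hb
      exact hc hs b hbs) (frobenius A p).range (by
      rintro _ ⟨a, rfl⟩ h
      rw [frobenius_def, map_pow] at h
      exact hker a (pow_eq_zero_iff hpp.ne_zero |>.1 h))
  have hpow : ∀ a : A, a ^ p ∈ B := fun a => hB0 ⟨a, rfl⟩
  have hinj : ∀ b ∈ B, q b = 0 → b = 0 := hB.prop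
  refine ⟨B, hinj, fun a => ?_⟩
  obtain ⟨x, rfl⟩ := hq a
  by_contra hcon
  push Not at hcon
  have hF : IsField B := by
    refine ⟨⟨0, 1, zero_ne_one⟩, mul_comm, ?_⟩
    intro b hb
    have h1 : q b ≠ 0 := fun h => hb (Subtype.ext (hinj b b.2 h))
    obtain ⟨u, hu⟩ := (hunit _ h1).exists_right_inv
    obtain ⟨n, hn⟩ : ∃ n, p = n + 1 := ⟨p - 1, by have := hpp.two_le; omega⟩
    refine ⟨⟨(b : A) ^ n * u ^ p, B.mul_mem (B.pow_mem b.2 n) (hpow u)⟩, Subtype.ext ?_⟩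
    change (b : A) * ((b : A) ^ n * u ^ p) = 1
    rw [← mul_assoc, ← pow_succ', ← hn, ← mul_pow, hu, one_pow]
  have hadj := adjoin_inj p q B hinj hpow hF x hcon
  have hle : B ≤ (Algebra.adjoin B {x}).toSubring := fun b hb =>
    (Algebra.adjoin B {x}).algebraMap_mem ⟨b, hb⟩
  have hx : x ∈ B := hB.le_of_ge hadj hle (Algebra.subset_adjoin rfl)
  exact hcon x hx rfl
end
end CIDim

/-! ### Approximations to a coefficient ring -/

namespace CIDim
section
variable {P k : Type*} [CommRing P] [Field k] (p : ℕ) (π : P →+* k) (F : ℕ → Ideal P)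

/-- `D` is a subring which contains `F n`, maps onto `k`, and whose intersection with `ker π` is
`p D + F n`. -/
structure IsApprox (n : ℕ) (D : Subring P) : Prop where
  le : ∀ x ∈ F n, x ∈ D
  surj : ∀ a, ∃ d ∈ D, π d = a
  ker : ∀ d ∈ D, π d = 0 → ∃ d' ∈ D, d - p * d' ∈ F n

variable {p π F}

/-- An approximation modulo `F n` contains one modulo `F (n + 1)`: it is the preimage of a section over
`k` of the square-zero extension `D ⧸ (p D + F (n + 1))`. -/
theorem IsApprox.step [Fact p.Prime] [CharP k p] (hF1 : F 1 = RingHom.ker π) (hanti : Antitone F)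
    (hmul : ∀ n, ∀ x ∈ F 1, ∀ y ∈ F n, x * y ∈ F (n + 1)) {n : ℕ} (hn : 1 ≤ n) {D : Subring P}
    (hD : IsApprox p π F n D) :
    ∃ D' : Subring P, D' ≤ D ∧ IsApprox p π F (n + 1) D' ∧ ∀ d ∈ D, ∃ d' ∈ D', d - d' ∈ F n := by
  have hFn : ∀ x ∈ F n, π x = 0 := fun x hx => by
    have : x ∈ F 1 := hanti hn hx
    rwa [hF1] at this
  have hFn1 : ∀ x ∈ F (n + 1), x ∈ F n := fun x hx => hanti (Nat.le_succ n) hx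
  have hp1 : (p : P) ∈ F 1 := by
    rw [hF1, RingHom.mem_ker, map_natCast, CharP.cast_eq_zero]
  let J : Ideal D := Ideal.span {(p : D)} ⊔ (F (n + 1)).comap D.subtype
  have hJmem : ∀ d : D, d ∈ J ↔ ∃ d' ∈ D, (d : P) - p * d' ∈ F (n + 1) := by
    intro d
    constructor
    · intro h
      obtain ⟨a, ha, b, hb, rfl⟩ := Submodule.mem_sup.1 h
      obtain ⟨c, rfl⟩ := Ideal.mem_span_singleton'.1 ha
      refine ⟨c, c.2, ?_⟩
      have : ((c * (p : D) + b : D) : P) - p * c = (b : P) := by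
        push_cast; ring
      rw [this]; exact hb
    · rintro ⟨d', hd', h⟩
      have : d = (p : D) * ⟨d', hd'⟩ + (d - (p : D) * ⟨d', hd'⟩) := by ring
      rw [this]
      refine J.add_mem (le_sup_left (a := Ideal.span {(p : D)}) (Ideal.mul_mem_right _ _ (Ideal.mem_span_singleton_self _)))
        (le_sup_right (a := Ideal.span {(p : D)}) ?_)
      exact h
  have hJ : ∀ d ∈ J, (π.comp D.subtype) d = 0 := by
    intro d hd
    obtain ⟨d', _, h⟩ := (hJmem d).1 hd
    have h1 := hFn _ (hFn1 _ h)
    rw [map_sub, map_mul, map_natCast, CharP.cast_eq_zero, zero_mul, sub_zero] at h1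
    exact h1
  let q : D ⧸ J →+* k := Ideal.Quotient.lift J (π.comp D.subtype) hJ
  have hqmk : ∀ d : D, q (Ideal.Quotient.mk J d) = π d := fun d => Ideal.Quotient.lift_mk _ _ _
  have hq : Function.Surjective q := by
    intro a
    obtain ⟨d, hd, rfl⟩ := hD.surj a
    exact ⟨Ideal.Quotient.mk J ⟨d, hd⟩, hqmk _⟩
  have hpA : ((p : ℕ) : D ⧸ J) = 0 := by
    rw [← map_natCast (Ideal.Quotient.mk J) p, Ideal.Quotient.eq_zero_iff_mem]
    exact le_sup_left (a := Ideal.span {(p : D)}) (Ideal.mem_span_singleton_self _)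
  have hsq : ∀ x y, q x = 0 → q y = 0 → x * y = 0 := by
    intro x y
    obtain ⟨x, rfl⟩ := Ideal.Quotient.mk_surjective x
    obtain ⟨y, rfl⟩ := Ideal.Quotient.mk_surjective y
    rw [hqmk, hqmk]
    intro hx hy
    obtain ⟨a, ha, hxa⟩ := hD.ker x x.2 hx
    obtain ⟨b, hb, hyb⟩ := hD.ker y y.2 hy
    rw [← map_mul, Ideal.Quotient.eq_zero_iff_mem, hJmem]
    refine ⟨a * y + (x - p * a) * b, D.add_mem (D.mul_mem ha y.2) (D.mul_mem (D.sub_mem x.2 (D.mul_mem (natCast_mem D p) ha)) hb), ?_⟩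
    have : ((x * y : D) : P) - p * (a * y + (x - p * a) * b) = (x - p * a) * (y - p * b) := by
      push_cast; ring
    rw [this]
    exact hmul n _ (hanti hn hxa) _ hyb
  obtain ⟨B, hB, hBs⟩ := exists_section p hpA q hq hsq
  let D' : Subring P := (B.comap (Ideal.Quotient.mk J)).map D.subtype
  have hD' : ∀ d : P, d ∈ D' ↔ ∃ h : d ∈ D, Ideal.Quotient.mk J ⟨d, h⟩ ∈ B := by
    intro d
    constructor
    · rintro ⟨e, he, rfl⟩
      exact ⟨e.2, he⟩
    · rintro ⟨h, h'⟩
      exact ⟨⟨d, h⟩, h', rfl⟩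
  have hJD' : ∀ d ∈ J, (d : P) ∈ D' := by
    intro d hd
    refine (hD' d).2 ⟨d.2, ?_⟩
    rw [Ideal.Quotient.eq_zero_iff_mem.2 hd]
    exact B.zero_mem
  have hle : D' ≤ D := fun d hd => ((hD' d).1 hd).1
  have hsurj : ∀ a, ∃ d ∈ D', π d = a := by
    intro a
    obtain ⟨b, hb, rfl⟩ := hBs a
    obtain ⟨d, rfl⟩ := Ideal.Quotient.mk_surjective b
    exact ⟨d, (hD' d).2 ⟨d.2, hb⟩, (hqmk d).symm⟩
  have hpD : ∀ d ∈ D, (p : P) * d ∈ D' := by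
    intro d hd
    have := hJD' ((p : D) * ⟨d, hd⟩) ((hJmem _).2 ⟨d, hd, by simp⟩)
    simpa using this
  have hdiff : ∀ d ∈ D, ∃ d' ∈ D', d - d' ∈ F n := by
    intro d hd
    obtain ⟨d1, hd1, h1⟩ := hsurj (π d)
    obtain ⟨e, he, h2⟩ := hD.ker (d - d1) (D.sub_mem hd (hle hd1)) (by rw [map_sub, h1, sub_self])
    refine ⟨d1 + p * e, D'.add_mem hd1 (hpD e he), ?_⟩
    rwa [← sub_sub]
  refine ⟨D', hle, ⟨?_, hsurj, ?_⟩, hdiff⟩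
  · intro x hx
    exact hJD' ⟨x, hD.le x (hFn1 x hx)⟩ ((hJmem _).2 ⟨0, D.zero_mem, by simpa using hx⟩)
  · intro d hd hπ
    obtain ⟨h, h'⟩ := (hD' d).1 hd
    have h0 := hB _ h' ((hqmk _).trans hπ)
    rw [Ideal.Quotient.eq_zero_iff_mem, hJmem] at h0
    obtain ⟨e, he, h1⟩ := h0
    obtain ⟨e', he', h2⟩ := hdiff e he
    refine ⟨e', he', ?_⟩
    have : d - p * e' = (d - p * e) + p * (e - e') := by ring
    rw [this]
    exact (F (n + 1)).add_mem h1 (hmul n _ hp1 _ h2)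
end
end CIDim

/-! ### Coefficient rings in a filtered ring -/

namespace CIDim
section
variable {P k W : Type*} [CommRing P] [Field k] [CommRing W] [IsDomain W] (p : ℕ)
  (π : P →+* k) (F : ℕ → Ideal P) (w : P →+* W)

/-- Let `P` be a ring with residue map `π` to the field `k` and a complete separated filtration `F`,
together with a map to a domain `W` that takes `F n` to multiples of `p ^ n`. There is a subring `C`
of `P` mapping onto `k` with kernel `p C`, and closed under inversion of elements outside the
kernel: the intersection of successive approximations. -/
theorem exists_coeff [Fact p.Prime] [CharP k p] (hF0 : F 0 = ⊤) (hF1 : F 1 = RingHom.ker π)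
    (hanti : Antitone F)
    (hmul : ∀ n, ∀ x ∈ F 1, ∀ y ∈ F n, x * y ∈ F (n + 1)) (hπ : Function.Surjective π)
    (hcomp : ∀ u : ℕ → P, (∀ n, u (n + 1) - u n ∈ F n) → ∃ L, ∀ n, L - u n ∈ F n)
    (hsep : ∀ x, (∀ n, x ∈ F n) → x = 0) (hunit : ∀ x, π x ≠ 0 → IsUnit x)
    (hp0 : (p : W) ≠ 0) (hw : ∀ n, ∀ x ∈ F n, (p : W) ^ n ∣ w x)
    (hw1 : ∀ x, (p : W) ∣ w x → π x = 0) :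
    ∃ C : Subring P, (∀ a, ∃ c ∈ C, π c = a) ∧ (∀ c ∈ C, π c = 0 → ∃ c' ∈ C, c = p * c') ∧
      ∀ c ∈ C, π c ≠ 0 → ∃ c' ∈ C, c * c' = 1 := by
  have hp1 : (p : P) ∈ F 1 := by
    rw [hF1, RingHom.mem_ker, map_natCast, CharP.cast_eq_zero]
  have hpow : ∀ y ∈ F 1, ∀ n, y ^ n ∈ F n := by
    intro y hy n
    induction n with
    | zero => rw [hF0]; trivial
    | succ n ih => rw [pow_succ']; exact hmul n _ hy _ ih
  have h0 : IsApprox p π F 1 ⊤ := by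
    refine ⟨fun _ _ => trivial, fun a => ?_, fun d _ hd => ⟨0, trivial, ?_⟩⟩
    · obtain ⟨d, rfl⟩ := hπ a
      exact ⟨d, trivial, rfl⟩
    · rw [mul_zero, sub_zero, hF1]; exact hd
  have hstep : ∀ n (D : {D : Subring P // IsApprox p π F (n + 1) D}),
      ∃ D' : {D : Subring P // IsApprox p π F (n + 2) D}, D'.1 ≤ D.1 ∧
        ∀ d ∈ D.1, ∃ d' ∈ D'.1, d - d' ∈ F (n + 1) := by
    intro n D
    obtain ⟨D', h1, h2, h3⟩ := D.2.step hF1 hanti hmul (by omega)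
    exact ⟨⟨D', h2⟩, h1, h3⟩
  choose st hst1 hst2 using hstep
  let D : ∀ n, {D : Subring P // IsApprox p π F (n + 1) D} := fun n => Nat.rec ⟨⊤, h0⟩ st n
  have hD1 : ∀ n, (D (n + 1)).1 ≤ (D n).1 := fun n => hst1 n (D n)
  have hD2 : ∀ n, ∀ d ∈ (D n).1, ∃ d' ∈ (D (n + 1)).1, d - d' ∈ F (n + 1) := fun n => hst2 n (D n)
  have hDanti : Antitone fun n => (D n).1 := antitone_nat_of_succ_le hD1
  let C : Subring P := ⨅ n, (D n).1
  have hC : ∀ x, x ∈ C ↔ ∀ n, x ∈ (D n).1 := fun x => Subring.mem_iInf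
  have hclosed : ∀ x, (∀ n, ∃ d ∈ (D n).1, x - d ∈ F (n + 1)) → x ∈ C := by
    intro x hx
    refine (hC x).2 fun n => ?_
    obtain ⟨d, hd, h⟩ := hx n
    have := (D n).1.add_mem ((D n).2.le _ h) hd
    rwa [sub_add_cancel] at this
  have hdense : ∀ n, ∀ d ∈ (D n).1, ∃ c ∈ C, d - c ∈ F (n + 1) := by
    intro n d hd
    have hex : ∀ j x, ∃ y, x ∈ (D j).1 → y ∈ (D (j + 1)).1 ∧ x - y ∈ F (j + 1) := by
      intro j x
      by_cases hx : x ∈ (D j).1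
      · obtain ⟨y, h1, h2⟩ := hD2 j x hx
        exact ⟨y, fun _ => ⟨h1, h2⟩⟩
      · exact ⟨0, fun h => absurd h hx⟩
    choose nx hnx using hex
    let u : ℕ → P := fun j => Nat.rec d (fun i x => nx (n + i) x) j
    have hu : ∀ j, u j ∈ (D (n + j)).1 := by
      intro j
      induction j with
      | zero => exact hd
      | succ j ih => exact (hnx (n + j) (u j) ih).1
    have hu' : ∀ j, u (j + 1) - u j ∈ F (n + j + 1) := by
      intro j
      rw [← neg_sub]
      exact (F _).neg_mem (hnx (n + j) (u j) (hu j)).2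
    obtain ⟨L, hL⟩ := hcomp (fun i => u (i - (n + 1))) (by
      intro i
      by_cases hi : i < n + 1
      · have h1 : i + 1 - (n + 1) = 0 := by omega
        have h2 : i - (n + 1) = 0 := by omega
        simp only [h1, h2, sub_self]
        exact (F i).zero_mem
      · have h1 : i + 1 - (n + 1) = (i - (n + 1)) + 1 := by omega
        simp only [h1]
        have := hu' (i - (n + 1))
        rwa [show n + (i - (n + 1)) + 1 = i by omega] at this)
    have hL' : ∀ j, L - u j ∈ F (n + j + 1) := by
      intro j
      have := hL (n + j + 1)
      rwa [show n + j + 1 - (n + 1) = j by omega] at this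
    refine ⟨L, hclosed L fun m => ⟨u m, hDanti (by omega : m ≤ n + m) (hu m), hanti (by omega) (hL' m)⟩, ?_⟩
    rw [← neg_sub]
    exact (F _).neg_mem (hL' 0)
  have hsurj : ∀ a, ∃ c ∈ C, π c = a := by
    intro a
    obtain ⟨d, hd, rfl⟩ := (D 0).2.surj a
    obtain ⟨c, hc, h⟩ := hdense 0 d hd
    refine ⟨c, hc, ?_⟩
    have h1 : d - c ∈ RingHom.ker π := hF1 ▸ h
    rw [RingHom.mem_ker, map_sub, sub_eq_zero] at h1
    exact h1.symm
  have hA : ∀ c ∈ C, π c = 0 → ∀ N, ∃ c' ∈ C, c - p * c' ∈ F N := by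
    intro c hc h N
    obtain ⟨d, hd, h1⟩ := (D N).2.ker c ((hC c).1 hc N) h
    obtain ⟨c', hc', h2⟩ := hdense N d hd
    refine ⟨c', hc', hanti (Nat.le_succ N) ?_⟩
    have : c - p * c' = (c - p * d) + p * (d - c') := by ring
    rw [this]
    exact (F _).add_mem h1 ((F _).mul_mem_left _ h2)
  have hB : ∀ m c, c ∈ C → c ∈ F m → ∀ N, m ≤ N → ∃ g ∈ C, c - (p : P) ^ m * g ∈ F N := by
    intro m c hc hcm N hN
    have : ∀ j, j ≤ m → ∃ g ∈ C, c - (p : P) ^ j * g ∈ F N := by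
      intro j
      induction j with
      | zero => exact fun _ => ⟨c, hc, by simp⟩
      | succ j ih =>
        intro hj
        obtain ⟨g, hg, h1⟩ := ih (by omega)
        have h2 : (p : W) ^ m ∣ (p : W) ^ j * w g := by
          have h3 := dvd_sub (hw m c hcm) (hw m _ (hanti hN h1))
          rwa [← map_sub, sub_sub_cancel, map_mul, map_pow, map_natCast] at h3
        have h4 : (p : W) ∣ w g := by
          have h5 := (pow_dvd_pow (p : W) hj).trans h2
          rw [pow_succ] at h5
          exact (mul_dvd_mul_iff_left (pow_ne_zero j hp0)).1 h5
        obtain ⟨g', hg', h6⟩ := hA g hg (hw1 g h4) N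
        refine ⟨g', hg', ?_⟩
        have : c - (p : P) ^ (j + 1) * g' = (c - (p : P) ^ j * g) + (p : P) ^ j * (g - p * g') := by ring
        rw [this]
        exact (F _).add_mem h1 ((F _).mul_mem_left _ h6)
    exact this m le_rfl
  have hker : ∀ c ∈ C, π c = 0 → ∃ c' ∈ C, c = p * c' := by
    intro c hc hc0
    have hex : ∀ m f, ∃ g, f ∈ C → f ∈ F m → g ∈ C ∧ f - (p : P) ^ m * g ∈ F (m + 1) := by
      intro m f
      by_cases h : f ∈ C ∧ f ∈ F m
      · obtain ⟨g, h1, h2⟩ := hB m f h.1 h.2 (m + 1) (by omega)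
        exact ⟨g, fun _ _ => ⟨h1, h2⟩⟩
      · exact ⟨0, fun h1 h2 => absurd ⟨h1, h2⟩ h⟩
    choose g hg using hex
    let fu : ℕ → P × P := fun j => Nat.rec (c, 0) (fun i x =>
      (x.1 - (p : P) ^ (i + 1) * g (i + 1) x.1, x.2 + (p : P) ^ i * g (i + 1) x.1)) j
    have hinv : ∀ j, (fu j).1 ∈ C ∧ (fu j).1 ∈ F (j + 1) ∧ (fu j).2 ∈ C ∧
        c = p * (fu j).2 + (fu j).1 := by
      intro j
      induction j with
      | zero =>
        refine ⟨hc, ?_, C.zero_mem, ?_⟩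
        · rw [hF1]; exact hc0
        · change c = p * 0 + c
          ring
      | succ j ih =>
        obtain ⟨h1, h2, h3, h4⟩ := ih
        obtain ⟨h5, h6⟩ := hg (j + 1) _ h1 h2
        refine ⟨?_, h6, ?_, ?_⟩
        · exact C.sub_mem h1 (C.mul_mem (C.pow_mem (natCast_mem C p) _) h5)
        · exact C.add_mem h3 (C.mul_mem (C.pow_mem (natCast_mem C p) _) h5)
        · change c = p * ((fu j).2 + (p : P) ^ j * g (j + 1) (fu j).1) +
            ((fu j).1 - (p : P) ^ (j + 1) * g (j + 1) (fu j).1)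
          linear_combination h4
    obtain ⟨L, hL⟩ := hcomp (fun j => (fu j).2) (by
      intro j
      change (fu j).2 + (p : P) ^ j * g (j + 1) (fu j).1 - (fu j).2 ∈ F j
      rw [add_sub_cancel_left]
      exact Ideal.mul_mem_right _ _ (hpow _ hp1 j))
    refine ⟨L, hclosed L fun n => ⟨(fu (n + 1)).2, (hC _).1 (hinv (n + 1)).2.2.1 n, hL (n + 1)⟩, ?_⟩
    rw [← sub_eq_zero]
    refine hsep _ fun n => hanti (Nat.le_succ n) ?_
    have : c - p * L = (fu n).1 - p * (L - (fu n).2) := by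
      linear_combination (hinv n).2.2.2
    rw [this]
    exact (F _).sub_mem (hinv n).2.1 (hmul n _ hp1 _ (hL n))
  refine ⟨C, hsurj, hker, ?_⟩
  intro c hc hne
  obtain ⟨v, hv⟩ := (hunit c hne).exists_right_inv
  obtain ⟨e, he, hec⟩ := hsurj (π c)⁻¹
  refine ⟨v, (hC v).2 fun n => ?_, hv⟩
  have hy : 1 - c * e ∈ F 1 := by
    rw [hF1, RingHom.mem_ker, map_sub, map_mul, hec, mul_inv_cancel₀ hne, map_one, sub_self]
  have hyD : 1 - c * e ∈ C := C.sub_mem C.one_mem (C.mul_mem hc he)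
  have hgs := mul_neg_geom_sum (1 - c * e) (n + 1)
  rw [sub_sub_cancel] at hgs
  have : v = e * ∑ i ∈ Finset.range (n + 1), (1 - c * e) ^ i + v * (1 - c * e) ^ (n + 1) := by
    linear_combination (-v) * hgs + (e * ∑ i ∈ Finset.range (n + 1), (1 - c * e) ^ i) * hv
  rw [this]
  refine (D n).1.add_mem ((hC _).1 (C.mul_mem he (C.sum_mem fun i _ => C.pow_mem hyD i)) n) ?_
  exact (D n).2.le _ ((F _).mul_mem_left _ (hpow _ hy (n + 1)))
end
end CIDim

/-! ### Coefficient rings of complete local rings -/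

namespace CIDim
section
variable {P k W : Type*} [CommRing P] [Field k] [CommRing W] [IsDomain W] (p : ℕ)
  (π : P →+* k) (F : ℕ → Ideal P) (w : P →+* W)

/-- A filtered ring as in `exists_coeff` contains a discrete valuation ring mapping onto `k`; its
uniformizer is `p`. -/
theorem exists_dvr [Fact p.Prime] [CharP k p] (hF0 : F 0 = ⊤) (hF1 : F 1 = RingHom.ker π)
    (hanti : Antitone F)
    (hmul : ∀ n, ∀ x ∈ F 1, ∀ y ∈ F n, x * y ∈ F (n + 1)) (hπ : Function.Surjective π)
    (hcomp : ∀ u : ℕ → P, (∀ n, u (n + 1) - u n ∈ F n) → ∃ L, ∀ n, L - u n ∈ F n)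
    (hsep : ∀ x, (∀ n, x ∈ F n) → x = 0) (hunit : ∀ x, π x ≠ 0 → IsUnit x)
    (hp0 : (p : W) ≠ 0) (hw : ∀ n, ∀ x ∈ F n, (p : W) ^ n ∣ w x)
    (hw1 : ∀ x, (p : W) ∣ w x → π x = 0) :
    ∃ (C : Subring P) (_ : IsDomain C), IsDiscreteValuationRing C ∧ ∀ a, ∃ c ∈ C, π c = a := by
  obtain ⟨C, hC1, hC2, hC3⟩ := exists_coeff p π F w hF0 hF1 hanti hmul hπ hcomp hsep hunit hp0 hw hw1
  have hp1 : (p : P) ∈ F 1 := by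
    rw [hF1, RingHom.mem_ker, map_natCast, CharP.cast_eq_zero]
  have hu : ∀ c : C, π c ≠ 0 → IsUnit c := by
    intro c hc
    obtain ⟨c', h1, h2⟩ := hC3 c c.2 hc
    exact IsUnit.of_mul_eq_one ⟨c', h1⟩ (Subtype.ext h2)
  have hfac : ∀ n, ∀ c : C, (c : P) ∉ F n → ∃ j, ∃ u : C, IsUnit u ∧ c = (p : C) ^ j * u := by
    intro n
    induction n with
    | zero =>
      intro c hc
      rw [hF0] at hc
      exact absurd trivial hc
    | succ n ih =>
      intro c hc
      by_cases h0 : π c = 0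
      · obtain ⟨c', h1, h2⟩ := hC2 c c.2 h0
        obtain ⟨j, u, hj, he⟩ := ih ⟨c', h1⟩ (fun h => hc (by rw [h2]; exact hmul n _ hp1 _ h))
        refine ⟨j + 1, u, hj, ?_⟩
        have : c = (p : C) * ⟨c', h1⟩ := Subtype.ext (by simpa using h2)
        rw [this, he]; ring
      · exact ⟨0, c, hu c h0, by simp⟩
  have hfac' : ∀ c : C, c ≠ 0 → ∃ j, ∃ u : C, IsUnit u ∧ c = (p : C) ^ j * u := by
    intro c hc
    by_contra hcon
    refine hc (Subtype.ext (hsep c fun n => ?_))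
    by_contra hn
    exact hcon (hfac n c hn)
  have hinj : Function.Injective (w.comp C.subtype) := by
    rw [injective_iff_map_eq_zero]
    intro c hc
    by_contra hne
    obtain ⟨j, u, h1, rfl⟩ := hfac' c hne
    rw [map_mul, map_pow, map_natCast] at hc
    rcases mul_eq_zero.1 hc with h | h
    · exact pow_ne_zero j hp0 h
    · exact (h1.map (w.comp C.subtype)).ne_zero h
  have hdom : IsDomain C := hinj.isDomain _
  have hpC : (p : C) ≠ 0 := by
    intro h
    have := congrArg (w.comp C.subtype) h
    rw [map_natCast, map_zero] at this
    exact hp0 this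
  have hnu : ∀ c : C, ¬ IsUnit c → ∃ d, c = p * d := by
    intro c hc
    have h0 : π c = 0 := by
      by_contra h
      exact hc (hu c h)
    obtain ⟨c', h1, h2⟩ := hC2 c c.2 h0
    exact ⟨⟨c', h1⟩, Subtype.ext (by simpa using h2)⟩
  have hpnu : ¬ IsUnit (p : C) := by
    intro h
    have h1 := h.map (π.comp C.subtype)
    rw [map_natCast, CharP.cast_eq_zero] at h1
    exact not_isUnit_zero h1
  refine ⟨C, hdom, ?_, hC1⟩
  refine IsDiscreteValuationRing.ofHasUnitMulPowIrreducibleFactorization ⟨(p : C), ⟨hpnu, ?_⟩, ?_⟩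
  · intro a b hab
    by_contra hcon
    push Not at hcon
    obtain ⟨a', rfl⟩ := hnu a hcon.1
    obtain ⟨b', rfl⟩ := hnu b hcon.2
    have h1 : (p : C) * 1 = p * (p * (a' * b')) := by
      linear_combination hab
    exact hpnu (IsUnit.of_mul_eq_one _ (mul_left_cancel₀ hpC h1).symm)
  · intro x hx
    obtain ⟨j, u, ⟨v, rfl⟩, rfl⟩ := hfac' x hx
    exact ⟨j, v, rfl⟩
end

theorem adic_lim {A : Type*} [CommRing A] (I : Ideal A) [IsAdicComplete I A] (u : ℕ → A)
    (hu : ∀ n, u (n + 1) - u n ∈ I ^ n) : ∃ L, ∀ n, L - u n ∈ I ^ n := by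
  have key : ∀ m n, m ≤ n → u n - u m ∈ I ^ m := by
    intro m n h
    induction n, h using Nat.le_induction with
    | base => rw [sub_self]; exact (I ^ m).zero_mem
    | succ n hn ih =>
      rw [← sub_add_sub_cancel (u (n + 1)) (u n) (u m)]
      exact (I ^ m).add_mem (Ideal.pow_le_pow_right hn (hu n)) ih
  obtain ⟨L, hL⟩ := IsPrecomplete.prec' (I := I) (M := A) u (by
    intro m n h
    rw [SModEq.sub_mem, smul_eq_mul, Ideal.mul_top, ← neg_sub]
    exact (I ^ m).neg_mem (key m n h))
  refine ⟨L, fun n => ?_⟩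
  have := hL n
  rw [SModEq.sub_mem, smul_eq_mul, Ideal.mul_top, ← neg_sub] at this
  simpa using (I ^ n).neg_mem this

theorem adic_sep {A : Type*} [CommRing A] (I : Ideal A) [IsAdicComplete I A] (x : A)
    (hx : ∀ n, x ∈ I ^ n) : x = 0 := by
  refine IsHausdorff.haus' (I := I) (M := A) x fun n => ?_
  rw [SModEq.sub_mem, smul_eq_mul, Ideal.mul_top, sub_zero]
  exact hx n

/-- A complete local ring with residue characteristic `p` receives a map from a discrete valuation ring
which is onto the residue field `k`. The discrete valuation ring lies in the fibre product of `A` and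
the Witt vectors of the algebraic closure of `k`; the Witt vector component ensures that `p` is not
nilpotent there, whatever the characteristic of `A`. -/
theorem coeff_charP {A : Type} [CommRing A] [IsLocalRing A] [IsAdicComplete (maximalIdeal A) A]
    (p : ℕ) [Fact p.Prime] [CharP (ResidueField A) p] :
    ∃ (C : Type) (_ : CommRing C) (_ : IsDomain C) (_ : IsDiscreteValuationRing C) (φ : C →+* A),
      ∀ a : A, ∃ c : C, a - φ c ∈ maximalIdeal A := by
  let k := ResidueField A
  let K := AlgebraicClosure k
  have hK : CharP K p := charP_of_injective_algebraMap (algebraMap k K).injective p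
  let W := WittVector p K
  let f : W × A →+* K := (WittVector.constantCoeff).comp (RingHom.fst W A)
  let g : W × A →+* K := ((algebraMap k K).comp (residue A)).comp (RingHom.snd W A)
  let P : Subring (W × A) := RingHom.eqLocus f g
  have hP : ∀ x : W × A, x ∈ P ↔ WittVector.constantCoeff x.1 = algebraMap k K (residue A x.2) :=
    fun x => Iff.rfl
  let w : P →+* W := (RingHom.fst W A).comp P.subtype
  let a : P →+* A := (RingHom.snd W A).comp P.subtype
  let π : P →+* k := (residue A).comp a
  let I : Ideal W := Ideal.span {(p : W)}
  let F : ℕ → Ideal P := fun n => (I ^ n).comap w ⊓ (maximalIdeal A ^ n).comap a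
  have hI : ∀ x : W, x ∈ I ↔ WittVector.constantCoeff x = 0 := fun x =>
    WittVector.mem_span_p_iff_coeff_zero_eq_zero x
  have hres : ∀ x : A, residue A x = 0 ↔ x ∈ maximalIdeal A := fun x => residue_eq_zero_iff x
  have hwπ : ∀ x : P, w x ∈ I ↔ π x = 0 := by
    intro x
    have h5 : WittVector.constantCoeff (w x) = algebraMap k K (π x) := x.2
    rw [hI, h5]
    exact map_eq_zero _
  have haπ : ∀ x : P, a x ∈ maximalIdeal A ↔ π x = 0 := fun x => (hres _).symm
  obtain ⟨C, hC1, hC2, hC3⟩ := exists_dvr p π F w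
    (by simp [F])
    (by
      ext x
      rw [RingHom.mem_ker]
      change (w x ∈ I ^ 1 ∧ a x ∈ maximalIdeal A ^ 1) ↔ _
      rw [pow_one, pow_one, hwπ, haπ, and_self])
    (fun m n h x hx => ⟨Ideal.pow_le_pow_right h hx.1, Ideal.pow_le_pow_right h hx.2⟩)
    (by
      rintro n x ⟨h1, h2⟩ y ⟨h3, h4⟩
      rw [pow_one] at h1 h2
      refine ⟨?_, ?_⟩
      · change w (x * y) ∈ I ^ (n + 1)
        rw [map_mul, pow_succ']
        exact Ideal.mul_mem_mul h1 h3
      · change a (x * y) ∈ maximalIdeal A ^ (n + 1)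
        rw [map_mul, pow_succ']
        exact Ideal.mul_mem_mul h2 h4)
    (by
      intro r
      obtain ⟨y, rfl⟩ := residue_surjective r
      obtain ⟨x, hx⟩ := WittVector.constantCoeff_surjective p (algebraMap k K (residue A y))
      exact ⟨⟨(x, y), hx⟩, rfl⟩)
    (by
      intro u hu
      obtain ⟨L1, h1⟩ := adic_lim I (fun n => w (u n)) (fun n => by
        rw [← map_sub]; exact (hu n).1)
      obtain ⟨L2, h2⟩ := adic_lim (maximalIdeal A) (fun n => a (u n)) (fun n => by
        rw [← map_sub]; exact (hu n).2)
      refine ⟨⟨(L1, L2), ?_⟩, fun n => ⟨h1 n, h2 n⟩⟩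
      rw [hP]
      have h3 := h1 1
      have h4 := h2 1
      rw [pow_one, hI, map_sub, sub_eq_zero] at h3
      rw [pow_one, ← hres, map_sub, sub_eq_zero] at h4
      change WittVector.constantCoeff L1 = algebraMap k K (residue A L2)
      rw [h3, h4]
      exact (u 1).2)
    (by
      intro x hx
      refine Subtype.ext (Prod.ext ?_ ?_)
      · exact adic_sep I _ fun n => (hx n).1
      · exact adic_sep (maximalIdeal A) _ fun n => (hx n).2)
    (by
      intro x hx
      have h1 : IsUnit (a x) := by
        by_contra h
        exact hx ((haπ x).1 h)
      have h2 : IsUnit (w x) := by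
        refine WittVector.isUnit_of_coeff_zero_ne_zero _ fun h => hx ((hwπ x).1 ((hI _).2 h))
      obtain ⟨b, hb⟩ := h1.exists_right_inv
      obtain ⟨v, hv⟩ := h2.exists_right_inv
      refine IsUnit.of_mul_eq_one ⟨(v, b), ?_⟩ (Subtype.ext (Prod.ext hv hb))
      rw [hP]
      have h3 := congrArg WittVector.constantCoeff hv
      have h4 := congrArg (fun t => algebraMap k K (residue A t)) hb
      simp only [map_mul, map_one] at h3 h4
      have h5 : WittVector.constantCoeff (w x) = algebraMap k K (residue A (a x)) := x.2
      have h6 : WittVector.constantCoeff (w x) ≠ 0 := left_ne_zero_of_mul_eq_one h3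
      refine mul_left_cancel₀ h6 ?_
      change WittVector.constantCoeff (w x) * WittVector.constantCoeff v =
        WittVector.constantCoeff (w x) * algebraMap k K (residue A b)
      rw [h3, h5, h4])
    (WittVector.p_nonzero p K)
    (by
      intro n x hx
      have : w x ∈ I ^ n := hx.1
      rw [Ideal.span_singleton_pow, Ideal.mem_span_singleton] at this
      exact this)
    (fun x hx => (hwπ x).1 (Ideal.mem_span_singleton.2 hx))
  refine ⟨C, inferInstance, hC1, hC2, a.comp C.subtype, fun b => ?_⟩
  obtain ⟨c, hc, h⟩ := hC3 (residue A b)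
  refine ⟨⟨c, hc⟩, ?_⟩
  rw [← hres, map_sub, sub_eq_zero]
  exact h.symm

/-- A complete local ring with residue characteristic zero has a coefficient field, because the residue
field is formally smooth over `ℚ`. -/
theorem coeff_charZero {A : Type} [CommRing A] [IsLocalRing A] [IsAdicComplete (maximalIdeal A) A]
    [CharZero (ResidueField A)] :
    ∃ (φ : ResidueField A →+* A), ∀ a : A, ∃ c, a - φ c ∈ maximalIdeal A := by
  let k := ResidueField A
  have hunit : ∀ n : ℤ, n ≠ 0 → IsUnit (n : A) := by
    intro n hn
    by_contra h
    have h1 : residue A (n : A) = 0 := (residue_eq_zero_iff _).2 h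
    rw [map_intCast] at h1
    exact hn (Int.cast_eq_zero.1 h1)
  let ι : ℚ →+* A := IsLocalization.lift (M := nonZeroDivisors ℤ) (S := ℚ) (g := Int.castRingHom A)
    (fun n => hunit n (nonZeroDivisors.coe_ne_zero n))
  letI : Algebra ℚ A := ι.toAlgebra
  letI : Algebra ℚ (A ⧸ maximalIdeal A) := inferInstance
  letI ak : Algebra ℚ k := ((residue A).comp ι).toAlgebra
  obtain ⟨s, hs⟩ := exists_isTranscendenceBasis ℚ k
  have halg : Algebra.IsAlgebraic (IntermediateField.adjoin ℚ (Set.range ((↑) : s → k))) k := by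
    have := hs.isAlgebraic_field
    convert this
  have hfs : Algebra.FormallySmooth ℚ k :=
    Algebra.FormallySmooth.of_algebraicIndependent_of_isSeparable hs.1
  obtain ⟨g, hg⟩ := Algebra.FormallySmooth.exists_mkₐ_comp_eq_of_isAdicComplete (R := ℚ) (A := k) (S := A) (I := maximalIdeal A)
    { (RingHom.id (A ⧸ maximalIdeal A) : k →+* A ⧸ maximalIdeal A) with commutes' := fun r => rfl }
  refine ⟨g.toRingHom, fun a => ⟨residue A a, ?_⟩⟩
  have := DFunLike.congr_fun hg (residue A a)
  rw [← Ideal.Quotient.eq]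
  exact this.symm
end CIDim

/-! ### The structure theorem of Cohen -/

namespace CIDim
/-- `S` is a Noetherian local ring whose maximal ideal has `n ≤ dim S` generators, i.e. a regular
local ring of dimension `n`. -/
def RegLoc (n : ℕ) (S : Type) [CommRing S] : Prop :=
  IsNoetherianRing S ∧ ∃ _ : IsLocalRing S, ∃ f : Fin n → S,
    Ideal.span (Set.range f) = maximalIdeal S ∧ (n : WithBot ℕ∞) ≤ ringKrullDim S

theorem RegLoc.of_equiv {n : ℕ} {S T : Type} [CommRing S] [CommRing T] (e : S ≃+* T)
    (h : RegLoc n S) : RegLoc n T := by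
  obtain ⟨hN, hL, f, hf, hd⟩ := h
  have hLT : IsLocalRing T := e.isLocalRing
  refine ⟨isNoetherianRing_of_ringEquiv S e, hLT, fun i => e (f i), ?_,
    hd.trans (ringKrullDim_eq_of_ringEquiv e).le⟩
  have h1 : (maximalIdeal S).map (e : S →+* T) = maximalIdeal T :=
    IsLocalRing.map_maximalIdeal_of_surjective (e : S →+* T) e.surjective
  rw [← h1, ← hf, Ideal.map_span, ← Set.range_comp]
  rfl

theorem RegLoc.powerSeries {n : ℕ} {S : Type} [CommRing S] (h : RegLoc n S) :
    RegLoc (n + 1) (PowerSeries S) := by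
  obtain ⟨hN, hL, f, hf, hd⟩ := h
  have hLT : IsLocalRing (PowerSeries S) := inferInstanceAs (IsLocalRing (MvPowerSeries Unit S))
  refine ⟨inferInstance, hLT, Fin.cons PowerSeries.X fun i => PowerSeries.C (f i), ?_, ?_⟩
  · rw [Fin.range_cons]
    have h1 : Ideal.span (Set.range fun i => (PowerSeries.C (f i) : PowerSeries S)) =
        (maximalIdeal S).map (PowerSeries.C (R := S)) := by
      rw [← hf, Ideal.map_span, ← Set.range_comp]; rfl
    rw [Ideal.span_insert, h1]
    apply le_antisymm
    · rw [sup_le_iff, Ideal.span_singleton_le_iff_mem, Ideal.map_le_iff_le_comap]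
      constructor
      · rw [mem_maximalIdeal, mem_nonunits_iff, PowerSeries.isUnit_iff_constantCoeff]
        simp
      · intro a ha
        rw [Ideal.mem_comap, mem_maximalIdeal, mem_nonunits_iff, PowerSeries.isUnit_iff_constantCoeff]
        simpa using ha
    · intro g hg
      rw [mem_maximalIdeal, mem_nonunits_iff, PowerSeries.isUnit_iff_constantCoeff] at hg
      have h2 : g = (g - PowerSeries.C (PowerSeries.constantCoeff g)) +
          PowerSeries.C (PowerSeries.constantCoeff g) := by ring
      rw [h2]
      refine add_mem (Ideal.mem_sup_left ?_) (Ideal.mem_sup_right (Ideal.mem_map_of_mem _ hg))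
      rw [Ideal.mem_span_singleton, PowerSeries.X_dvd_iff]
      simp
  · refine le_trans ?_ ringKrullDim_succ_le_ringKrullDim_powerseries
    push_cast
    gcongr

theorem RegLoc.mvPowerSeries {n : ℕ} {S : Type} [CommRing S] (h : RegLoc n S) (e : ℕ) :
    RegLoc (n + e) (MvPowerSeries (Fin e) S) := by
  induction e with
  | zero => exact h.of_equiv (MvPowerSeries.isEmptyEquiv (σ := Fin 0) (R := S)).symm.toRingEquiv
  | succ e ih =>
    exact ih.powerSeries.of_equiv (MvPowerSeries.finSuccEquiv S e).symm.toRingEquiv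

theorem regLoc_field (k : Type) [Field k] : RegLoc 0 k :=
  ⟨inferInstance, inferInstance, Fin.elim0, by
    rw [IsLocalRing.maximalIdeal_eq_bot]; simp, by
    rw [ringKrullDim_eq_zero_of_field]; rfl⟩

theorem regLoc_dvr (C : Type) [CommRing C] [IsDomain C] [IsDiscreteValuationRing C] :
    RegLoc 1 C := by
  obtain ⟨π, hπ⟩ := IsDiscreteValuationRing.exists_irreducible C
  refine ⟨inferInstance, inferInstance, fun _ => π, ?_, ?_⟩
  · rw [hπ.maximalIdeal_eq]; simp
  · rw [IsPrincipalIdealRing.ringKrullDim_eq_one C (IsDiscreteValuationRing.not_isField C)]; rfl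

/-- A map `C → A` inducing a surjection to the residue field of a complete local ring `A` with
finitely generated maximal ideal extends to a surjection from a power series ring over `C`, the
variables being sent to generators of the maximal ideal. -/
theorem exists_powerSeries_surj {C A : Type} [CommRing C] [CommRing A] [IsLocalRing A]
    [IsAdicComplete (maximalIdeal A) A] (φ : C →+* A)
    (hφ : ∀ a, ∃ c, a - φ c ∈ maximalIdeal A) {e : ℕ} (x : Fin e → A)
    (hx : Ideal.span (Set.range x) = maximalIdeal A) :
    ∃ Φ : MvPowerSeries (Fin e) C →+* A, Function.Surjective Φ := by
  let P := MvPolynomial (Fin e) C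
  let J : Ideal P := MvPolynomial.idealOfVars (Fin e) C
  let ev : P →+* A := MvPolynomial.eval₂Hom φ x
  have evX : ∀ i, ev (MvPolynomial.X i) = x i := MvPolynomial.eval₂Hom_X' φ x
  have evC : ∀ c, ev (MvPolynomial.C c) = φ c := MvPolynomial.eval₂Hom_C φ x
  have hev : J.map ev = maximalIdeal A := by
    rw [← hx, Ideal.map_span, ← Set.range_comp]
    congr 2
    funext i
    exact evX i
  have hevn : ∀ n, J ^ n ≤ (maximalIdeal A ^ n).comap ev := by
    intro n
    rw [← Ideal.map_le_iff_le_comap, Ideal.map_pow, hev]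
  let F : (n : ℕ) → AdicCompletion J P →+* A ⧸ maximalIdeal A ^ n := fun n =>
    (Ideal.quotientMap _ ev (hevn n)).comp (AdicCompletion.evalₐ J n : _ →+* _)
  have hF : ∀ n (u : AdicCompletion.AdicCauchySequence J P), F n (AdicCompletion.mk J P u) =
      Ideal.Quotient.mk _ (ev (u.val n)) := by
    intro n u
    simp only [F, RingHom.comp_apply, RingHom.coe_coe, AdicCompletion.evalₐ_mk, Ideal.quotientMap_mk]
  have hcomp : ∀ {m n : ℕ} (hle : m ≤ n),
      (Ideal.Quotient.factorPow (maximalIdeal A) hle).comp (F n) = F m := by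
    intro m n hle
    ext y
    obtain ⟨u, rfl⟩ := AdicCompletion.mk_surjective J P y
    rw [RingHom.comp_apply, hF, hF]
    change Ideal.Quotient.mk _ _ = _
    rw [Ideal.Quotient.eq, ← map_sub]
    refine hevn m ?_
    have := u.2 hle
    rw [SModEq.sub_mem] at this
    have h2 : (u.val m - u.val n) ∈ J ^ m := by
      simpa [Ideal.mul_top] using this
    rw [← neg_sub]
    exact neg_mem h2
  let Ψ : AdicCompletion J P →+* A := IsAdicComplete.liftRingHom (maximalIdeal A) F hcomp
  let E : MvPowerSeries (Fin e) C →+* AdicCompletion J P :=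
    (MvPowerSeries.toAdicCompletionAlgEquiv (Fin e) C).toRingEquiv
  let Φ := Ψ.comp E
  have hΦ : ∀ p : P, Φ (p : MvPowerSeries (Fin e) C) = ev p := by
    intro p
    refine (IsHausdorff.eq_iff_smodEq (I := maximalIdeal A)).2 fun n => ?_
    rw [SModEq.sub_mem, smul_eq_mul, Ideal.mul_top, ← Ideal.Quotient.eq]
    change Ideal.Quotient.mk _ (IsAdicComplete.liftRingHom (maximalIdeal A) F hcomp _) = _
    rw [IsAdicComplete.mk_liftRingHom]
    have : E (p : MvPowerSeries (Fin e) C) = AdicCompletion.of J P p :=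
      MvPowerSeries.toAdicCompletion_coe p
    rw [this]
    simp only [F, RingHom.comp_apply, RingHom.coe_coe, AdicCompletion.evalₐ_of, Ideal.quotientMap_mk]
  have hmap : (Ideal.span (Set.range MvPowerSeries.X) : Ideal (MvPowerSeries (Fin e) C)).map Φ =
      maximalIdeal A := by
    rw [← hx, Ideal.map_span, ← Set.range_comp]
    congr 2
    funext i
    have := hΦ (MvPolynomial.X i)
    rw [evX, MvPolynomial.coe_X] at this
    exact this
  refine ⟨Φ, ?_⟩
  have : IsHausdorff ((Ideal.span (Set.range MvPowerSeries.X) :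
      Ideal (MvPowerSeries (Fin e) C)).map Φ) A := by rw [hmap]; infer_instance
  refine surjective_of_mk_map_comp_surjective (I := Ideal.span (Set.range MvPowerSeries.X)) Φ ?_
  intro y
  obtain ⟨a, rfl⟩ := Ideal.Quotient.mk_surjective y
  obtain ⟨c, hc⟩ := hφ a
  refine ⟨((MvPolynomial.C c : P) : MvPowerSeries (Fin e) C), ?_⟩
  rw [RingHom.comp_apply, hΦ, eq_comm, Ideal.Quotient.eq, hmap, evC]
  exact hc

/-- **Cohen's structure theorem**: a complete local ring with finitely generated maximal ideal is
a quotient of a regular local ring. -/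
theorem exists_regular_surj {A : Type} [CommRing A] [IsLocalRing A]
    [IsAdicComplete (maximalIdeal A) A] (hfg : (maximalIdeal A).FG) :
    ∃ (n : ℕ) (S : Type) (_ : CommRing S) (_ : RegLoc n S) (Φ : S →+* A),
      Function.Surjective Φ := by
  obtain ⟨e, x, hx⟩ := Submodule.fg_iff_exists_fin_generating_family.1 hfg
  obtain ⟨p, hp⟩ := CharP.exists (ResidueField A)
  rcases CharP.char_is_prime_or_zero (ResidueField A) p with hp' | rfl
  · have := Fact.mk hp'
    obtain ⟨C, h1, h2, h3, φ, hφ⟩ := coeff_charP (A := A) p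
    obtain ⟨Φ, hΦ⟩ := exists_powerSeries_surj φ hφ x hx
    exact ⟨1 + e, _, inferInstance, (regLoc_dvr C).mvPowerSeries e, Φ, hΦ⟩
  · have := CharP.charP_to_charZero (ResidueField A)
    obtain ⟨φ, hφ⟩ := coeff_charZero (A := A)
    obtain ⟨Φ, hΦ⟩ := exists_powerSeries_surj φ hφ x hx
    exact ⟨0 + e, _, inferInstance, (regLoc_field _).mvPowerSeries e, Φ, hΦ⟩
end CIDim

/-! ### The two implications -/

namespace CIDim
/-- Flatness for the module structure of the algebra is flatness for the one by restriction of scalars. -/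
theorem flat_compHom (R R' : Type) [CommRing R] [CommRing R'] [Algebra R R'] [h : Module.Flat R R'] :
    @Module.Flat R R' _ _ (Module.compHom R' (algebraMap R R')) := by
  have : Module.compHom R' (algebraMap R R') = (Algebra.toModule : Module R R') := by
    refine Module.ext' _ _ fun r x => ?_
    rw [Algebra.smul_def]
    rfl
  rw [this]
  exact h

/-- Modulo a regular sequence in a Noetherian local ring, the quotient has finite projective
dimension. -/
theorem pdlt_quot_of_weaklyRegular {Q : Type} [CommRing Q] [IsNoetherianRing Q] [IsLocalRing Q]
    (s : List Q) (hs : RingTheory.Sequence.IsWeaklyRegular Q s) (hm : ∀ a ∈ s, a ∈ maximalIdeal Q) :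
    PDLT Q (Q ⧸ Ideal.ofList s) (s.length + 1) := by
  have h := ModuleCat.projectiveDimension_quotient_eq_add_length_of_isWeaklyRegular
    (ModuleCat.of Q Q) s hs hm
  rw [ModuleCat.projectiveDimension_eq_zero_of_projective (ModuleCat.of Q Q), zero_add] at h
  have h2 : HasProjectiveDimensionLT (ModuleCat.of Q (Q ⧸ Ideal.ofList s • (⊤ : Submodule Q Q)))
      (s.length + 1) := by
    exact (projectiveDimension_le_iff _ s.length).1 h.le
  have e : (Ideal.ofList s • (⊤ : Submodule Q Q)) = Ideal.ofList s := by
    rw [smul_eq_mul, Ideal.mul_top]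
  exact PDLT.of_equiv (Submodule.quotEquivOfEq _ _ e) h2

/-- A quasi-deformation with `Q` regular and `m_R R' = m_R'` exhibits the finiteness of the CI-dimension
of `k`: the module `R' ⊗ k` is the residue field of `Q`, and both it and `R'` are quotients of `Q` by
regular sequences. -/
theorem finite_of_regular {R : Type} [CommRing R] [IsNoetherianRing R] [IsLocalRing R]
    (D : QuasiDeformation R) (hQ : IsRegularLocal D.Q)
    (hm : (maximalIdeal R).map D.f = maximalIdeal D.R') : ResidueFieldHasFiniteCIDim R := by
  obtain ⟨hN, d, f, hf, hd⟩ := hQ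
  obtain ⟨s, hs, hr⟩ := D.ker_regular
  letI : Algebra R D.R' := D.f.toAlgebra
  letI : Algebra D.Q D.R' := D.g.toAlgebra
  have hk : Ideal.ofList s = RingHom.ker (algebraMap D.Q D.R') := hs
  have hgl : IsLocalHom (algebraMap D.Q D.R') := D.g_local
  have hsm : ∀ a ∈ s, a ∈ maximalIdeal D.Q := by
    intro a ha
    have h1 : a ∈ RingHom.ker D.g := hs ▸ Ideal.subset_span ha
    exact (IsLocalRing.le_maximalIdeal (RingHom.ker_ne_top D.g)) h1
  refine ⟨D, d, s.length, ?_, ?_⟩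
  · letI : Module D.Q (D.R' ⊗[R] ResidueField R) := Module.compHom (D.R' ⊗[R] ResidueField R) D.g
    obtain ⟨e⟩ := exists_equiv_idealJ (R := R) (R' := D.R') (Q := D.Q) (T := D.R' ⊗[R] ResidueField R)
      D.g_surj (AddEquiv.refl _) (fun q t => rfl)
    have hJ : idealJ R D.R' D.Q = Ideal.ofList (List.ofFn f) := by
      have h1 : Ideal.ofList (List.ofFn f) = maximalIdeal D.Q := by
        rw [← hf]; exact congrArg Ideal.span (by ext; simp)
      rw [h1]
      exact (congrArg (Ideal.comap D.g) hm).trans (IsLocalRing.maximalIdeal_comap (algebraMap D.Q D.R'))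
    have h2 : RingTheory.Sequence.IsWeaklyRegular D.Q (List.ofFn f) :=
      weaklyRegular_of_regular d D.Q (List.ofFn f) (by simp) (by
        rw [← hf]; exact congrArg Ideal.span (by ext; simp)) hd.ge
    have h3 := pdlt_quot_of_weaklyRegular (List.ofFn f) h2 (by
      intro a ha
      rw [← hf]
      exact Ideal.subset_span (by simpa using ha))
    rw [← hJ, List.length_ofFn] at h3
    exact hasProjDimLE_of_pdlt d _ (h3.of_equiv e)
  · letI : Module D.Q D.R' := Module.compHom D.R' D.g
    have h3 := pdlt_quot_of_weaklyRegular s hr.toIsWeaklyRegular hsm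
    have hφ : ∀ q : D.Q, (LinearMap.toSpanSingleton D.Q D.R' 1) q = D.g q := fun q => by
      rw [LinearMap.toSpanSingleton_apply]
      exact mul_one (D.g q)
    have e : (D.Q ⧸ Ideal.ofList s) ≃ₗ[D.Q] D.R' :=
      (Submodule.quotEquivOfEq _ _ (by
        ext q
        rw [hk, RingHom.mem_ker, LinearMap.mem_ker, hφ]
        rfl)).trans ((LinearMap.toSpanSingleton D.Q D.R' 1).quotKerEquivOfSurjective (by
          intro b
          obtain ⟨q, rfl⟩ := D.g_surj b
          exact ⟨q, hφ q⟩))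
    exact hasProjDimLE_of_pdlt _ _ (h3.of_equiv e)

/-- A presentation of the completion by a regular local ring is a quasi-deformation. -/
theorem finite_of_ci {R : Type} [CommRing R] [IsNoetherianRing R] [IsLocalRing R]
    (h : IsCompleteIntersectionLocal R) : ResidueFieldHasFiniteCIDim R := by
  obtain ⟨P⟩ := h
  letI := P.commRingQ
  letI := P.isLocalRingQ
  have hfl : Module.Flat R (AdicCompletion (maximalIdeal R) R) := inferInstance
  let D : QuasiDeformation R :=
    { R' := AdicCompletion (maximalIdeal R) R
      Q := P.Q
      f := algebraMap R _
      f_local := inferInstance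
      f_flat := flat_compHom R _
      g := P.g
      g_local := IsLocalHom.of_surjective _ P.g_surj
      g_surj := P.g_surj
      ker_regular := P.ker_regular }
  exact finite_of_regular D P.regular AdicCompletion.maximalIdeal_eq_map.symm

/-- If `k` has finite CI-dimension, generators of `m_R` have property `G`. -/
theorem G_of_finite {R : Type} [CommRing R] [IsNoetherianRing R] [IsLocalRing R]
    (h : ResidueFieldHasFiniteCIDim R) (x : List R)
    (hx : Ideal.span {a | a ∈ x} = maximalIdeal R) : G x.length x := by
  obtain ⟨D, n, m, h1, -⟩ := h
  letI : Algebra R D.R' := D.f.toAlgebra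
  letI : Algebra D.Q D.R' := D.g.toAlgebra
  letI : Module D.Q (D.R' ⊗[R] ResidueField R) := Module.compHom (D.R' ⊗[R] ResidueField R) D.g
  have hfl : Module.Flat R D.R' := D.f_flat
  have hl : IsLocalHom (algebraMap R D.R') := D.f_local
  have hgl : IsLocalHom (algebraMap D.Q D.R') := D.g_local
  obtain ⟨e⟩ := exists_equiv_idealJ (R := R) (R' := D.R') (Q := D.Q) (T := D.R' ⊗[R] ResidueField R)
    D.g_surj (AddEquiv.refl _) (fun q t => rfl)
  obtain ⟨s, hs, hr⟩ := D.ker_regular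
  exact G_of_quasi rfl hx D.g_surj hr.toIsWeaklyRegular hs.symm
    ⟨n + 1, (pdlt_of_hasProjDimLE h1).of_equiv e.symm⟩

/-- The structure theorem of Cohen presents the completion by a regular local ring, and property `G`
shows that the kernel is generated by a regular sequence. -/
theorem ci_of_finite {R : Type} [CommRing R] [IsNoetherianRing R] [IsLocalRing R]
    (h : ResidueFieldHasFiniteCIDim R) : IsCompleteIntersectionLocal R := by
  let B := AdicCompletion (maximalIdeal R) R
  have hmB : (maximalIdeal R).map (algebraMap R B) = maximalIdeal B :=
    AdicCompletion.maximalIdeal_eq_map.symm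
  have hfg : (maximalIdeal B).FG := by
    rw [← hmB]
    exact (maximalIdeal R).fg_of_isNoetherianRing.map _
  obtain ⟨n, S, _, ⟨hN, hL, f, hf, hd⟩, Φ, hΦ⟩ := exists_regular_surj hfg
  letI : Algebra S B := Φ.toAlgebra
  have hfl : Module.Flat R B := inferInstanceAs (Module.Flat R (AdicCompletion (maximalIdeal R) R))
  have hres : ∀ b : B, ∃ r : R, b - algebraMap R B r ∈ maximalIdeal B := by
    intro b
    obtain ⟨y, hy⟩ := (AdicCompletion.residueField_map_bijective R).2 (residue B b)
    obtain ⟨r, rfl⟩ := residue_surjective y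
    rw [IsLocalRing.ResidueField.map_residue] at hy
    exact ⟨r, Ideal.Quotient.eq.1 hy.symm⟩
  obtain ⟨s, hs, hr, hsm⟩ := exists_regular_of_G (R := R) (S := S) (B := B) hmB hres hΦ f hf hd
    (G_of_finite h)
  have hdim : ringKrullDim S ≤ n := by
    refine (ringKrullDim_le_spanFinrank_maximalIdeal S).trans ?_
    have h2 : (maximalIdeal S).spanFinrank ≤ n := by
      rw [← hf]
      refine (Submodule.spanFinrank_span_le_ncard_of_finite (Set.finite_range f)).trans ?_
      rw [← Nat.card_coe_set_eq]
      exact (Finite.card_range_le f).trans (by simp)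
    exact_mod_cast h2
  have hreg : RingTheory.Sequence.IsRegular S s :=
    (IsLocalRing.isRegular_iff_isWeaklyRegular_of_subset_maximalIdeal hsm).2 hr
  exact ⟨{
    Q := S
    regular := ⟨hN, n, f, hf, le_antisymm hdim hd⟩
    g := Φ
    g_surj := hΦ
    ker_regular := ⟨s, hs, hreg⟩ }⟩
end CIDim

/-- A Noetherian local ring `R` is a complete intersection if and only if its residue
field has finite CI-dimension over `R`. -/
theorem stmt11 (R : Type) [CommRing R] [IsNoetherianRing R] [IsLocalRing R] :
    IsCompleteIntersectionLocal R ↔ ResidueFieldHasFiniteCIDim R :=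
  ⟨CIDim.finite_of_ci, CIDim.ci_of_finite⟩
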